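/- For every integer j ≥ 0, the space S_{j,1}(Γ₂) of Siegel cusp forms of degree 2 and weight (j,1) on Γ₂ = Sp(4,ℤ) is zero. -/

import Mathlib

noncomputable section

open Matrix Complex Filter Topology

/-- The standard symplectic form matrix of size 4. -/
def J4 : Matrix (Fin 4) (Fin 4) ℤ := !![0,0,1,0; 0,0,0,1; -1,0,0,0; 0,-1,0,0]

/-- The Siegel modular group `Γ₂ = Sp(4,ℤ)`, as a set of 4×4 integer matrices. -/
def Sp4Z : Set (Matrix (Fin 4) (Fin 4) ℤ) := {γ | γᵀ * J4 * γ = J4}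

/-- The principal congruence subgroup `Γ₂[2]` of level 2. -/
def Sp4Z2 : Set (Matrix (Fin 4) (Fin 4) ℤ) :=
  {γ | γ ∈ Sp4Z ∧ ∀ i j, ((γ i j : ZMod 2) = if i = j then 1 else 0)}

/-- The Siegel upper half space of degree 2: symmetric 2×2 complex matrices with
positive definite imaginary part (encoded as functions `Fin 2 → Fin 2 → ℂ`). -/
def H2 : Set (Fin 2 → Fin 2 → ℂ) :=
  {τ | (Matrix.of τ).IsSymm ∧ (Matrix.of fun i j => (τ i j).im).PosDef}

/-- The four 2×2 blocks of a 4×4 integer matrix, as complex matrices. -/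
def blk (γ : Matrix (Fin 4) (Fin 4) ℤ) (r s : Fin 2) : Matrix (Fin 2) (Fin 2) ℂ :=
  Matrix.of fun i j =>
    ((γ ⟨2 * (r : ℕ) + (i : ℕ), by have h1 := r.isLt; have h2 := i.isLt; omega⟩
        ⟨2 * (s : ℕ) + (j : ℕ), by have h1 := s.isLt; have h2 := j.isLt; omega⟩ : ℤ) : ℂ)

/-- The factor `cτ + d`. -/
def den (γ : Matrix (Fin 4) (Fin 4) ℤ) (τ : Fin 2 → Fin 2 → ℂ) : Matrix (Fin 2) (Fin 2) ℂ :=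
  blk γ 1 0 * Matrix.of τ + blk γ 1 1

/-- The action `γ·τ = (aτ+b)(cτ+d)⁻¹` of `Sp(4)` on the Siegel upper half space. -/
def moeb (γ : Matrix (Fin 4) (Fin 4) ℤ) (τ : Fin 2 → Fin 2 → ℂ) : Fin 2 → Fin 2 → ℂ :=
  fun i j => ((blk γ 0 0 * Matrix.of τ + blk γ 0 1) * (den γ τ)⁻¹) i j

/-- Matrix coefficients of the `j`-th symmetric power of the standard representation of
`GL(2,ℂ)`, in the basis `x₁^(j-i) x₂^i`. -/
def symCoeff (j : ℕ) (m : Matrix (Fin 2) (Fin 2) ℂ) (l i : Fin (j + 1)) : ℂ :=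
  (((Polynomial.C (m 0 0) + Polynomial.C (m 1 0) * Polynomial.X) ^ (j - (l : ℕ)) *
    (Polynomial.C (m 0 1) + Polynomial.C (m 1 1) * Polynomial.X) ^ (l : ℕ)).coeff i)

/-- The `j`-th symmetric power `Sym^j(m)` acting on coordinate vectors. -/
def symAct (j : ℕ) (m : Matrix (Fin 2) (Fin 2) ℂ) (v : Fin (j + 1) → ℂ) : Fin (j + 1) → ℂ :=
  fun i => ∑ l, symCoeff j m l i * v l

lemma symAct_add (j : ℕ) (m : Matrix (Fin 2) (Fin 2) ℂ) (v w : Fin (j + 1) → ℂ) :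
    symAct j m (v + w) = symAct j m v + symAct j m w := by
  funext i
  simp [symAct, mul_add, Finset.sum_add_distrib]

lemma symAct_smul (j : ℕ) (m : Matrix (Fin 2) (Fin 2) ℂ) (a : ℂ) (v : Fin (j + 1) → ℂ) :
    symAct j m (a • v) = a • symAct j m v := by
  funext i
  simp only [symAct, Pi.smul_apply, smul_eq_mul, Finset.mul_sum]
  exact Finset.sum_congr rfl fun l _ => by ring

lemma symAct_zero (j : ℕ) (m : Matrix (Fin 2) (Fin 2) ℂ) : symAct j m 0 = 0 := by
  funext i; simp [symAct]

/-- The weight `(j,k)` automorphy action `Sym^j(m) ⊗ det(m)^k`. -/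
def wt (j : ℕ) (k : ℤ) (m : Matrix (Fin 2) (Fin 2) ℂ) (v : Fin (j + 1) → ℂ) :
    Fin (j + 1) → ℂ :=
  (m.det ^ k) • symAct j m v

lemma wt_add (j : ℕ) (k : ℤ) (m : Matrix (Fin 2) (Fin 2) ℂ) (v w : Fin (j + 1) → ℂ) :
    wt j k m (v + w) = wt j k m v + wt j k m w := by
  simp [wt, symAct_add, smul_add]

lemma wt_smul (j : ℕ) (k : ℤ) (m : Matrix (Fin 2) (Fin 2) ℂ) (a : ℂ) (v : Fin (j + 1) → ℂ) :
    wt j k m (a • v) = a • wt j k m v := by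
  rw [wt, wt, symAct_smul, smul_comm]

lemma wt_zero (j : ℕ) (k : ℤ) (m : Matrix (Fin 2) (Fin 2) ℂ) : wt j k m 0 = 0 := by
  simp [wt, symAct_zero]

/-- The slash operation `(F|γ)(τ) = Sym^j(cτ+d)⁻¹ det(cτ+d)⁻ᵏ F(γ·τ)`. -/
def slashS (j : ℕ) (k : ℤ) (γ : Matrix (Fin 4) (Fin 4) ℤ)
    (F : (Fin 2 → Fin 2 → ℂ) → (Fin (j + 1) → ℂ)) (τ : Fin 2 → Fin 2 → ℂ) :
    Fin (j + 1) → ℂ :=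
  ((den γ τ).det ^ (-k)) • symAct j ((den γ τ)⁻¹) (F (moeb γ τ))

lemma slashS_add (j : ℕ) (k : ℤ) (γ : Matrix (Fin 4) (Fin 4) ℤ)
    (F G : (Fin 2 → Fin 2 → ℂ) → (Fin (j + 1) → ℂ)) (τ : Fin 2 → Fin 2 → ℂ) :
    slashS j k γ (F + G) τ = slashS j k γ F τ + slashS j k γ G τ := by
  simp [slashS, symAct_add, smul_add]

lemma slashS_smul (j : ℕ) (k : ℤ) (γ : Matrix (Fin 4) (Fin 4) ℤ) (a : ℂ)
    (F : (Fin 2 → Fin 2 → ℂ) → (Fin (j + 1) → ℂ)) (τ : Fin 2 → Fin 2 → ℂ) :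
    slashS j k γ (a • F) τ = a • slashS j k γ F τ := by
  simp only [slashS, Pi.smul_apply, symAct_smul]
  rw [smul_comm]

lemma slashS_zero (j : ℕ) (k : ℤ) (γ : Matrix (Fin 4) (Fin 4) ℤ) (τ : Fin 2 → Fin 2 → ℂ) :
    slashS j k γ (0 : (Fin 2 → Fin 2 → ℂ) → (Fin (j + 1) → ℂ)) τ = 0 := by
  simp [slashS, symAct_zero]

/-- The diagonal point `diag(τ₁,τ₂)` of the Siegel upper half space. -/
def diagH (τ₁ τ₂ : ℂ) : Fin 2 → Fin 2 → ℂ :=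
  fun i j => if i = j then (if i = 0 then τ₁ else τ₂) else 0

/-- `F` is a Siegel cusp form of degree 2 and weight `(j,k)` on `Γ`, with character `χ`:
holomorphic on `ℍ₂`, transforming by `F(γ·τ) = χ(γ) Sym^j(cτ+d) det(cτ+d)^k F(τ)` for `γ ∈ Γ`,
with `(F|γ)(diag(τ₁,it)) → 0` as `t → ∞` for every `γ ∈ Γ₂`, and (normalization) vanishing
off `ℍ₂`. -/
def IsSiegelCuspForm (j : ℕ) (k : ℤ) (Γ : Set (Matrix (Fin 4) (Fin 4) ℤ))
    (χ : Matrix (Fin 4) (Fin 4) ℤ → ℂ)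
    (F : (Fin 2 → Fin 2 → ℂ) → (Fin (j + 1) → ℂ)) : Prop :=
  DifferentiableOn ℂ F H2 ∧
  (∀ γ ∈ Γ, ∀ τ ∈ H2, F (moeb γ τ) = χ γ • wt j k (den γ τ) (F τ)) ∧
  (∀ γ ∈ Sp4Z, ∀ τ₁ : ℂ, 0 < τ₁.im →
    Tendsto (fun t : ℝ => slashS j k γ F (diagH τ₁ (t * Complex.I))) atTop (𝓝 0)) ∧
  (∀ τ, τ ∉ H2 → F τ = 0)

/-- The space `S_{j,k}(Γ, χ)` of Siegel cusp forms of degree 2 and weight `(j,k)` on `Γ`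
with character `χ`, as a complex vector space. -/
def SiegelCusp (j : ℕ) (k : ℤ) (Γ : Set (Matrix (Fin 4) (Fin 4) ℤ))
    (χ : Matrix (Fin 4) (Fin 4) ℤ → ℂ) :
    Submodule ℂ ((Fin 2 → Fin 2 → ℂ) → (Fin (j + 1) → ℂ)) where
  carrier := {F | IsSiegelCuspForm j k Γ χ F}
  add_mem' := by
    rintro F G hF hG
    refine ⟨hF.1.add hG.1, ?_, ?_, ?_⟩
    · intro γ hγ τ hτ
      show F (moeb γ τ) + G (moeb γ τ) = χ γ • wt j k (den γ τ) (F τ + G τ)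
      rw [wt_add, smul_add, hF.2.1 γ hγ τ hτ, hG.2.1 γ hγ τ hτ]
    · intro γ hγ τ₁ hτ
      have h := (hF.2.2.1 γ hγ τ₁ hτ).add (hG.2.2.1 γ hγ τ₁ hτ)
      rw [add_zero] at h
      exact h.congr fun t => (slashS_add j k γ F G _).symm
    · intro τ hτ
      show F τ + G τ = 0
      rw [hF.2.2.2 τ hτ, hG.2.2.2 τ hτ, add_zero]
  zero_mem' := by
    refine ⟨?_, ?_, ?_, ?_⟩
    · exact differentiableOn_const 0
    · intro γ hγ τ hτ
      show (0 : Fin (j + 1) → ℂ) = χ γ • wt j k (den γ τ) 0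
      rw [wt_zero, smul_zero]
    · intro γ hγ τ₁ hτ
      have : (fun t : ℝ => slashS j k γ (0 : (Fin 2 → Fin 2 → ℂ) → (Fin (j + 1) → ℂ))
          (diagH τ₁ (t * Complex.I))) = fun _ => 0 := by
        funext t; exact slashS_zero j k γ _
      rw [this]
      exact tendsto_const_nhds
    · intro τ _; rfl
  smul_mem' := by
    rintro a F hF
    refine ⟨hF.1.const_smul a, ?_, ?_, ?_⟩
    · intro γ hγ τ hτ
      show a • F (moeb γ τ) = χ γ • wt j k (den γ τ) (a • F τ)
      rw [hF.2.1 γ hγ τ hτ, wt_smul, smul_comm]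
    · intro γ hγ τ₁ hτ
      have h := (hF.2.2.1 γ hγ τ₁ hτ).const_smul a
      rw [smul_zero] at h
      exact h.congr fun t => (slashS_smul j k γ a F _).symm
    · intro τ hτ
      show a • F τ = 0
      rw [hF.2.2.2 τ hτ, smul_zero]

/-- `ε` is (on `Γ₂`) the unique nontrivial homomorphism `Γ₂ → {±1}`. -/
def IsEps (ε : Matrix (Fin 4) (Fin 4) ℤ → ℂ) : Prop :=
  (∀ γ ∈ Sp4Z, ε γ = 1 ∨ ε γ = -1) ∧
  (∀ γ ∈ Sp4Z, ∀ δ ∈ Sp4Z, ε (γ * δ) = ε γ * ε δ) ∧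
  (∃ γ ∈ Sp4Z, ε γ ≠ 1)

section
lemma aeval_intertwine {V W : Type*} [AddCommGroup V] [AddCommGroup W]
    (A : V →ₗ[ℤ] V) (B : W →ₗ[ℤ] W) (f : V →ₗ[ℤ] W) (h : ∀ v, f (A v) = B (f v))
    (P : Polynomial ℤ) (v : V) : f (Polynomial.aeval A P v) = Polynomial.aeval B P (f v) := by
  have hp : ∀ n : ℕ, ∀ v, f ((A ^ n) v) = (B ^ n) (f v) := by
    intro n
    induction n with
    | zero => intro v; simp
    | succ n ih => intro v; rw [pow_succ, pow_succ]; simp [ih, h]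
  induction P using Polynomial.induction_on' with
  | add p q hp hq => simp [hp, hq]
  | monomial n a => simp [Polynomial.aeval_monomial, hp]

/-- the tridiagonal operator on sequences -/
def triOp (p : ℤ) (G : Type*) [AddCommGroup G] : (ℕ → G) →ₗ[ℤ] (ℕ → G) where
  toFun x k := p • x (k + 1) + (if k = 0 then 0 else x (k - 1))
  map_add' x y := by
    funext k; by_cases h : k = 0 <;> simp [h] <;> abel
  map_smul' a x := by
    funext k; by_cases h : k = 0 <;> simp [h, smul_comm a p]

lemma aeval_X_coe (p : ℕ) (P : Polynomial ℤ) :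
    Polynomial.aeval (PowerSeries.X : PowerSeries (ZMod p)) P =
      ((P.map (Int.castRingHom (ZMod p)) : Polynomial (ZMod p)) : PowerSeries (ZMod p)) := by
  induction P using Polynomial.induction_on' with
  | add p q hp hq => simp [hp, hq]
  | monomial n a =>
    rw [Polynomial.aeval_monomial, Polynomial.map_monomial, ← Polynomial.C_mul_X_pow_eq_monomial]
    simp
    congr 1
    exact (map_intCast (Polynomial.coeToPowerSeries.ringHom (R := ZMod p)) a).symm

lemma triOp_int_zero (p : ℕ) [Fact p.Prime] (P : Polynomial ℤ) (hP : P.Monic) (x : ℕ → ℤ)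
    (hx : Polynomial.aeval (triOp p ℤ) P x = 0) : x = 0 := by
  have key : ∀ x : ℕ → ℤ, Polynomial.aeval (triOp p ℤ) P x = 0 → ∀ k, (p : ℤ) ∣ x k := by
    intro x hx k
    let φ : (ℕ → ℤ) →ₗ[ℤ] PowerSeries (ZMod p) :=
      AddMonoidHom.toIntLinearMap
      { toFun := fun x => PowerSeries.mk fun k => (x k : ZMod p)
        map_zero' := by ext k; simp
        map_add' := by intro x y; ext k; simp }
    let B : PowerSeries (ZMod p) →ₗ[ℤ] PowerSeries (ZMod p) :=
      LinearMap.mulLeft ℤ (PowerSeries.X : PowerSeries (ZMod p))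
    have h1 : ∀ v, φ (triOp p ℤ v) = B (φ v) := by
      intro v
      ext k
      rcases k with _ | k
      · simp [φ, B, triOp]
      · simp [φ, B, triOp, PowerSeries.coeff_succ_X_mul]
    have h2 := aeval_intertwine _ _ φ h1 P x
    rw [hx, map_zero] at h2
    have h3 : Polynomial.aeval B P = LinearMap.mulLeft ℤ
        ((Polynomial.aeval (PowerSeries.X : PowerSeries (ZMod p)) P)) := by
      have := Polynomial.aeval_algHom_apply (Algebra.lmul ℤ (PowerSeries (ZMod p)))
        (PowerSeries.X : PowerSeries (ZMod p)) P
      exact this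
    rw [h3, LinearMap.mulLeft_apply] at h2
    have h4 : Polynomial.aeval (PowerSeries.X : PowerSeries (ZMod p)) P ≠ 0 := by
      have : Polynomial.aeval (PowerSeries.X : PowerSeries (ZMod p)) P =
          ((P.map (Int.castRingHom (ZMod p)) : Polynomial (ZMod p)) : PowerSeries (ZMod p)) := by
        exact aeval_X_coe p P
      rw [this]
      have h5 := (hP.map (Int.castRingHom (ZMod p))).ne_zero
      exact_mod_cast h5
    have h6 : φ x = 0 := by
      rcases mul_eq_zero.mp h2.symm with h | h
      · exact absurd h h4
      · exact h
    have h7 := congrArg (PowerSeries.coeff k) h6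
    simp [φ] at h7
    exact (ZMod.intCast_zmod_eq_zero_iff_dvd _ _).mp h7
  have key2 : ∀ n : ℕ, ∀ x : ℕ → ℤ, Polynomial.aeval (triOp p ℤ) P x = 0 → ∀ k, (p : ℤ) ^ n ∣ x k := by
    intro n
    induction n with
    | zero => intro x _ k; simp
    | succ n ih =>
      intro x hx k
      choose y hy using key x hx
      have hxy : x = (p : ℤ) • y := by funext k; simp [hy]
      have : Polynomial.aeval (triOp p ℤ) P y = 0 := by
        rw [hxy, map_smul] at hx
        exact (smul_eq_zero.mp hx).resolve_left (by exact_mod_cast (Fact.out : p.Prime).ne_zero)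
      obtain ⟨z, hz⟩ := ih y this k
      exact ⟨z, by rw [hy, hz]; ring⟩
  funext k
  by_contra hne
  have h1 := key2 (x k).natAbs x hx k
  have h2 := Int.natAbs_dvd_natAbs.mpr h1
  have h3 := Nat.le_of_dvd (Int.natAbs_pos.mpr hne) h2
  rw [Int.natAbs_pow, Int.natAbs_natCast] at h3
  exact absurd h3 (not_le.mpr (Nat.lt_pow_self (Fact.out : p.Prime).one_lt))

lemma triOp_zero (p : ℕ) [Fact p.Prime] (P : Polynomial ℤ) (hP : P.Monic) {G : Type*}
    [AddCommGroup G] [Module.Finite ℤ G] [Module.Free ℤ G] (x : ℕ → G)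
    (hx : Polynomial.aeval (triOp p G) P x = 0) : x = 0 := by
  let b := Module.Free.chooseBasis ℤ G
  funext k
  apply b.ext_elem
  intro i
  let f : (ℕ → G) →ₗ[ℤ] (ℕ → ℤ) :=
    { toFun := fun x k => b.repr (x k) i
      map_add' := by intro x y; funext k; simp
      map_smul' := by intro a x; funext k; simp }
  have h1 : ∀ v, f (triOp p G v) = triOp p ℤ (f v) := by
    intro v; funext k
    by_cases h : k = 0 <;> simp [f, triOp, h]
  have h2 := aeval_intertwine _ _ f h1 P x
  rw [hx, map_zero] at h2
  have h3 := triOp_int_zero p P hP _ h2.symm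
  simpa [f] using congrFun h3 k
end

section
def ee (x : ℂ) : ℂ := Complex.exp (2 * Real.pi * I * x)

lemma ee_add (x y : ℂ) : ee (x + y) = ee x * ee y := by
  rw [ee, mul_add, Complex.exp_add]; rfl
lemma ee_zero : ee 0 = 1 := by simp [ee]
lemma ee_ne (x : ℂ) : ee x ≠ 0 := Complex.exp_ne_zero _
lemma ee_int (n : ℤ) : ee n = 1 := by
  rw [ee, Complex.exp_eq_one_iff]; exact ⟨n, by ring⟩
lemma ee_nmul (n : ℕ) (x : ℂ) : ee (n * x) = ee x ^ n := by
  rw [ee, ee, ← Complex.exp_nat_mul]; congr 1; ring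
lemma ee_norm (x : ℂ) : ‖ee x‖ = Real.exp (-(2 * Real.pi * x.im)) := by
  rw [ee, Complex.norm_exp]; congr 1; simp

def tm (c : ℤ → ℤ → ℂ) (τ z : ℂ) (t : ℤ × ℤ) : ℂ := c t.1 t.2 * ee (t.1 * τ + t.2 * z)
def phi (c : ℤ → ℤ → ℂ) (τ z : ℂ) : ℂ := ∑' t, tm c τ z t

structure IsX (m : ℤ) (c : ℤ → ℤ → ℂ) : Prop where
  supp : ∀ n r, c n r ≠ 0 → r ^ 2 < 4 * n * m
  summ : ∀ τ z : ℂ, 0 < τ.im → Summable (tm c τ z)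
  shift : ∀ n r, c (n + r + m) (r + 2 * m) = c n r
  inv : ∀ τ z : ℂ, 0 < τ.im → phi c (-1 / τ) (z / τ) = τ * ee (m * z ^ 2 / τ) * phi c τ z

lemma IsX.shiftN {m : ℤ} {c} (h : IsX m c) (l n r : ℤ) :
    c (n + r * l + m * l ^ 2) (r + 2 * m * l) = c n r := by
  induction l using Int.induction_on with
  | zero => simp
  | succ i ih =>
    rw [← ih, ← h.shift (n + r * i + m * (i : ℤ) ^ 2)]; congr 1 <;> ring
  | pred i ih =>
    rw [← ih, ← h.shift (n + r * (-i - 1) + m * (-(i : ℤ) - 1) ^ 2)]; congr 1 <;> ring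

lemma IsX.hasSum {m : ℤ} {c} (h : IsX m c) (τ z : ℂ) (hτ : 0 < τ.im) :
    HasSum (tm c τ z) (phi c τ z) := (h.summ τ z hτ).hasSum

lemma phi_add_int (c : ℤ → ℤ → ℂ) (τ z : ℂ) (a b : ℤ) : phi c (τ + a) (z + b) = phi c τ z := by
  unfold phi; congr 1; funext t; unfold tm
  rw [show (t.1 : ℂ) * (τ + a) + t.2 * (z + b) = (t.1 * τ + t.2 * z) + ((t.1 * a + t.2 * b : ℤ) : ℂ)
    by push_cast; ring, ee_add, ee_int, mul_one]

lemma IsX.phi_lat {m : ℤ} {c} (h : IsX m c) (τ z : ℂ) (l : ℤ) :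
    phi c τ (z + l * τ) = ee (-(m * (l ^ 2 * τ + 2 * l * z))) * phi c τ z := by
  unfold phi
  let e : ℤ × ℤ ≃ ℤ × ℤ :=
    { toFun := fun t => (t.1 + t.2 * l + m * l ^ 2, t.2 + 2 * m * l)
      invFun := fun t => (t.1 - t.2 * l + m * l ^ 2, t.2 - 2 * m * l)
      left_inv := fun t => by ext <;> (simp; try ring)
      right_inv := fun t => by ext <;> (simp; try ring) }
  rw [← tsum_mul_left, ← e.tsum_eq (fun t => ee (-(m * (l ^ 2 * τ + 2 * l * z))) * tm c τ z t)]
  congr 1; funext t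
  simp only [tm, e, Equiv.coe_fn_mk]
  rw [h.shiftN, mul_left_comm, ← ee_add]
  congr 2; push_cast; ring

def Tr (m : ℤ) (f : ℂ → ℂ → ℂ) (a b c d : ℤ) : Prop :=
  ∀ τ z : ℂ, 0 < τ.im → f ((a * τ + b) / (c * τ + d)) (z / (c * τ + d)) =
    (c * τ + d) * ee (m * c * z ^ 2 / (c * τ + d)) * f τ z

lemma den_ne {a b c d : ℤ} (h : a * d - b * c = 1) {τ : ℂ} (hτ : 0 < τ.im) :
    (c * τ + d : ℂ) ≠ 0 := by
  intro h0
  have h1 := congrArg Complex.im h0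
  simp at h1
  rcases h1 with h1 | h1
  · subst h1
    simp at h0
    subst h0
    simp at h
  · exact hτ.ne' h1

lemma mob_im {a b c d : ℤ} (h : a * d - b * c = 1) {τ : ℂ} (hτ : 0 < τ.im) :
    0 < ((a * τ + b) / (c * τ + d) : ℂ).im := by
  have h0 := den_ne h hτ
  rw [Complex.div_im]
  have h2 : 0 < Complex.normSq (c * τ + d) := Complex.normSq_pos.mpr h0
  rw [← sub_div]
  apply div_pos _ h2
  simp
  have h3 : (a * d - b * c : ℝ) = 1 := by exact_mod_cast h
  nlinarith

lemma Tr_mul {m : ℤ} {f : ℂ → ℂ → ℂ} {a b c d a' b' c' d' : ℤ} (h : a * d - b * c = 1)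
    (h' : a' * d' - b' * c' = 1) (H : Tr m f a b c d) (H' : Tr m f a' b' c' d') :
    Tr m f (a * a' + b * c') (a * b' + b * d') (c * a' + d * c') (c * b' + d * d') := by
  intro τ z hτ
  have n1 := den_ne h' hτ
  have i1 := mob_im h' hτ
  have n2 := den_ne h i1
  have n3 : ((c * a' + d * c' : ℤ) : ℂ) * τ + ((c * b' + d * d' : ℤ) : ℂ) ≠ 0 :=
    den_ne (a := a * a' + b * c') (b := a * b' + b * d') (by linear_combination (a' * d' - b' * c') * h + h') hτ
  have e1 := H ((a' * τ + b') / (c' * τ + d')) (z / (c' * τ + d')) i1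
  rw [H' τ z hτ] at e1
  have hd : ((a' * d' - b' * c' : ℤ) : ℂ) = 1 := by rw [h']; simp
  set D := ((c * a' + d * c' : ℤ) : ℂ) * τ + ((c * b' + d * d' : ℤ) : ℂ) with hD
  set E := (c' * τ + d' : ℂ) with hE
  have n4 : (c * ((a' * τ + b') / E) + d : ℂ) = D / E := by
    field_simp; rw [hD, hE]; push_cast; ring
  rw [n4] at e1
  rw [show (a * ((a' * τ + b') / E) + b : ℂ) / (D / E) =
    (((a * a' + b * c' : ℤ) : ℂ) * τ + ((a * b' + b * d' : ℤ) : ℂ)) / D by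
      field_simp; rw [hE]; push_cast; ring, show z / E / (D / E) = z / D by
      field_simp] at e1
  rw [e1, show m * ((c * a' + d * c' : ℤ) : ℂ) * z ^ 2 / D =
    m * c * (z / E) ^ 2 / (D / E) + m * c' * z ^ 2 / E by
      field_simp
      rw [hD, hE]; push_cast at hd ⊢
      linear_combination (m * z ^ 2 * (c : ℂ)) * hd, ee_add]
  field_simp

lemma Tr_inv {m : ℤ} {f : ℂ → ℂ → ℂ} {a b c d : ℤ} (h : a * d - b * c = 1)
    (H : Tr m f a b c d) : Tr m f d (-b) (-c) a := by
  intro τ z hτ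
  have h' : d * a - (-b) * (-c) = 1 := by linarith
  have n1 := den_ne h' hτ
  have i1 := mob_im h' hτ
  have e1 := H _ (z / ((-c : ℤ) * τ + a)) i1
  have hd : ((a * d - b * c : ℤ) : ℂ) = 1 := by rw [h]; simp
  push_cast at hd
  set D := ((-c : ℤ) * τ + a : ℂ) with hD
  have n4 : (c * ((d * τ + (-b : ℤ)) / D) + d : ℂ) = 1 / D := by
    field_simp; rw [hD]; push_cast; linear_combination hd
  rw [n4] at e1
  rw [show (a * ((d * τ + (-b : ℤ)) / D) + b : ℂ) / (1 / D) = τ by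
    field_simp; rw [hD]; push_cast; linear_combination τ * hd,
    show z / D / (1 / D) = z by field_simp] at e1
  rw [e1]
  have : ee (m * (-c : ℤ) * z ^ 2 / D) * ee (m * c * (z / D) ^ 2 / (1 / D)) = 1 := by
    rw [← ee_add]; convert ee_zero using 2; field_simp; push_cast; ring
  calc _ = (D * (1 / D)) * 1 * f ((d * τ + (-b : ℤ)) / D) (z / D) := by field_simp
    _ = _ := by linear_combination (-(D * (1 / D) * f ((d * τ + (-b : ℤ)) / D) (z / D))) * this

lemma IsX.tr {m : ℤ} {c} (h : IsX m c) (γ : SpecialLinearGroup (Fin 2) ℤ) :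
    Tr m (phi c) (γ 0 0) (γ 0 1) (γ 1 0) (γ 1 1) := by
  have hdet : ∀ γ : SpecialLinearGroup (Fin 2) ℤ, γ 0 0 * γ 1 1 - γ 0 1 * γ 1 0 = 1 := by
    intro γ; have := γ.det_coe; rwa [Matrix.det_fin_two] at this
  have hm : γ ∈ Subgroup.closure {ModularGroup.S, ModularGroup.T} := by
    rw [SpecialLinearGroup.SL2Z_generators]; trivial
  induction hm using Subgroup.closure_induction with
  | mem x hx =>
    rcases hx with rfl | rfl
    · intro τ z hτ
      have := h.inv τ z hτ
      simpa [ModularGroup.S] using this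
    · intro τ z hτ
      have := phi_add_int c τ z 1 0
      simpa [ModularGroup.T, ee_zero] using this
  | one => intro τ z hτ; simp [ee_zero]
  | mul x y _ _ hx hy =>
    have := Tr_mul (hdet x) (hdet y) hx hy
    simpa [Matrix.mul_apply, Fin.sum_univ_two] using this
  | inv x _ hx =>
    have := Tr_inv (hdet x) hx
    simpa [SpecialLinearGroup.coe_inv, Matrix.adjugate_fin_two] using this

lemma IsX.tr' {m : ℤ} {c} (h : IsX m c) {a b c' d : ℤ} (hd : a * d - b * c' = 1) :
    Tr m (phi c) a b c' d := by
  have := h.tr ⟨!![a, b; c', d], by rw [Matrix.det_fin_two]; simpa using hd⟩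
  simpa using this
end

section
/-- coefficients of φ(τ, pz) -/
def Uop (p : ℕ) (c : ℤ → ℤ → ℂ) (n r : ℤ) : ℂ := if (p : ℤ) ∣ r then c n (r / p) else 0

lemma IsX.U {m : ℤ} {c} (h : IsX m c) (p : ℕ) (hp : 0 < p) : IsX (p ^ 2 * m) (Uop p c) := by
  have hp0 : (p : ℤ) ≠ 0 := by exact_mod_cast hp.ne'
  have hi : Function.Injective (fun t : ℤ × ℤ => (t.1, (p : ℤ) * t.2)) := by
    intro a b hab
    simp only [Prod.mk.injEq, mul_right_inj' hp0] at hab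
    exact Prod.ext hab.1 hab.2
  have hs : ∀ τ z : ℂ, 0 < τ.im → HasSum (tm (Uop p c) τ z) (phi c τ (p * z)) := by
    intro τ z hτ
    rw [← hi.hasSum_iff]
    · convert h.hasSum τ (p * z) hτ using 1
      funext t
      simp only [tm, Function.comp, Uop, dvd_mul_right, if_true, Int.mul_ediv_cancel_left _ hp0]
      push_cast
      congr 2
      ring
    · intro t ht
      have : ¬ (p : ℤ) ∣ t.2 := by
        rintro ⟨k, hk⟩
        exact ht ⟨(t.1, k), by ext <;> simp [hk]⟩
      simp [tm, Uop, this]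
  have hphi : ∀ τ z : ℂ, 0 < τ.im → phi (Uop p c) τ z = phi c τ (p * z) :=
    fun τ z hτ => (hs τ z hτ).tsum_eq
  refine ⟨?_, fun τ z hτ => (hs τ z hτ).summable, ?_, ?_⟩
  · intro n r hc
    unfold Uop at hc
    split_ifs at hc with hd
    · obtain ⟨k, rfl⟩ := hd
      rw [Int.mul_ediv_cancel_left _ hp0] at hc
      have := h.supp _ _ hc
      have hp2 : (0 : ℤ) < (p : ℤ) ^ 2 := by positivity
      nlinarith [mul_lt_mul_of_pos_left this hp2]
    · exact absurd rfl hc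
  · intro n r
    unfold Uop
    have e : ((p : ℤ) ∣ r + 2 * (p ^ 2 * m)) ↔ (p : ℤ) ∣ r := by
      rw [Int.dvd_add_left]; exact ⟨2 * p * m, by ring⟩
    simp only [e]
    split_ifs with hd
    · obtain ⟨k, rfl⟩ := hd
      rw [show (p : ℤ) * k + 2 * (p ^ 2 * m) = p * (k + 2 * m * p) by ring,
        Int.mul_ediv_cancel_left _ hp0, Int.mul_ediv_cancel_left _ hp0, ← h.shiftN p n k]
      congr 1; ring
    · rfl
  · intro τ z hτ
    have h1 : 0 < (-1 / τ : ℂ).im := by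
      have := mob_im (a := 0) (b := -1) (c := 1) (d := 0) (by norm_num) hτ
      simpa using this
    rw [hphi _ _ h1, hphi _ _ hτ, ← mul_div_assoc, h.inv _ _ hτ]
    push_cast; congr 3; ring

def nl (m n r l : ℤ) : ℤ := n + r * l + m * l ^ 2
def rl (m r l : ℤ) : ℤ := r + 2 * m * l

def wterm (p : ℕ) (m : ℤ) (c : ℤ → ℤ → ℂ) (n r l : ℤ) : ℂ :=
  if (p : ℤ) ∣ nl m n r l then c (nl m n r l / p) (rl m r l) else 0

/-- X_{pm} → X_m -/
def Wop (p : ℕ) [NeZero p] (m : ℤ) (c : ℤ → ℤ → ℂ) (n r : ℤ) : ℂ :=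
  p * c (p * n) (p * r) + ∑ l : ZMod p, wterm p m c n r l.val

lemma per_eq {p : ℕ} (g : ℤ → ℂ) (hg : ∀ a, g (a + p) = g a) {a b : ℤ}
    (hab : (a : ZMod p) = b) : g a = g b := by
  rw [ZMod.intCast_eq_intCast_iff_dvd_sub] at hab
  obtain ⟨k, hk⟩ := hab
  have : ∀ k : ℤ, ∀ a, g (a + p * k) = g a := by
    intro k
    induction k using Int.induction_on with
    | zero => simp
    | succ i ih => intro a; rw [← ih a, ← hg (a + p * i)]; congr 1; ring
    | pred i ih => intro a; rw [← ih a, ← hg (a + p * (-i - 1))]; congr 1; ring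
  rw [show b = a + p * k by linarith, this]

lemma per_val {p : ℕ} [NeZero p] (g : ℤ → ℂ) (hg : ∀ a, g (a + p) = g a) (x : ZMod p) (a : ℤ)
    (h : (a : ZMod p) = x) : g (x.val : ℤ) = g a := by
  apply per_eq g hg
  rw [h]; simp

lemma wterm_per {p : ℕ} [NeZero p] {m : ℤ} {c} (h : IsX (p * m) c) (n r l : ℤ) :
    wterm p m c n r (l + p) = wterm p m c n r l := by
  have hp0 : (p : ℤ) ≠ 0 := by exact_mod_cast NeZero.ne p
  unfold wterm
  have e1 : nl m n r (l + p) = nl m n r l + p * (rl m r l + p * m) := by unfold nl rl; ring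
  have e : (p : ℤ) ∣ nl m n r (l + p) ↔ (p : ℤ) ∣ nl m n r l := by
    rw [e1, Int.dvd_add_left (dvd_mul_right _ _)]
  simp only [e]
  split_ifs with hd
  · rw [e1]
    obtain ⟨k, hk⟩ := hd
    rw [hk, ← mul_add, Int.mul_ediv_cancel_left _ hp0, Int.mul_ediv_cancel_left _ hp0,
      ← h.shift k]
    congr 1
    · ring
    · unfold rl; ring
  · rfl

lemma geom_char (p : ℕ) [NeZero p] (n : ℤ) :
    ∑ b : ZMod p, ee (n * (b.val : ℤ) / p) = if (p : ℤ) ∣ n then (p : ℂ) else 0 := by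
  have hp0 : (p : ℂ) ≠ 0 := by exact_mod_cast NeZero.ne p
  have hper : ∀ a : ℤ, ee (n * ((a + p : ℤ) : ℂ) / p) = ee (n * a / p) := by
    intro a
    rw [show n * ((a + p : ℤ) : ℂ) / p = n * a / p + n by push_cast; field_simp, ee_add, ee_int,
      mul_one]
  split_ifs with hd
  · obtain ⟨k, rfl⟩ := hd
    have : ∀ b : ZMod p, ee (((p * k : ℤ) : ℂ) * (b.val : ℤ) / p) = 1 := by
      intro b
      rw [← ee_int (k * b.val)]; congr 1; push_cast; field_simp
    simp only [this]
    simp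
  · set S := ∑ b : ZMod p, ee (n * (b.val : ℤ) / p) with hS
    have h1 : S = ee (n / p) * S := by
      conv_lhs => rw [hS, ← Equiv.sum_comp (Equiv.addRight (1 : ZMod p))]
      rw [hS, Finset.mul_sum]
      refine Finset.sum_congr rfl fun b _ => ?_
      rw [per_val (fun a => ee (n * a / p)) hper _ ((b.val : ℤ) + 1) (by simp), ← ee_add]
      congr 1; push_cast; ring
    have h2 : ee (n / p) ≠ 1 := by
      intro h
      rw [ee, Complex.exp_eq_one_iff] at h
      obtain ⟨k, hk⟩ := h
      have : (n : ℂ) = p * k := by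
        have hpi : (2 * Real.pi * I : ℂ) ≠ 0 := by simp [Real.pi_ne_zero]
        have := mul_left_cancel₀ hpi (hk.trans (mul_comm _ _))
        rw [← this]; field_simp
      exact hd ⟨k, by exact_mod_cast this⟩
    have : (1 - ee (n / p)) * S = 0 := by linear_combination h1
    rcases mul_eq_zero.mp this with h | h
    · exact absurd (by linear_combination -h) h2
    · exact h

section W
variable {p : ℕ} [NeZero p] {m : ℤ} {c : ℤ → ℤ → ℂ}

def Qf (p : ℕ) (c : ℤ → ℤ → ℂ) (τ z : ℂ) (b u : ℤ) : ℂ := phi c ((τ + b) / p) ((z + u) / p)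
def Pf (p : ℕ) (m : ℤ) (c : ℤ → ℤ → ℂ) (τ z : ℂ) (l : ℤ) : ℂ :=
  phi c (p * τ) (z - l * τ) * ee (m * (l ^ 2 * τ - 2 * l * z))

lemma im_div (hτ : 0 < (τ : ℂ).im) (b : ℤ) : 0 < ((τ + b) / p : ℂ).im := by
  have : (0 : ℝ) < p := by exact_mod_cast Nat.pos_of_ne_zero (NeZero.ne p)
  have e : ((τ + b) / p : ℂ).im = τ.im / p := by
    rw [Complex.div_natCast_im]; simp
  rw [e]; positivity

lemma im_mul (hτ : 0 < (τ : ℂ).im) : 0 < (p * τ : ℂ).im := by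
  have : (0 : ℝ) < p := by exact_mod_cast Nat.pos_of_ne_zero (NeZero.ne p)
  simp; positivity

lemma W_hasSum (h : IsX (p * m) c) (τ z : ℂ) (hτ : 0 < τ.im) :
    HasSum (tm (Wop p m c) τ z) ((1 / p) * ∑ b : ZMod p, ∑ u : ZMod p, Qf p c τ z b.val u.val +
      ∑ l : ZMod p, Pf p m c τ z l.val) := by
  have hp0 : (p : ℤ) ≠ 0 := by exact_mod_cast NeZero.ne p
  have hpc : (p : ℂ) ≠ 0 := by exact_mod_cast NeZero.ne p
  have hQ : HasSum (fun t : ℤ × ℤ => p * c (p * t.1) (p * t.2) * ee (t.1 * τ + t.2 * z))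
      ((1 / p) * ∑ b : ZMod p, ∑ u : ZMod p, Qf p c τ z b.val u.val) := by
    have hi : Function.Injective (fun t : ℤ × ℤ => ((p : ℤ) * t.1, (p : ℤ) * t.2)) := by
      intro a b hab
      simp only [Prod.mk.injEq, mul_right_inj' hp0] at hab
      exact Prod.ext hab.1 hab.2
    have h1 : HasSum (fun t => (1 / p : ℂ) * ∑ b : ZMod p, ∑ u : ZMod p,
        tm c ((τ + (b.val : ℤ)) / p) ((z + (u.val : ℤ)) / p) t)
        ((1 / p) * ∑ b : ZMod p, ∑ u : ZMod p, Qf p c τ z b.val u.val) := by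
      refine HasSum.mul_left _ (hasSum_sum fun b _ => hasSum_sum fun u _ => ?_)
      exact h.hasSum _ _ (im_div hτ _)
    have h2 : ∀ t : ℤ × ℤ, (1 / p : ℂ) * ∑ b : ZMod p, ∑ u : ZMod p,
        tm c ((τ + (b.val : ℤ)) / p) ((z + (u.val : ℤ)) / p) t =
        (1 / p) * (c t.1 t.2 * ee ((t.1 * τ + t.2 * z) / p)) *
          ((if (p : ℤ) ∣ t.1 then (p : ℂ) else 0) * (if (p : ℤ) ∣ t.2 then (p : ℂ) else 0)) := by
      intro t
      rw [← geom_char, ← geom_char, Finset.sum_mul_sum, mul_assoc]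
      congr 1
      rw [Finset.mul_sum]
      refine Finset.sum_congr rfl fun b _ => ?_
      rw [Finset.mul_sum]
      refine Finset.sum_congr rfl fun u _ => ?_
      rw [tm, mul_assoc, ← ee_add, ← ee_add]
      congr 2; field_simp; ring
    simp only [h2] at h1
    rw [← hi.hasSum_iff] at h1
    · convert h1 using 1
      funext t
      simp only [Function.comp, dvd_mul_right, if_true]
      push_cast
      rw [show ((p : ℂ) * t.1 * τ + p * t.2 * z) / p = t.1 * τ + t.2 * z by field_simp]
      field_simp
    · intro t ht
      have : ¬ ((p : ℤ) ∣ t.1 ∧ (p : ℤ) ∣ t.2) := by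
        rintro ⟨⟨k, hk⟩, ⟨l, hl⟩⟩
        exact ht ⟨(k, l), by ext <;> simp [hk, hl]⟩
      rcases not_and_or.mp this with h | h <;> simp [h]
  have hP : ∀ l : ℤ, HasSum (fun t : ℤ × ℤ => wterm p m c t.1 t.2 l * ee (t.1 * τ + t.2 * z))
      (Pf p m c τ z l) := by
    intro l
    have hi : Function.Injective
        (fun t : ℤ × ℤ => ((p : ℤ) * t.1 - t.2 * l + m * l ^ 2, t.2 - 2 * m * l)) := by
      intro a b hab
      simp only [Prod.mk.injEq] at hab
      have h2 : a.2 = b.2 := by linarith [hab.2]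
      have h1 : (p : ℤ) * a.1 = p * b.1 := by rw [h2] at hab; linarith [hab.1]
      exact Prod.ext (mul_left_cancel₀ hp0 h1) h2
    rw [← hi.hasSum_iff]
    · refine HasSum.congr_fun ((h.hasSum (p * τ) (z - l * τ) (im_mul hτ)).mul_right
        (ee (m * (l ^ 2 * τ - 2 * l * z)))) ?_
      intro t
      have e1 : nl m ((p : ℤ) * t.1 - t.2 * l + m * l ^ 2) (t.2 - 2 * m * l) l = p * t.1 := by
        unfold nl; ring
      have e2 : rl m (t.2 - 2 * m * l) l = t.2 := by unfold rl; ring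
      simp only [Function.comp, wterm, e1, e2, dvd_mul_right, if_true,
        Int.mul_ediv_cancel_left _ hp0, tm]
      rw [mul_assoc (c t.1 t.2) (ee _) (ee _), ← ee_add]
      push_cast; congr 2; ring
    · intro t ht
      have : ¬ (p : ℤ) ∣ nl m t.1 t.2 l := by
        rintro ⟨k, hk⟩
        refine ht ⟨(k, rl m t.2 l), ?_⟩
        ext
        · simp only; rw [← hk]; unfold nl rl; ring
        · simp only; unfold rl; ring
      simp [wterm, this]
  convert hQ.add (hasSum_sum (s := Finset.univ) fun (l : ZMod p) _ => hP l.val) using 1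
  funext t
  rw [tm, Wop, add_mul, Finset.sum_mul]

lemma Q_per (τ z : ℂ) (b u : ℤ) : Qf p c τ z (b + p) u = Qf p c τ z b u ∧
    Qf p c τ z b (u + p) = Qf p c τ z b u := by
  have hpc : (p : ℂ) ≠ 0 := by exact_mod_cast NeZero.ne p
  constructor
  · have := phi_add_int c ((τ + b) / p) ((z + u) / p) 1 0
    unfold Qf
    rw [← this]; congr 1 <;> push_cast <;> field_simp <;> ring
  · have := phi_add_int c ((τ + b) / p) ((z + u) / p) 0 1
    unfold Qf
    rw [← this]; congr 1 <;> push_cast <;> field_simp <;> ring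

lemma P_per (h : IsX (p * m) c) (τ z : ℂ) (l : ℤ) :
    Pf p m c τ z (l + p) = Pf p m c τ z l := by
  unfold Pf
  have := h.phi_lat (p * τ) (z - l * τ) (-1)
  rw [show z - ((l + p : ℤ) : ℂ) * τ = z - l * τ + ((-1 : ℤ) : ℂ) * (p * τ) by push_cast; ring, this,
    mul_right_comm, ← ee_add, mul_comm]
  congr 2; push_cast; ring

lemma P_S (h : IsX (p * m) c) (τ z : ℂ) (hτ : 0 < τ.im) (l : ℤ) :
    Pf p m c (-1 / τ) (z / τ) l = (τ / p) * ee (m * z ^ 2 / τ) * Qf p c τ z 0 l := by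
  have hpc : (p : ℂ) ≠ 0 := by exact_mod_cast NeZero.ne p
  have ht : τ ≠ 0 := by rintro rfl; simp at hτ
  have := h.inv ((τ + (0 : ℤ)) / p) ((z + l) / p) (im_div hτ 0)
  unfold Pf Qf
  rw [show (p : ℂ) * (-1 / τ) = -1 / ((τ + (0 : ℤ)) / p) by push_cast; rw [add_zero]; field_simp,
    show z / τ - l * (-1 / τ) = (z + l) / p / ((τ + (0 : ℤ)) / p) by
      push_cast; rw [add_zero]; field_simp; ring, this]
  rw [mul_right_comm, mul_assoc _ (ee _) (ee _), ← ee_add]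
  congr 2
  · push_cast; rw [add_zero]
  · push_cast; rw [add_zero]
    congr 1; field_simp; ring

lemma Q0_S (h : IsX (p * m) c) (τ z : ℂ) (hτ : 0 < τ.im) (u : ℤ) :
    Qf p c (-1 / τ) (z / τ) 0 u = (p * τ) * ee (m * z ^ 2 / τ) * Pf p m c τ z (-u) := by
  have hpc : (p : ℂ) ≠ 0 := by exact_mod_cast NeZero.ne p
  have ht : τ ≠ 0 := by rintro rfl; simp at hτ
  have := h.inv (p * τ) (z + u * τ) (im_mul hτ)
  unfold Pf Qf
  rw [show (-1 / τ + (0 : ℤ)) / p = -1 / (p * τ) by push_cast; rw [add_zero]; field_simp,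
    show (z / τ + u) / p = (z + u * τ) / (p * τ) by field_simp, this]
  rw [show z - ((-u : ℤ) : ℂ) * τ = z + u * τ by push_cast; ring, mul_assoc, mul_assoc _ (ee _) (_ * _),
    mul_left_comm (ee (m * z ^ 2 / τ)), ← ee_add, mul_comm (ee _)]
  congr 3
  push_cast; field_simp; ring

lemma Qb_S (h : IsX (p * m) c) (τ z : ℂ) (hτ : 0 < τ.im) (b b' k u : ℤ) (hb : b * b' + k * p = -1) :
    Qf p c (-1 / τ) (z / τ) b u = τ * ee (m * z ^ 2 / τ) * Qf p c τ z b' (-u * b') := by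
  have hpc : (p : ℂ) ≠ 0 := by exact_mod_cast NeZero.ne p
  have ht : τ ≠ 0 := by rintro rfl; simp at hτ
  have hbc : (b * b' + k * p : ℂ) = -1 := by exact_mod_cast hb
  have h1 := h.tr' (a := b) (b := k) (c' := p) (d := -b') (by linarith)
    ((τ + b') / p) ((z - u * b') / p + u * ((τ + b') / p)) (im_div hτ _)
  have e : (((p : ℤ) : ℂ) * ((τ + b') / p) + ((-b' : ℤ) : ℂ)) = τ := by push_cast; field_simp; ring
  rw [e, h.phi_lat] at h1
  unfold Qf
  rw [show (-1 / τ + b) / p = (b * ((τ + b') / p) + k) / τ by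
      field_simp; linear_combination -hbc,
    show (z / τ + u) / p = ((z - u * b') / p + u * ((τ + b') / p)) / τ by field_simp; ring, h1]
  rw [show z + ((-u * b' : ℤ) : ℂ) = z - u * b' by push_cast; ring, ← mul_assoc, mul_assoc τ, ← ee_add]
  congr 2
  rw [← mul_one (ee (m * z ^ 2 / τ)), ← ee_int (m * u ^ 2 * b'), ← ee_add]
  congr 1
  push_cast; field_simp; ring

end W

lemma IsX.W {p : ℕ} [Fact p.Prime] {m : ℤ} {c : ℤ → ℤ → ℂ} (h : IsX (p * m) c) : IsX m (Wop p m c) := by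
  have hp0 : (0 : ℤ) < (p : ℤ) := by exact_mod_cast (Fact.out : p.Prime).pos
  have hpc : (p : ℂ) ≠ 0 := by exact_mod_cast NeZero.ne p
  have hphi : ∀ τ z : ℂ, 0 < τ.im → phi (Wop p m c) τ z = _ :=
    fun τ z hτ => (W_hasSum h τ z hτ).tsum_eq
  refine ⟨?_, fun τ z hτ => (W_hasSum h τ z hτ).summable, ?_, ?_⟩
  · intro n r hc
    by_contra hcon
    push Not at hcon
    apply hc
    have h1 : c (p * n) (p * r) = 0 := by
      by_contra h1
      have := h.supp _ _ h1
      nlinarith [mul_le_mul_of_nonneg_left hcon (sq_nonneg (p : ℤ))]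
    have h2 : ∀ l : ℤ, wterm p m c n r l = 0 := by
      intro l
      unfold wterm
      split_ifs with hd
      · by_contra h2
        have := h.supp _ _ h2
        obtain ⟨k, hk⟩ := hd
        rw [hk, Int.mul_ediv_cancel_left _ hp0.ne'] at this
        have e : rl m r l ^ 2 - 4 * k * (p * m) = r ^ 2 - 4 * n * m := by
          have : rl m r l ^ 2 - 4 * nl m n r l * m = r ^ 2 - 4 * n * m := by unfold rl nl; ring
          rw [hk] at this; linarith
        linarith
      · rfl
    simp [Wop, h1, h2]
  · intro n r
    unfold Wop
    congr 1
    · congr 1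
      rw [← h.shift (p * n)]; congr 1 <;> ring
    · rw [← Equiv.sum_comp (Equiv.addRight (1 : ZMod p)) (fun l : ZMod p => wterm p m c n r l.val)]
      refine (Finset.sum_congr rfl fun l _ => ?_).symm
      dsimp only [Equiv.coe_addRight]
      refine (per_val _ (wterm_per h n r) _ ((l.val : ℤ) + 1) (by simp)).trans ?_
      unfold wterm
      rw [show nl m (n + r + m) (r + 2 * m) l.val = nl m n r (l.val + 1) by unfold nl; ring,
        show rl m (r + 2 * m) l.val = rl m r (l.val + 1) by unfold rl; ring]
  · intro τ z hτ
    have h1 : 0 < (-1 / τ : ℂ).im := by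
      have := mob_im (a := 0) (b := -1) (c := 1) (d := 0) (by norm_num) hτ
      simpa using this
    rw [hphi _ _ h1, hphi _ _ hτ]
    set E := ee (m * z ^ 2 / τ)
    have e1 : ∑ l : ZMod p, Pf p m c (-1 / τ) (z / τ) l.val =
        (τ / p) * E * ∑ u : ZMod p, Qf p c τ z 0 u.val := by
      rw [Finset.mul_sum]; exact Finset.sum_congr rfl fun l _ => P_S h τ z hτ _
    have e2 : ∑ u : ZMod p, Qf p c (-1 / τ) (z / τ) 0 u.val =
        (p * τ) * E * ∑ l : ZMod p, Pf p m c τ z l.val := by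
      rw [← Equiv.sum_comp (Equiv.neg (ZMod p)) (fun l : ZMod p => Pf p m c τ z l.val), Finset.mul_sum]
      refine Finset.sum_congr rfl fun l _ => ?_
      rw [Q0_S h τ z hτ]
      congr 1
      symm
      apply per_val _ (P_per h τ z)
      simp
    have e3 : ∑ b ∈ Finset.univ.erase (0 : ZMod p), ∑ u : ZMod p, Qf p c (-1 / τ) (z / τ) b.val u.val =
        τ * E * ∑ b ∈ Finset.univ.erase (0 : ZMod p), ∑ u : ZMod p, Qf p c τ z b.val u.val := by
      rw [Finset.mul_sum]
      refine Finset.sum_nbij' (fun b => -b⁻¹) (fun b => -b⁻¹) (by simp) (by simp) (by simp [inv_neg])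
        (by simp [inv_neg]) ?_
      intro b hb
      have hb0 : b ≠ 0 := by simpa using hb
      have hb1 : -b⁻¹ ≠ 0 := by simpa using hb0
      set b' := -b⁻¹ with hb'
      have hk : (p : ℤ) ∣ -1 - (b.val : ℤ) * (b'.val : ℤ) := by
        rw [← ZMod.intCast_zmod_eq_zero_iff_dvd]
        push_cast
        simp [hb', hb0]
      obtain ⟨k, hk⟩ := hk
      have hne : -b' ≠ 0 := by simpa [hb'] using hb0
      rw [← Equiv.sum_comp (Equiv.mulRight₀ (-b') hne) (fun u => Qf p c τ z b'.val u.val), Finset.mul_sum]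
      refine Finset.sum_congr rfl fun u _ => ?_
      rw [Qb_S h τ z hτ _ b'.val k _ (by linarith)]
      congr 1
      symm
      apply per_val _ (fun a => (Q_per τ z _ a).2)
      simp
    rw [← Finset.add_sum_erase _ _ (Finset.mem_univ (0 : ZMod p)),
      ← Finset.add_sum_erase Finset.univ (fun b : ZMod p => ∑ u : ZMod p, Qf p c τ z b.val u.val)
      (Finset.mem_univ (0 : ZMod p)), e1, e3]
    simp only [ZMod.val_zero, Nat.cast_zero]
    rw [e2]
    field_simp
    ring

/-- V_p : X_m → X_{pm} -/
def Vop (p : ℕ) (c : ℤ → ℤ → ℂ) (n r : ℤ) : ℂ :=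
  c (p * n) r + if (p : ℤ) ∣ n ∧ (p : ℤ) ∣ r then c (n / p) (r / p) else 0

lemma IsX.smul {m : ℤ} {c} (h : IsX m c) (a : ℂ) : IsX m (fun n r => a * c n r) := by
  have hs : ∀ τ z : ℂ, 0 < τ.im → HasSum (tm (fun n r => a * c n r) τ z) (a * phi c τ z) := by
    intro τ z hτ
    refine HasSum.congr_fun ((h.hasSum τ z hτ).mul_left a) fun t => ?_
    simp [tm, mul_assoc]
  refine ⟨fun n r hc => h.supp n r (right_ne_zero_of_mul hc), fun τ z hτ => (hs τ z hτ).summable,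
    fun n r => by rw [h.shift], fun τ z hτ => ?_⟩
  have h1 : 0 < (-1 / τ : ℂ).im := by
    have := mob_im (a := 0) (b := -1) (c := 1) (d := 0) (by norm_num) hτ
    simpa using this
  have e1 := (hs _ (z / τ) h1).tsum_eq
  have e2 := (hs _ z hτ).tsum_eq
  change phi _ _ _ = _ at e1
  change phi _ _ _ = _ at e2
  rw [e1, e2, h.inv _ _ hτ]; ring

lemma IsX.add {m : ℤ} {c c'} (h : IsX m c) (h' : IsX m c') : IsX m (fun n r => c n r + c' n r) := by
  have hs : ∀ τ z : ℂ, 0 < τ.im →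
      HasSum (tm (fun n r => c n r + c' n r) τ z) (phi c τ z + phi c' τ z) := by
    intro τ z hτ
    refine HasSum.congr_fun ((h.hasSum τ z hτ).add (h'.hasSum τ z hτ)) fun t => ?_
    simp [tm, add_mul]
  refine ⟨fun n r hc => ?_, fun τ z hτ => (hs τ z hτ).summable,
    fun n r => by rw [h.shift, h'.shift], fun τ z hτ => ?_⟩
  · by_cases h0 : c n r = 0
    · exact h'.supp n r (by simpa [h0] using hc)
    · exact h.supp n r h0
  have h1 : 0 < (-1 / τ : ℂ).im := by
    have := mob_im (a := 0) (b := -1) (c := 1) (d := 0) (by norm_num) hτ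
    simpa using this
  have e1 := (hs _ (z / τ) h1).tsum_eq
  have e2 := (hs _ z hτ).tsum_eq
  change phi _ _ _ = _ at e1
  change phi _ _ _ = _ at e2
  rw [e1, e2, h.inv _ _ hτ, h'.inv _ _ hτ]; ring

lemma IsX.V {p : ℕ} [Fact p.Prime] {m : ℤ} {c : ℤ → ℤ → ℂ} (h : IsX m c) : IsX (p * m) (Vop p c) := by
  have hp0 : (0 : ℤ) < (p : ℤ) := by exact_mod_cast (Fact.out : p.Prime).pos
  have hpc : (p : ℂ) ≠ 0 := by exact_mod_cast NeZero.ne p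
  have h1 := h.U p (Fact.out : p.Prime).pos
  rw [show ((p : ℤ) ^ 2 * m) = p * (p * m) by ring] at h1
  have h2 := h1.W.smul (1 / p)
  convert h2 using 3 with n r
  unfold Vop Wop
  have e1 : Uop p c (p * n) (p * r) = c (p * n) r := by
    simp [Uop, Int.mul_ediv_cancel_left _ hp0.ne']
  have e2 : ∀ l : ℤ, wterm p (p * m) (Uop p c) n r l =
      if (p : ℤ) ∣ n ∧ (p : ℤ) ∣ r then c (n / p) (r / p) else 0 := by
    intro l
    unfold wterm Uop
    have a1 : (p : ℤ) ∣ rl (p * m) r l ↔ (p : ℤ) ∣ r := by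
      unfold rl; rw [Int.dvd_add_left]; exact ⟨2 * m * l, by ring⟩
    by_cases hr : (p : ℤ) ∣ r
    · have a2 : (p : ℤ) ∣ nl (p * m) n r l ↔ (p : ℤ) ∣ n := by
        unfold nl
        rw [add_assoc, Int.dvd_add_left]
        exact dvd_add (hr.mul_right _) ⟨m * l ^ 2, by ring⟩
      simp only [a1, a2, hr, and_true, if_true]
      split_ifs with hn
      · obtain ⟨k, rfl⟩ := hn
        obtain ⟨s, rfl⟩ := hr
        rw [show nl (p * m) (p * k) (p * s) l = p * (k + s * l + m * l ^ 2) by unfold nl; ring,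
          show rl (p * m) (p * s) l = p * (s + 2 * m * l) by unfold rl; ring]
        simp only [Int.mul_ediv_cancel_left _ hp0.ne']
        exact h.shiftN l k s
      · rfl
    · simp [a1, hr]
  simp only [e1, e2]
  simp only [Finset.sum_const, Finset.card_univ, ZMod.card, nsmul_eq_mul]
  field_simp

/-- W_p V_p -/
def Nop (p : ℕ) [NeZero p] (m : ℤ) (c : ℤ → ℤ → ℂ) : ℤ → ℤ → ℂ := Wop p m (Vop p c)

lemma IsX.N {p : ℕ} [Fact p.Prime] {m : ℤ} {c : ℤ → ℤ → ℂ} (h : IsX m c) : IsX m (Nop p m c) :=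
  h.V.W

/-- formula for N at (n,r) when exactly one l has p ∣ n_l -/
lemma N_formula {p : ℕ} [Fact p.Prime] {m : ℤ} {c : ℤ → ℤ → ℂ} (h : IsX m c) (n r : ℤ) (l0 : ZMod p)
    (hl : ∀ l : ZMod p, (p : ℤ) ∣ nl m n r l.val ↔ l = l0) :
    Nop p m c n r = p * c (p ^ 2 * n) (p * r) + (p + 1) * c n r +
      if (p : ℤ) ^ 2 ∣ nl m n r l0.val ∧ (p : ℤ) ∣ rl m r l0.val then
        c (nl m n r l0.val / p ^ 2) (rl m r l0.val / p) else 0 := by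
  have hp0 : (0 : ℤ) < (p : ℤ) := by exact_mod_cast (Fact.out : p.Prime).pos
  unfold Nop Wop
  rw [Finset.sum_eq_single l0]
  · have e1 : Vop p c (p * n) (p * r) = c (p ^ 2 * n) (p * r) + c n r := by
      simp only [Vop, dvd_mul_right, and_self, if_true, Int.mul_ediv_cancel_left _ hp0.ne']
      congr 2; ring
    obtain ⟨k, hk⟩ := (hl l0).2 rfl
    have e2 : wterm p m (Vop p c) n r l0.val = c n r +
      if (p : ℤ) ^ 2 ∣ nl m n r l0.val ∧ (p : ℤ) ∣ rl m r l0.val then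
        c (nl m n r l0.val / p ^ 2) (rl m r l0.val / p) else 0 := by
      unfold wterm
      rw [if_pos ⟨k, hk⟩, Vop]
      congr 1
      · rw [Int.mul_ediv_cancel' ⟨k, hk⟩]; exact h.shiftN _ n r
      · rw [hk, Int.mul_ediv_cancel_left _ hp0.ne', sq, Int.mul_ediv_mul_of_pos _ _ hp0]
        simp only [mul_dvd_mul_iff_left hp0.ne']
    rw [e1, e2]; ring
  · intro l _ hne
    unfold wterm
    rw [if_neg]
    rw [hl]; exact hne
  · simp
end

section
open UpperHalfPlane ModularForm ModularFormClass MatrixGroups EisensteinSeries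
def FGs (a : PowerSeries ℂ) : Prop := ∃ M : Submodule ℤ ℂ, M.FG ∧ ∀ n, a.coeff n ∈ M

lemma FGs.add {a b : PowerSeries ℂ} (ha : FGs a) (hb : FGs b) : FGs (a + b) := by
  obtain ⟨M, hM, h1⟩ := ha
  obtain ⟨M', hM', h2⟩ := hb
  refine ⟨M ⊔ M', hM.sup hM', fun n => ?_⟩
  rw [map_add]
  exact add_mem (Submodule.mem_sup_left (h1 n)) (Submodule.mem_sup_right (h2 n))

lemma FGs.smul {a : PowerSeries ℂ} (ha : FGs a) (x : ℂ) : FGs (x • a) := by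
  obtain ⟨M, hM, h1⟩ := ha
  refine ⟨(Submodule.span ℤ {x}) * M, (Submodule.fg_span_singleton x).mul hM, fun n => ?_⟩
  rw [PowerSeries.coeff_smul, smul_eq_mul]
  exact Submodule.mul_mem_mul (Submodule.mem_span_singleton_self x) (h1 n)

lemma FGs.mul {a b : PowerSeries ℂ} (ha : FGs a) (hb : FGs b) : FGs (a * b) := by
  obtain ⟨M, hM, h1⟩ := ha
  obtain ⟨M', hM', h2⟩ := hb
  refine ⟨M * M', hM.mul hM', fun n => ?_⟩
  rw [PowerSeries.coeff_mul]
  exact sum_mem fun i _ => Submodule.mul_mem_mul (h1 _) (h2 _)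

lemma FGs.sub {a b : PowerSeries ℂ} (ha : FGs a) (hb : FGs b) : FGs (a - b) := by
  have := ha.add (hb.smul (-1))
  simpa [sub_eq_add_neg] using this

lemma FGs.one : FGs 1 := by
  refine ⟨Submodule.span ℤ {1}, Submodule.fg_span_singleton _, fun n => ?_⟩
  rw [PowerSeries.coeff_one]
  split_ifs
  · exact Submodule.mem_span_singleton_self 1
  · exact zero_mem _

lemma FGs.zero : FGs 0 := by simpa using FGs.one.smul 0

lemma FGs.pow {a : PowerSeries ℂ} (ha : FGs a) (n : ℕ) : FGs (a ^ n) := by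
  induction n with
  | zero => simpa using FGs.one
  | succ n ih => rw [pow_succ]; exact ih.mul ha

lemma FGs_E {k : ℕ} (hk : 3 ≤ k) (hk2 : Even k) : FGs (qExpansion 1 (E hk)) := by
  refine ⟨Submodule.span ℤ {1, -(2 * k / bernoulli k : ℂ)}, Submodule.fg_span (Set.toFinite _),
    fun n => ?_⟩
  rw [E_qExpansion_coeff hk hk2]
  split_ifs
  · exact Submodule.subset_span (by simp)
  · have := Submodule.smul_mem (Submodule.span ℤ {1, -(2 * k / bernoulli k : ℂ)})
      (ArithmeticFunction.sigma (k - 1) n : ℤ) (x := -(2 * k / bernoulli k : ℂ)) (Submodule.subset_span (by simp))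
    simpa [mul_comm] using this

lemma FGs_disc : FGs (qExpansion 1 discriminant) := by
  have h1 : discriminant = ((1 / 1728 : ℂ) • (ModularForm.mcast (by decide) (E₄.pow 3) -
    ModularForm.mcast (by decide) (E₆.pow 2) : ModularForm 𝒮ℒ 12) : ModularForm 𝒮ℒ 12) := by
    funext z
    rw [discriminant_eq_E₄_cube_sub_E₆_sq]
    have a1 : (E₄.pow 3) z = E₄ z ^ 3 := by rw [ModularForm.coe_pow]; rfl
    have a2 : (E₆.pow 2) z = E₆ z ^ 2 := by rw [ModularForm.coe_pow]; rfl
    simp [a1, a2]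
    ring
  rw [h1]
  rw [FunLike.coe_smul, ModularForm.qExpansion_smul one_pos one_mem_strictPeriods_SL, FunLike.coe_sub,
    ModularForm.qExpansion_sub one_pos one_mem_strictPeriods_SL]
  simp only [coe_mcast, ModularForm.qExpansion_pow one_pos one_mem_strictPeriods_SL]
  exact (((FGs_E _ ⟨2, rfl⟩).pow 3).sub ((FGs_E _ ⟨3, rfl⟩).pow 2)).smul _

lemma FGs_level_one (N : ℕ) : ∀ (k : ℤ), k < N → ∀ f : ModularForm 𝒮ℒ k, FGs (qExpansion 1 f) := by
  induction N with
  | zero =>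
    intro k hk f
    rw [ModularFormClass.levelOne_neg_weight_eq_zero (by simpa using hk) f, qExpansion_zero]
    exact FGs.zero
  | succ N ih =>
    intro k hk f
    have z0 : f = 0 → FGs (qExpansion 1 f) := by
      rintro rfl
      rw [FunLike.coe_zero, qExpansion_zero]
      exact FGs.zero
    rcases Int.even_or_odd k with he | ho
    · rcases lt_trichotomy k 0 with h0 | h0 | h0
      · exact ih k (by omega) f
      · subst h0
        obtain ⟨c, hc⟩ := levelOne_weight_zero_const f
        have : (f : ℍ → ℂ) = (c • (1 : ModularForm 𝒮ℒ 0) : ModularForm 𝒮ℒ 0) := by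
          rw [hc]; funext z; simp
        rw [this, FunLike.coe_smul, ModularForm.qExpansion_smul one_pos one_mem_strictPeriods_SL,
          ModularForm.qExpansion_one]
        exact FGs.one.smul c
      · by_cases h2 : k = 2
        · subst h2
          exact z0 (rank_zero_iff_forall_zero.mp levelOne_weight_two_rank_zero f)
        · obtain ⟨l, rfl⟩ : ∃ l : ℕ, k = l := ⟨k.toNat, by omega⟩
          have hl : 3 ≤ l := by
            obtain ⟨a, ha⟩ := he
            omega
          have he' : Even l := by exact_mod_cast he
          set a := (qExpansion 1 f).coeff 0 with ha
          have e1 : qExpansion 1 (f - a • E hl : ModularForm 𝒮ℒ l) =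
              qExpansion 1 f - a • qExpansion 1 (E hl) := by
            rw [FunLike.coe_sub, ModularForm.qExpansion_sub one_pos one_mem_strictPeriods_SL,
              FunLike.coe_smul, ModularForm.qExpansion_smul one_pos one_mem_strictPeriods_SL]
          have hc : (qExpansion 1 (f - a • E hl : ModularForm 𝒮ℒ l)).coeff 0 = 0 := by
            rw [e1, map_sub, PowerSeries.coeff_smul, E_qExpansion_coeff_zero hl he', ← ha]
            simp
          have e2 := qExpansion_eq_qExpansion_discriminant_mul (f - a • E hl : ModularForm 𝒮ℒ l) hc
          have : qExpansion 1 f = a • qExpansion 1 (E hl) + qExpansion 1 (f - a • E hl : ModularForm 𝒮ℒ l) := by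
            rw [e1]; abel
          rw [this, e2]
          exact ((FGs_E hl he').smul a).add (FGs_disc.mul (ih _ (by push_cast at hk ⊢; omega) _))
    · exact z0 (ModularForm.levelOne_odd_weight_eq_zero ho f)

lemma FGs_lvl {k : ℤ} (f : ModularForm 𝒮ℒ k) : FGs (qExpansion 1 f) :=
  FGs_level_one (k.toNat + 1) k (by push_cast; omega) f
end

section
open UpperHalfPlane ModularForm ModularFormClass MatrixGroups EisensteinSeries
open scoped Manifold
def QS (f : ℍ → ℂ) (a : PowerSeries ℂ) : Prop :=
  ∀ τ : ℍ, HasSum (fun n : ℕ => a.coeff n * ee τ ^ n) (f τ)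

lemma QS.add {f g a b} (h : QS f a) (h' : QS g b) : QS (f + g) (a + b) := by
  intro τ
  refine HasSum.congr_fun ((h τ).add (h' τ)) fun n => ?_
  rw [map_add, add_mul]

lemma QS.smul {f a} (x : ℂ) (h : QS f a) : QS (x • f) (x • a) := by
  intro τ
  refine HasSum.congr_fun ((h τ).mul_left x) fun n => ?_
  rw [PowerSeries.coeff_smul, smul_eq_mul, mul_assoc]

lemma QS.one : QS 1 1 := by
  intro τ
  have := hasSum_ite_eq (0 : ℕ) (1 : ℂ)
  refine HasSum.congr_fun this fun n => ?_
  rw [PowerSeries.coeff_one]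
  split_ifs with h <;> simp [h]

lemma QS.mul {f g a b} (h : QS f a) (h' : QS g b) : QS (f * g) (a * b) := by
  intro τ
  have s1 := (h τ).summable.norm
  have s2 := (h' τ).summable.norm
  have e := tsum_mul_tsum_eq_tsum_sum_antidiagonal_of_summable_norm s1 s2
  have s3 := (summable_norm_sum_mul_antidiagonal_of_summable_norm s1 s2).of_norm
  rw [(h τ).tsum_eq, (h' τ).tsum_eq] at e
  have := s3.hasSum
  rw [← e] at this
  refine HasSum.congr_fun this fun n => ?_
  rw [PowerSeries.coeff_mul, Finset.sum_mul]
  refine Finset.sum_congr rfl fun x hx => ?_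
  rw [← Finset.HasAntidiagonal.mem_antidiagonal.mp hx, pow_add]; ring

lemma QS.pow {f a} (h : QS f a) (n : ℕ) : QS (f ^ n) (a ^ n) := by
  induction n with
  | zero => simpa using QS.one
  | succ n ih => rw [pow_succ, pow_succ]; exact ih.mul h

lemma QS.zero : QS 0 0 := by simpa using QS.one.smul 0

lemma QS.sum {ι : Type*} (s : Finset ι) (f : ι → ℍ → ℂ) (a : ι → PowerSeries ℂ)
    (h : ∀ i ∈ s, QS (f i) (a i)) : QS (∑ i ∈ s, f i) (∑ i ∈ s, a i) := by
  classical
  induction s using Finset.induction_on with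
  | empty => simpa using QS.zero
  | insert i s hi ih =>
    rw [Finset.sum_insert hi, Finset.sum_insert hi]
    exact (h i (by simp)).add (ih fun j hj => h j (by simp [hj]))

lemma QS.holo {f a} (h : QS f a) : MDiff f := by
  rw [UpperHalfPlane.mdifferentiable_iff]
  have key : ∀ ε : ℝ, 0 < ε → DifferentiableOn ℂ (fun z => ∑' n : ℕ, a.coeff n * ee z ^ n)
      {z | ε < z.im} := by
    intro ε hε
    have s1 := (h ⟨ε * Complex.I, by simpa using hε⟩).summable.norm
    refine differentiableOn_tsum_of_summable_norm s1 (fun n => ?_)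
      (isOpen_lt continuous_const Complex.continuous_im) (fun n z hz => ?_)
    · refine DifferentiableOn.const_mul (DifferentiableOn.pow ?_ n) _
      unfold ee; fun_prop
    · rw [norm_mul, norm_mul, norm_pow, norm_pow, ee_norm, ee_norm]
      gcongr
      simpa using (le_of_lt hz : ε ≤ z.im)
  intro z hz
  have hz' : 0 < z.im := hz
  have h1 := (key (z.im / 2) (by positivity) z (by simp; linarith)).differentiableAt
    ((isOpen_lt continuous_const Complex.continuous_im).mem_nhds (by simp; linarith))
  refine DifferentiableAt.differentiableWithinAt (h1.congr_of_eventuallyEq ?_)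
  filter_upwards [(isOpen_lt continuous_const Complex.continuous_im).mem_nhds hz'] with w hw
  rw [Function.comp, ofComplex_apply_of_im_pos hw]
  exact (h ⟨w, hw⟩).tsum_eq.symm

lemma QS.form {f a} (h : QS f a) (k : ℤ) (hS : ∀ τ : ℍ, f (ModularGroup.S • τ) = (τ : ℂ) ^ k * f τ) :
    ∃ g : ModularForm 𝒮ℒ k, qExpansion 1 g = a := by
  have hh : ∀ τ : ℍ, HasSum (fun m ↦ a.coeff m • Function.Periodic.qParam 1 τ ^ m) (f τ) := by
    intro τ
    refine HasSum.congr_fun (h τ) fun n => ?_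
    simp [Function.Periodic.qParam, ee]
  have hb : IsBoundedAtImInfty f := isBoundedAtImInfty_of_hasSum_qExpansion one_pos hh
  have hSL : ∀ γ : SL(2, ℤ), f ∣[k] γ = f := by
    refine SlashInvariantForm.slash_action_generators_SL2Z ?_ ?_
    · funext τ
      rw [SL_slash_apply, hS, ModularGroup.denom_S, mul_right_comm, ← zpow_add₀ (ne_zero τ)]
      simp
    · funext τ
      rw [SL_slash_apply, modular_T_smul, ModularGroup.denom_apply]
      simp only [ModularGroup.T]
      have e1 := h ((1 : ℝ) +ᵥ τ)
      have : ee (((1 : ℝ) +ᵥ τ : ℍ) : ℂ) = ee τ := by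
        rw [coe_vadd, ee_add]
        have := ee_int 1
        push_cast at this ⊢
        rw [this, one_mul]
      rw [this] at e1
      rw [e1.unique (h τ)]
      simp
  let g : ModularForm 𝒮ℒ k :=
    { toFun := f
      slash_action_eq' := by
        rintro A ⟨γ, rfl⟩
        exact hSL γ
      holo' := h.holo
      bdd_at_cusps' := by
        intro c hc
        rw [Subgroup.IsArithmetic.isCusp_iff_isCusp_SL2Z] at hc
        rw [OnePoint.isBoundedAt_iff_forall_SL2Z hc]
        intro γ _
        rw [hSL γ]; exact hb }
  refine ⟨g, ?_⟩
  ext n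
  exact (ModularFormClass.qExpansion_coeff_unique (f := g) one_pos one_mem_strictPeriods_SL hh n).symm
end

section
/-- moments as functions of τ -/
def Mf (c : ℤ → ℤ → ℂ) (ν : ℕ) (τ : ℂ) : ℂ := ∑' t : ℤ × ℤ, c t.1 t.2 * ee (t.1 * τ) * (t.2 : ℂ) ^ ν

lemma zsummable {m : ℤ} {c} (h : IsX m c) (τ z : ℂ) (hτ : 0 < τ.im) :
    Summable (fun x : (ℤ × ℤ) × ℕ => c x.1.1 x.1.2 * ee (x.1.1 * τ) *
      ((2 * Real.pi * I * x.1.2 * z) ^ x.2 / (x.2.factorial : ℂ))) := by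
  apply Summable.of_norm
  rw [summable_prod_of_nonneg (fun _ => norm_nonneg _)]
  have hexp : ∀ t : ℤ × ℤ, HasSum (fun k : ℕ => ‖c t.1 t.2 * ee (t.1 * τ) *
      ((2 * Real.pi * I * t.2 * z) ^ k / (k.factorial : ℂ))‖)
      (‖c t.1 t.2 * ee (t.1 * τ)‖ * Real.exp ‖2 * Real.pi * I * t.2 * z‖) := by
    intro t
    have := (NormedSpace.exp_series_hasSum_exp' (𝕂 := ℝ) ‖2 * Real.pi * I * t.2 * z‖)
    rw [← Real.exp_eq_exp_ℝ] at this
    refine HasSum.congr_fun (this.mul_left _) fun k => ?_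
    rw [norm_mul, norm_div, norm_pow]
    congr 1
    rw [smul_eq_mul, div_eq_inv_mul]
    simp
  constructor
  · intro t; exact (hexp t).summable
  · simp only [(hexp _).tsum_eq]
    have s1 := (h.summ τ (‖z‖ * I) hτ).norm
    have s2 := (h.summ τ (-(‖z‖ * I)) hτ).norm
    refine Summable.of_nonneg_of_le (fun t => by positivity) (fun t => ?_) (s1.add s2)
    simp only [tm, ee_add, norm_mul]
    rw [show ∀ a b x y : ℝ, a * (b * x) + a * (b * y) = a * b * (x + y) from fun a b x y => by ring]
    gcongr
    rw [ee_norm, ee_norm]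
    have e : 2 * ‖(Real.pi : ℂ)‖ = 2 * Real.pi := by simp [abs_of_pos Real.pi_pos]
    simp only [norm_mul, RCLike.norm_ofNat, norm_intCast, Complex.norm_I, mul_one]
    rw [Complex.norm_real, Real.norm_of_nonneg Real.pi_pos.le]
    simp only [Complex.mul_im, Complex.neg_im, Complex.ofReal_im, Complex.ofReal_re, Complex.I_im, Complex.I_re,
      Complex.intCast_re, Complex.intCast_im, mul_one, mul_zero, zero_mul, add_zero, zero_add]
    rcases abs_cases (t.2 : ℝ) with ⟨h1, _⟩ | ⟨h1, _⟩
    · rw [h1]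
      refine le_trans (le_of_eq ?_) (le_add_of_nonneg_left (Real.exp_nonneg _))
      congr 1; ring
    · rw [h1]
      refine le_trans (le_of_eq ?_) (le_add_of_nonneg_right (Real.exp_nonneg _))
      congr 1; ring

lemma Mf_summable {m : ℤ} {c} (h : IsX m c) (τ : ℂ) (hτ : 0 < τ.im) (ν : ℕ) :
    Summable (fun t : ℤ × ℤ => c t.1 t.2 * ee (t.1 * τ) * (t.2 : ℂ) ^ ν) := by
  have hpi : (2 * Real.pi * I : ℂ) ≠ 0 := by simp [Real.pi_ne_zero]
  have h1 := (zsummable h τ 1 hτ).comp_injective (i := fun t : ℤ × ℤ => (t, ν))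
    (fun a b hab => by simpa using hab)
  have h2 := h1.mul_left ((ν.factorial : ℂ) / (2 * Real.pi * I) ^ ν)
  refine h2.congr fun t => ?_
  have : (ν.factorial : ℂ) ≠ 0 := by exact_mod_cast ν.factorial_ne_zero
  simp only [Function.comp, mul_one, mul_pow _ (t.2 : ℂ)]
  have h3 : (2 * Real.pi * I : ℂ) ^ ν ≠ 0 := pow_ne_zero _ hpi
  field_simp

lemma zexp {m : ℤ} {c} (h : IsX m c) (τ z : ℂ) (hτ : 0 < τ.im) :
    HasSum (fun ν : ℕ => ((2 * Real.pi * I) ^ ν / (ν.factorial : ℂ) * Mf c ν τ) * z ^ ν) (phi c τ z) := by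
  have hs := zsummable h τ z hτ
  have h1 : HasSum _ _ := hs.hasSum
  have h2 := h1.prod_fiberwise (g := fun t => tm c τ z t) (fun t => by
    have := (NormedSpace.exp_series_hasSum_exp' (𝕂 := ℂ) (2 * Real.pi * I * t.2 * z : ℂ))
    rw [← Complex.exp_eq_exp_ℂ] at this
    rw [tm, ee_add, ← mul_assoc, show ee (t.2 * z) = Complex.exp (2 * Real.pi * I * t.2 * z) by
      unfold ee; congr 1; ring]
    refine HasSum.congr_fun (this.mul_left _) fun k => ?_
    rw [smul_eq_mul, div_eq_inv_mul])
  have e : phi c τ z = _ := h2.tsum_eq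
  have h3 := ((Equiv.prodComm ℕ (ℤ × ℤ)).hasSum_iff).mpr h1
  rw [e]
  refine h3.prod_fiberwise (fun ν => ?_)
  have h4 := (Mf_summable h τ hτ ν).hasSum.mul_left ((2 * Real.pi * I) ^ ν / (ν.factorial : ℂ))
  refine HasSum.congr_fun (h4.mul_right (z ^ ν)) fun t => ?_
  simp only [Function.comp, Equiv.prodComm_apply, Prod.swap]
  rw [mul_pow _ z, mul_pow _ (t.2 : ℂ)]; ring

def mom (c : ℤ → ℤ → ℂ) (Q : Polynomial ℂ) : PowerSeries ℂ :=
  PowerSeries.mk fun n => ∑ᶠ r : ℤ, c n r * Q.eval (r : ℂ)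

lemma IsX.finsupp {m : ℤ} {c} (h : IsX m c) (hm : 0 < m) (n : ℤ) (g : ℤ → ℂ) :
    (Function.support fun r => c n r * g r).Finite := by
  refine (Set.finite_Icc (-(4 * n * m)) (4 * n * m)).subset fun r hr => ?_
  have := h.supp n r (left_ne_zero_of_mul hr)
  have h2 : |r| ≤ r ^ 2 := by
    rw [← sq_abs]
    rcases eq_or_lt_of_le (abs_nonneg r) with h0 | h0
    · rw [← h0]; norm_num
    · nlinarith
  exact Set.mem_Icc.mpr (abs_le.mp (by linarith))

lemma mom_QS {m : ℤ} {c} (h : IsX m c) (hm : 0 < m) (ν : ℕ) :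
    QS (fun τ : UpperHalfPlane => Mf c ν τ) (mom c (Polynomial.X ^ ν)) := by
  intro τ
  have h1 := (Mf_summable h τ τ.im_pos ν).hasSum
  have h2 := h1.prod_fiberwise (g := fun n : ℤ => (∑ᶠ r : ℤ, c n r * (r : ℂ) ^ ν) * ee (n * τ)) (fun n => by
    have hf := h.finsupp hm n (fun r => (r : ℂ) ^ ν)
    have h3 := (hasSum_sum_of_ne_finset_zero (L := .unconditional ℤ) (s := hf.toFinset) (f := fun r : ℤ => c n r * (r : ℂ) ^ ν)
      (fun r hr => by
        rw [Set.Finite.mem_toFinset, Function.mem_support, not_not] at hr; exact hr))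
    rw [finsum_eq_sum _ hf]
    refine HasSum.congr_fun (h3.mul_right _) fun r => ?_
    ring)
  rw [← (Nat.cast_injective (R := ℤ)).hasSum_iff] at h2
  · refine HasSum.congr_fun h2 fun n => ?_
    simp [mom, ee_nmul]
  · intro n hn
    have : ∀ r, c n r = 0 := by
      intro r
      by_contra h0
      have := h.supp n r h0
      have hn0 : 0 < n := by nlinarith [sq_nonneg r]
      exact hn ⟨n.toNat, by simp [hn0.le]⟩
    simp [this]

lemma pser_unique {a b : ℕ → ℂ} {f : ℂ → ℂ} (ha : ∀ z, HasSum (fun n => a n * z ^ n) (f z))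
    (hb : ∀ z, HasSum (fun n => b n * z ^ n) (f z)) : a = b := by
  have key : ∀ a : ℕ → ℂ, (∀ z, HasSum (fun n => a n * z ^ n) (f z)) →
      HasFPowerSeriesAt f (FormalMultilinearSeries.ofScalars ℂ a) 0 := by
    intro a ha
    rw [hasFPowerSeriesAt_iff]
    refine Eventually.of_forall fun z => ?_
    simpa [mul_comm] using ha z
  have := (key a ha).eq_formalMultilinearSeries (key b hb)
  funext n
  have h2 := congrArg (fun p => FormalMultilinearSeries.coeff p n) this
  simpa using h2

open UpperHalfPlane EisensteinSeries in
lemma E2_S (τ : ℍ) : E2 (ModularGroup.S • τ) = τ ^ 2 * E2 τ - 6 * Complex.I * τ / Real.pi := by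
  have h := congrFun (E2_slash_action ModularGroup.S) τ
  rw [ModularForm.SL_slash_apply, ModularGroup.denom_S] at h
  simp only [Pi.sub_apply, Pi.smul_apply, D2_S, riemannZeta_two] at h
  have hτ := ne_zero τ
  have hpi : (Real.pi : ℂ) ≠ 0 := by simp [Real.pi_ne_zero]
  simp only [_root_.zpow_neg, smul_eq_mul] at h
  have e : (τ : ℂ) ^ (2 : ℤ) = τ ^ 2 := by norm_cast
  rw [e] at h
  field_simp at h ⊢
  linear_combination h

open UpperHalfPlane EisensteinSeries in
/-- q-series of E2 -/
def e2ps : PowerSeries ℂ :=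
  PowerSeries.mk fun m => if m = 0 then 1 else -24 * (ArithmeticFunction.sigma 1 m : ℂ)

open UpperHalfPlane EisensteinSeries in
lemma E2_QS : QS E2 e2ps := by
  intro τ
  refine HasSum.congr_fun (hasSum_qExpansion_E2 (z := τ)) fun n => ?_
  simp [e2ps, ee]

lemma e2ps_FG : FGs e2ps := by
  refine ⟨Submodule.span ℤ {1}, Submodule.fg_span_singleton _, fun n => ?_⟩
  rw [e2ps, PowerSeries.coeff_mk, Submodule.mem_span_singleton]
  refine ⟨if n = 0 then 1 else -24 * (ArithmeticFunction.sigma 1 n : ℤ), ?_⟩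
  split_ifs <;> simp
end

section
def kap (m : ℤ) : ℂ := Real.pi ^ 2 * m / 3

lemma expsq (x z : ℂ) : HasSum (fun i : ℕ => (if Even i then x ^ (i / 2) / ((i / 2).factorial : ℂ) else 0) * z ^ i)
    (Complex.exp (x * z ^ 2)) := by
  have h := (NormedSpace.exp_series_hasSum_exp' (𝕂 := ℂ) (x * z ^ 2))
  rw [← Complex.exp_eq_exp_ℂ] at h
  have hi : Function.Injective (fun k : ℕ => 2 * k) := fun a b hab => by simpa using hab
  rw [← hi.hasSum_iff]
  · refine HasSum.congr_fun h fun k => ?_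
    simp only [Function.comp]
    rw [if_pos (by simp), Nat.mul_div_cancel_left _ (by norm_num), smul_eq_mul, mul_pow, ← pow_mul]
    rw [div_eq_inv_mul, mul_assoc]
  · intro i hi
    rw [if_neg, zero_mul]
    rintro ⟨k, hk⟩
    exact hi ⟨k, by simp [hk]; ring⟩

lemma cauchy_pow {a b : ℕ → ℂ} {z A B : ℂ} (ha : HasSum (fun n => a n * z ^ n) A)
    (hb : HasSum (fun n => b n * z ^ n) B) :
    HasSum (fun n => (∑ k ∈ Finset.range (n + 1), a k * b (n - k)) * z ^ n) (A * B) := by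
  have s1 := ha.summable.norm
  have s2 := hb.summable.norm
  have h := (summable_norm_sum_mul_antidiagonal_of_summable_norm s1 s2).of_norm.hasSum
  rw [← tsum_mul_tsum_eq_tsum_sum_antidiagonal_of_summable_norm s1 s2, ha.tsum_eq, hb.tsum_eq] at h
  refine HasSum.congr_fun h fun n => ?_
  rw [Finset.Nat.sum_antidiagonal_eq_sum_range_succ (fun i j => a i * z ^ i * (b j * z ^ j)), Finset.sum_mul]
  refine Finset.sum_congr rfl fun k hk => ?_
  have : k ≤ n := by simpa [Nat.lt_succ_iff] using hk
  calc _ = a k * b (n - k) * (z ^ (k + (n - k))) := by rw [Nat.add_sub_cancel' this]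
    _ = _ := by rw [pow_add]; ring

def aco (m : ℤ) (i : ℕ) (x : ℂ) : ℂ := if Even i then (kap m * x) ^ (i / 2) / ((i / 2).factorial : ℂ) else 0
def aps (m : ℤ) (i : ℕ) : PowerSeries ℂ :=
  if Even i then (kap m ^ (i / 2) / ((i / 2).factorial : ℂ)) • e2ps ^ (i / 2) else 0
def bfac (ν : ℕ) : ℂ := (2 * Real.pi * I) ^ ν / (ν.factorial : ℂ)
lemma bfac_ne (ν : ℕ) : bfac ν ≠ 0 := by
  have : (ν.factorial : ℂ) ≠ 0 := by exact_mod_cast ν.factorial_ne_zero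
  have hpi : (2 * Real.pi * I : ℂ) ≠ 0 := by simp [Real.pi_ne_zero]
  exact div_ne_zero (pow_ne_zero _ hpi) this
def Phf (m : ℤ) (c : ℤ → ℤ → ℂ) (ν : ℕ) : UpperHalfPlane → ℂ := ∑ k ∈ Finset.range (ν + 1),
  ((fun τ => aco m k (EisensteinSeries.E2 τ)) * (bfac (ν - k) • fun τ : UpperHalfPlane => Mf c (ν - k) τ))
def Phps (m : ℤ) (c : ℤ → ℤ → ℂ) (ν : ℕ) : PowerSeries ℂ := ∑ k ∈ Finset.range (ν + 1),
  (aps m k * (bfac (ν - k) • mom c (Polynomial.X ^ (ν - k))))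

lemma aps_QS (m : ℤ) (i : ℕ) : QS (fun τ => aco m i (EisensteinSeries.E2 τ)) (aps m i) := by
  unfold aco aps
  split_ifs
  · convert (E2_QS.pow (i / 2)).smul (kap m ^ (i / 2) / ((i / 2).factorial : ℂ)) using 1
    funext τ
    simp only [Pi.smul_apply, Pi.pow_apply, smul_eq_mul]
    rw [mul_pow]; ring
  · exact QS.zero

lemma aps_FG (m : ℤ) (i : ℕ) : FGs (aps m i) := by
  unfold aps
  split_ifs
  · exact (e2ps_FG.pow _).smul _
  · exact FGs.zero

lemma aps_zero (m : ℤ) : aps m 0 = 1 := by simp [aps]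

lemma Ph_QS {m : ℤ} {c} (h : IsX m c) (hm : 0 < m) (ν : ℕ) : QS (Phf m c ν) (Phps m c ν) := by
  refine QS.sum _ _ _ fun k _ => ?_
  exact (aps_QS m k).mul ((mom_QS h hm _).smul _)

lemma Ph_sum {m : ℤ} {c} (h : IsX m c) (τ : UpperHalfPlane) (z : ℂ) :
    HasSum (fun ν => Phf m c ν τ * z ^ ν)
      (Complex.exp (kap m * EisensteinSeries.E2 τ * z ^ 2) * phi c τ z) := by
  refine HasSum.congr_fun (cauchy_pow (expsq (kap m * EisensteinSeries.E2 τ) z) (zexp h τ z τ.im_pos)) fun ν => ?_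
  simp only [Phf, Finset.sum_apply, Pi.mul_apply, Pi.smul_apply, smul_eq_mul, aco, bfac]

lemma Ph_S {m : ℤ} {c} (h : IsX m c) (ν : ℕ) (τ : UpperHalfPlane) :
    Phf m c ν (ModularGroup.S • τ) = (τ : ℂ) ^ ((ν + 1 : ℕ) : ℤ) * Phf m c ν τ := by
  have hτ : (τ : ℂ) ≠ 0 := UpperHalfPlane.ne_zero τ
  have hpi : (Real.pi : ℂ) ≠ 0 := by simp [Real.pi_ne_zero]
  have hS : ((ModularGroup.S • τ : UpperHalfPlane) : ℂ) = -1 / τ := by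
    rw [UpperHalfPlane.modular_S_smul]; simp [neg_div, inv_neg]
  have key := pser_unique (f := fun z => Complex.exp (kap m * EisensteinSeries.E2 τ * z ^ 2) * phi c τ z)
    (a := fun ν => Phf m c ν τ) (b := fun ν => (τ : ℂ)⁻¹ * (τ : ℂ)⁻¹ ^ ν * Phf m c ν (ModularGroup.S • τ))
    (fun z => Ph_sum h τ z) (fun z => by
      have h1 := (Ph_sum h (ModularGroup.S • τ) (z / τ)).mul_left ((τ : ℂ)⁻¹)
      rw [hS, h.inv τ z τ.im_pos, E2_S] at h1
      convert (HasSum.congr_fun h1 (g := fun ν => (τ : ℂ)⁻¹ * (τ : ℂ)⁻¹ ^ ν * Phf m c ν (ModularGroup.S • τ) * z ^ ν) fun ν => ?_) using 1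
      · rw [show (τ : ℂ)⁻¹ * (Complex.exp (kap m * (τ ^ 2 * EisensteinSeries.E2 τ - 6 * I * τ / Real.pi) * (z / τ) ^ 2) *
          (τ * ee (m * z ^ 2 / τ) * phi c τ z)) = (Complex.exp (kap m * (τ ^ 2 * EisensteinSeries.E2 τ - 6 * I * τ / Real.pi) * (z / τ) ^ 2) * ee (m * z ^ 2 / τ)) * phi c τ z by
            field_simp]
        rw [ee, ← Complex.exp_add]
        congr 2
        rw [kap]
        field_simp
        ring
      · rw [div_eq_mul_inv, mul_pow]; ring)
  have := congrFun key ν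
  rw [this, zpow_natCast, inv_pow]
  field_simp
  ring

open UpperHalfPlane MatrixGroups in
lemma Ph_form {m : ℤ} {c} (h : IsX m c) (hm : 0 < m) (ν : ℕ) :
    ∃ g : ModularForm 𝒮ℒ ((ν + 1 : ℕ) : ℤ),
      qExpansion 1 g = Phps m c ν :=
  (Ph_QS h hm ν).form _ (Ph_S h ν)

lemma Phps_succ (m : ℤ) (c : ℤ → ℤ → ℂ) (ν : ℕ) : Phps m c ν = (∑ k ∈ Finset.range ν,
  (aps m (k + 1) * (bfac (ν - (k + 1)) • mom c (Polynomial.X ^ (ν - (k + 1)))))) + bfac ν • mom c (Polynomial.X ^ ν) := by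
  rw [Phps, Finset.sum_range_succ', aps_zero, one_mul, Nat.sub_zero]

lemma FGs.sum {ι : Type*} (s : Finset ι) (a : ι → PowerSeries ℂ) (h : ∀ i ∈ s, FGs (a i)) : FGs (∑ i ∈ s, a i) :=
  Finset.sum_induction a FGs (fun _ _ => FGs.add) FGs.zero h

lemma mom_FG {m : ℤ} {c} (h : IsX m c) (hm : 0 < m) (ν : ℕ) : FGs (mom c (Polynomial.X ^ ν)) := by
  induction ν using Nat.strong_induction_on with
  | _ ν ih =>
  obtain ⟨g, hg⟩ := Ph_form h hm ν
  have h1 := FGs_lvl g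
  rw [hg, Phps_succ] at h1
  have h2 : FGs (∑ k ∈ Finset.range ν,
    (aps m (k + 1) * (bfac (ν - (k + 1)) • mom c (Polynomial.X ^ (ν - (k + 1)))))) := by
    refine FGs.sum _ _ fun k hk => (aps_FG _ _).mul ((ih _ ?_).smul _)
    have := Finset.mem_range.mp hk
    omega
  have h3 := (h1.sub h2).smul (bfac ν)⁻¹
  rwa [add_sub_cancel_left, smul_smul, inv_mul_cancel₀ (bfac_ne ν), one_smul] at h3

lemma mom_vanish {m : ℤ} {c} (h : IsX m c) (hm : 0 < m) (K : ℕ) (hc : ∀ n r : ℤ, n ≤ K → c n r = 0) (ν : ℕ)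
    (hν : ν < 12 * K) : mom c (Polynomial.X ^ ν) = 0 := by
  induction ν using Nat.strong_induction_on with
  | _ ν ih =>
  obtain ⟨g, hg⟩ := Ph_form h hm ν
  have h2 : (∑ k ∈ Finset.range ν,
    (aps m (k + 1) * (bfac (ν - (k + 1)) • mom c (Polynomial.X ^ (ν - (k + 1)))))) = 0 := by
    refine Finset.sum_eq_zero fun k hk => ?_
    have := Finset.mem_range.mp hk
    rw [ih _ (by omega) (by omega), smul_zero, mul_zero]
  rw [Phps_succ, h2, zero_add] at hg
  have : g = 0 := by
    apply ModularForm.sturm_bound_levelOne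
    rw [hg]
    refine lt_of_lt_of_le (b := ((K + 1 : ℕ) : ℕ∞)) ?_ (PowerSeries.nat_le_order _ _ fun i hi => ?_)
    · rw [Int.toNat_natCast]
      norm_cast
      omega
    · rw [map_smul, mom, PowerSeries.coeff_mk]
      simp [hc i _ (by exact_mod_cast (Nat.lt_succ_iff.mp hi))]
  rw [this] at hg
  have h0 : bfac ν • mom c (Polynomial.X ^ ν) = 0 := by
    rw [← hg]
    exact UpperHalfPlane.qExpansion_zero ..
  exact (smul_eq_zero.mp h0).resolve_left (bfac_ne ν)
end

section
lemma mom_coeff {m : ℤ} {c} (h : IsX m c) (Q : Polynomial ℂ) (n : ℕ) :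
    (mom c Q).coeff n = ∑ r ∈ Finset.Icc (-(4 * n * m)) (4 * n * m), c n r * Q.eval (r : ℂ) := by
  rw [mom, PowerSeries.coeff_mk]
  refine finsum_eq_sum_of_support_subset _ fun r hr => ?_
  have := h.supp n r (left_ne_zero_of_mul hr)
  have h2 : |r| ≤ r ^ 2 := by
    rw [← sq_abs]
    rcases eq_or_lt_of_le (abs_nonneg r) with h0 | h0
    · rw [← h0]; norm_num
    · nlinarith
  rw [Finset.coe_Icc]
  exact Set.mem_Icc.mpr (abs_le.mp (by linarith))

lemma mom_poly {m : ℤ} {c} (h : IsX m c) (Q : Polynomial ℂ) :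
    mom c Q = ∑ i ∈ Finset.range (Q.natDegree + 1), Q.coeff i • mom c (Polynomial.X ^ i) := by
  ext n
  simp only [map_sum, map_smul, mom_coeff h, smul_eq_mul, Finset.mul_sum]
  rw [Finset.sum_comm]
  refine Finset.sum_congr rfl fun r _ => ?_
  rw [Polynomial.eval_eq_sum_range, Finset.mul_sum]
  refine Finset.sum_congr rfl fun i _ => ?_
  simp; ring

lemma exists_lag (m s : ℤ) : ∃ Q : Polynomial ℂ, Q.eval (s : ℂ) = 1 ∧
    (∀ r : ℤ, -m ≤ r → r ≤ m → r ≠ s → Q.eval (r : ℂ) = 0) ∧ ∀ r : ℤ, ∃ t : ℤ, Q.eval (r : ℂ) = t := by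
  set k := (s + m).toNat with hk
  set l := (m - s).toNat with hl
  have hkf : (k.factorial : ℂ) ≠ 0 := by exact_mod_cast k.factorial_ne_zero
  have hlf : (l.factorial : ℂ) ≠ 0 := by exact_mod_cast l.factorial_ne_zero
  let Q : Polynomial ℂ := Polynomial.C ((k.factorial : ℂ)⁻¹ * (l.factorial : ℂ)⁻¹) *
    ((∏ i ∈ Finset.range k, (Polynomial.X + Polynomial.C (((1 - s + i : ℤ)) : ℂ))) *
     ∏ i ∈ Finset.range l, (Polynomial.C (((s + 1 + i : ℤ)) : ℂ) - Polynomial.X))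
  have hQ : ∀ r : ℤ, Q.eval (r : ℂ) = ((k.factorial : ℂ)⁻¹ * (l.factorial : ℂ)⁻¹) *
     (((∏ i ∈ Finset.range k, ((r + 1 - s) + i) : ℤ) : ℂ) * ((∏ i ∈ Finset.range l, ((s + 1 - r) + i) : ℤ) : ℂ)) := by
    intro r
    simp only [Q, Polynomial.eval_mul, Polynomial.eval_C, Polynomial.eval_prod, Polynomial.eval_add,
      Polynomial.eval_sub, Polynomial.eval_X]
    push_cast
    congr 2
    · exact Finset.prod_congr rfl fun i _ => by ring
    · exact Finset.prod_congr rfl fun i _ => by ring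
  have hfac : ∀ k : ℕ, ∏ i ∈ Finset.range k, ((s + 1 - s) + i : ℤ) = k.factorial := by
    intro k
    rw [← Finset.prod_range_add_one_eq_factorial]
    push_cast
    exact Finset.prod_congr rfl fun i _ => by ring
  refine ⟨Q, ?_, ?_, ?_⟩
  · rw [hQ, hfac, hfac]
    push_cast
    field_simp
  · intro r h1 h2 h3
    rw [hQ]
    rcases lt_or_gt_of_ne h3 with h4 | h4
    · rw [Finset.prod_eq_zero (i := (s - 1 - r).toNat) (s := Finset.range k)]
      · simp
      · simp; omega
      · rw [Int.toNat_of_nonneg (by omega)]; ring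
    · rw [Finset.prod_eq_zero (i := (r - 1 - s).toNat) (s := Finset.range l)]
      · simp
      · simp; omega
      · rw [Int.toNat_of_nonneg (by omega)]; ring
  · intro r
    obtain ⟨a, ha⟩ := Nat.factorial_coe_dvd_prod k (r + 1 - s)
    obtain ⟨b, hb⟩ := Nat.factorial_coe_dvd_prod l (s + 1 - r)
    refine ⟨a * b, ?_⟩
    rw [hQ, ha, hb]
    push_cast
    field_simp

def lag (m s : ℤ) : Polynomial ℂ := (exists_lag m s).choose
lemma lag_spec (m s : ℤ) : (lag m s).eval (s : ℂ) = 1 ∧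
    (∀ r : ℤ, -m ≤ r → r ≤ m → r ≠ s → (lag m s).eval (r : ℂ) = 0) ∧
    ∀ r : ℤ, ∃ t : ℤ, (lag m s).eval (r : ℂ) = t := (exists_lag m s).choose_spec

lemma IsX.nonpos {m : ℤ} {c} (h : IsX m c) (hm : 0 < m) {n : ℤ} (hn : n ≤ 0) (r : ℤ) : c n r = 0 := by
  by_contra h0
  have := h.supp n r h0
  nlinarith [sq_nonneg r]

lemma vals_mem {m : ℤ} {c} (h : IsX m c) (hm : 0 < m) (M : Submodule ℤ ℂ)
    (hM : ∀ s ∈ Finset.Icc (-m) m, ∀ n, (mom c (lag m s)).coeff n ∈ M) (n r : ℤ) : c n r ∈ M := by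
  have key : ∀ n : ℕ, ∀ r : ℤ, c n r ∈ M := by
    intro n
    induction n using Nat.strong_induction_on with
    | _ n ih =>
    have big : ∀ r : ℤ, ¬ (-m ≤ r ∧ r ≤ m) → c n r ∈ M := by
      intro r hr
      have hs := h.shiftN (-((r + m) / (2 * m))) n r
      set l := -((r + m) / (2 * m)) with hl
      have e1 : r + 2 * m * l = (r + m) % (2 * m) - m := by
        rw [hl]; have := Int.mul_ediv_add_emod (r + m) (2 * m); linarith
      have b1 := Int.emod_nonneg (r + m) (show 2 * m ≠ 0 by omega)
      have b2 := Int.emod_lt_of_pos (r + m) (show 0 < 2 * m by omega)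
      rw [← hs]
      have hD : 4 * m * (n + r * l + m * l ^ 2) - (r + 2 * m * l) ^ 2 = 4 * m * n - r ^ 2 := by ring
      have hlt : n + r * l + m * l ^ 2 < n := by
        have : (r + 2 * m * l) ^ 2 < r ^ 2 := by
          rw [sq_lt_sq]
          have a1 : |r + 2 * m * l| ≤ m := abs_le.mpr (by constructor <;> linarith)
          have a2 : m < |r| := by rw [lt_abs]; by_contra hh; push Not at hh; exact hr (by omega)
          linarith
        nlinarith
      rcases le_or_gt (n + r * l + m * l ^ 2) 0 with h0 | h0
      · rw [h.nonpos hm h0]; exact M.zero_mem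
      · have := ih (n + r * l + m * l ^ 2).toNat (by omega) (r + 2 * m * l)
        rwa [Int.toNat_of_nonneg h0.le] at this
    intro r
    by_cases hr : -m ≤ r ∧ r ≤ m
    · by_cases hin : r ∈ Finset.Icc (-(4 * n * m)) (4 * n * m)
      · have h1 := hM r (Finset.mem_Icc.mpr hr) n
        rw [mom_coeff h, ← Finset.add_sum_erase _ _ hin, (lag_spec m r).1, mul_one] at h1
        refine (Submodule.add_mem_iff_left M ?_).mp h1
        refine M.sum_mem fun s hs => ?_
        by_cases hs2 : -m ≤ s ∧ s ≤ m
        · rw [(lag_spec m r).2.1 s hs2.1 hs2.2 (Finset.ne_of_mem_erase hs), mul_zero]; exact M.zero_mem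
        · obtain ⟨t, ht⟩ := (lag_spec m r).2.2 s
          rw [ht, mul_comm, ← zsmul_eq_mul]
          exact M.smul_mem _ (big s hs2)
      · have : c n r = 0 := by
          by_contra h0
          have h1 := h.supp n r h0
          have h2 : |r| ≤ r ^ 2 := by
            rw [← sq_abs]
            rcases eq_or_lt_of_le (abs_nonneg r) with h0 | h0
            · rw [← h0]; norm_num
            · nlinarith
          exact hin (Finset.mem_Icc.mpr (abs_le.mp (by linarith)))
        rw [this]; exact M.zero_mem
    · exact big r hr
  rcases le_or_gt n 0 with h0 | h0
  · rw [h.nonpos hm h0]; exact M.zero_mem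
  · have := key n.toNat r
    rwa [Int.toNat_of_nonneg h0.le] at this

lemma IsX.zero (m : ℤ) : IsX m (fun _ _ => 0) :=
  ⟨fun n r h => absurd rfl h, fun τ z _ => (summable_zero : Summable fun _ : ℤ × ℤ => (0 : ℂ)).congr fun t => by simp [tm],
    fun _ _ => rfl, fun τ z _ => by simp [phi, tm]⟩

lemma FG_vals {m : ℤ} {c} (h : IsX m c) (hm : 0 < m) : ∃ M : Submodule ℤ ℂ, M.FG ∧ ∀ n r, c n r ∈ M := by
  have h1 : ∀ s, FGs (mom c (lag m s)) := by
    intro s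
    rw [mom_poly h]
    exact FGs.sum _ _ fun i _ => (mom_FG h hm i).smul _
  choose M hM1 hM2 using h1
  refine ⟨⨆ s ∈ Finset.Icc (-m) m, M s, Submodule.fg_biSup _ _ fun s _ => hM1 s, fun n r => ?_⟩
  refine vals_mem h hm _ (fun s hs n => ?_) n r
  exact (le_iSup₂_of_le s hs le_rfl : M s ≤ _) (hM2 s n)

lemma vanish_of {m : ℤ} (hm : 0 < m) : ∃ K : ℕ, ∀ c, IsX m c → (∀ n r : ℤ, n ≤ K → c n r = 0) → ∀ n r, c n r = 0 := by
  refine ⟨(∑ s ∈ Finset.Icc (-m) m, (lag m s).natDegree) + 1, fun c h hc n r => ?_⟩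
  have := vals_mem h hm ⊥ (fun s hs n => ?_) n r
  · simpa using this
  · rw [mom_poly h, Finset.sum_eq_zero]
    · simp
    · intro i hi
      rw [mom_vanish h hm _ hc, smul_zero]
      have h1 := Finset.single_le_sum (f := fun s => (lag m s).natDegree) (fun _ _ => Nat.zero_le _) hs
      have h2 := Finset.mem_range.mp hi
      omega

def LM (m : ℤ) (M : Submodule ℤ ℂ) : Submodule ℤ (ℤ → ℤ → ℂ) where
  carrier := {c | IsX m c ∧ ∀ n r, c n r ∈ M}
  add_mem' {a b} ha hb := ⟨ha.1.add hb.1, fun n r => M.add_mem (ha.2 n r) (hb.2 n r)⟩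
  zero_mem' := ⟨IsX.zero m, fun _ _ => M.zero_mem⟩
  smul_mem' a c hc := ⟨by
    have := hc.1.smul (a : ℂ)
    convert this using 3
    simp, fun n r => M.smul_mem a (hc.2 n r)⟩

lemma LM_fin {m : ℤ} (hm : 0 < m) (M : Submodule ℤ ℂ) (hM : M.FG) : Module.Finite ℤ (LM m M) := by
  obtain ⟨K, hK⟩ := vanish_of hm
  have : Module.Finite ℤ M := Module.Finite.iff_fg.mpr hM
  let S := Finset.Icc (0 : ℤ) K ×ˢ Finset.Icc (-(4 * K * m)) (4 * K * m)
  let f : LM m M →ₗ[ℤ] (S → M) :=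
    { toFun := fun v s => ⟨v.1 s.1.1 s.1.2, v.2.2 _ _⟩
      map_add' := fun _ _ => rfl
      map_smul' := fun _ _ => rfl }
  refine Module.Finite.of_injective f ?_
  rw [← LinearMap.ker_eq_bot, LinearMap.ker_eq_bot']
  intro v hv
  apply Subtype.ext
  funext n r
  refine hK v.1 v.2.1 (fun n r hn => ?_) n r
  rcases le_or_gt n 0 with h0 | h0
  · exact v.2.1.nonpos hm h0 r
  by_contra hne
  have h1 := v.2.1.supp n r hne
  have h2 : |r| ≤ r ^ 2 := by
    rw [← sq_abs]
    rcases eq_or_lt_of_le (abs_nonneg r) with h0 | h0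
    · rw [← h0]; norm_num
    · nlinarith
  have h3 : 4 * n * m ≤ 4 * K * m := by nlinarith
  have hin : (n, r) ∈ S := by
    simp only [S, Finset.mem_product, Finset.mem_Icc]
    exact ⟨⟨h0.le, hn⟩, abs_le.mp (by linarith)⟩
  have h4 := congrFun hv ⟨(n, r), hin⟩
  exact hne (congrArg Subtype.val h4)

lemma Nop_add (p : ℕ) [NeZero p] (m : ℤ) (a b : ℤ → ℤ → ℂ) : Nop p m (a + b) = Nop p m a + Nop p m b := by
  funext n r
  simp only [Nop, Wop, Pi.add_apply]
  have hV : ∀ n r, Vop p (a + b) n r = Vop p a n r + Vop p b n r := by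
    intro n r; simp only [Vop, Pi.add_apply]; split_ifs <;> ring
  have hw : ∀ l, wterm p m (Vop p (a + b)) n r l = wterm p m (Vop p a) n r l + wterm p m (Vop p b) n r l := by
    intro l; simp only [wterm]; split_ifs <;> simp [hV]
  simp only [hV, hw, Finset.sum_add_distrib]
  ring

lemma Nop_mem {p : ℕ} [NeZero p] {m : ℤ} {M : Submodule ℤ ℂ} {c : ℤ → ℤ → ℂ} (h : ∀ n r, c n r ∈ M) (n r : ℤ) :
    Nop p m c n r ∈ M := by
  have hV : ∀ n r, Vop p c n r ∈ M := by
    intro n r; simp only [Vop]; split_ifs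
    · exact M.add_mem (h _ _) (h _ _)
    · exact M.add_mem (h _ _) M.zero_mem
  simp only [Nop, Wop]
  refine M.add_mem ?_ (M.sum_mem fun l _ => ?_)
  · rw [← nsmul_eq_mul]; exact M.nsmul_mem (hV _ _) _
  · simp only [wterm]; split_ifs
    · exact hV _ _
    · exact M.zero_mem

/-- N - (p+1) on the lattice -/
def NL (p : ℕ) [Fact p.Prime] (m : ℤ) (M : Submodule ℤ ℂ) : LM m M →ₗ[ℤ] LM m M :=
  (AddMonoidHom.mk' (fun v : LM m M => (⟨Nop p m v.1, v.2.1.N, fun n r => Nop_mem v.2.2 n r⟩ : LM m M) - ((p + 1 : ℤ)) • v)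
    (fun a b => by
      rw [smul_add]
      have : (⟨Nop p m (a + b).1, (a + b).2.1.N, fun n r => Nop_mem (a + b).2.2 n r⟩ : LM m M) =
        ⟨Nop p m a.1, a.2.1.N, fun n r => Nop_mem a.2.2 n r⟩ + ⟨Nop p m b.1, b.2.1.N, fun n r => Nop_mem b.2.2 n r⟩ :=
        Subtype.ext (Nop_add p m a.1 b.1)
      rw [this]; abel)).toIntLinearMap

theorem X_ext {m : ℤ} {c} (h : IsX m c) (hm : 0 < m) (p : ℕ) [Fact p.Prime] (n0 r0 : ℤ)
    (hrec : ∀ v, IsX m v → ∀ k : ℕ, Nop p m v (p ^ (2 * k) * n0) (p ^ k * r0) =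
      p * v (p ^ (2 * (k + 1)) * n0) (p ^ (k + 1) * r0) + (p + 1) * v (p ^ (2 * k) * n0) (p ^ k * r0) +
      if k = 0 then 0 else v (p ^ (2 * (k - 1)) * n0) (p ^ (k - 1) * r0)) (k : ℕ) :
    c (p ^ (2 * k) * n0) (p ^ k * r0) = 0 := by
  obtain ⟨M, hM, hc⟩ := FG_vals h hm
  have := LM_fin hm M hM
  have : Module.Finite ℤ M := Module.Finite.iff_fg.mpr hM
  obtain ⟨P, hP, hP0⟩ := LinearMap.exists_monic_and_aeval_eq_zero ℤ (NL p m M)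
  let R : LM m M →ₗ[ℤ] (ℕ → M) :=
    { toFun := fun v k => ⟨v.1 (p ^ (2 * k) * n0) (p ^ k * r0), v.2.2 _ _⟩
      map_add' := fun _ _ => rfl
      map_smul' := fun _ _ => rfl }
  have hR : ∀ v, R (NL p m M v) = triOp p M (R v) := by
    intro v
    funext k
    apply Subtype.ext
    have h1 := hrec v.1 v.2.1 k
    have e1 : ((R (NL p m M v)) k : ℂ) = Nop p m v.1 (p ^ (2 * k) * n0) (p ^ k * r0) -
      (p + 1 : ℤ) • v.1 (p ^ (2 * k) * n0) (p ^ k * r0) := rfl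
    have e2 : ((triOp p M (R v)) k : ℂ) = ((p : ℤ) • R v (k + 1) + (if k = 0 then 0 else R v (k - 1)) : M) := rfl
    rw [e1, e2, h1]
    rcases eq_or_ne k 0 with hk | hk
    · subst hk; simp [R]
    · simp [hk, R]; ring
  have h2 := aeval_intertwine (NL p m M) (triOp p M) R hR P ⟨c, h, hc⟩
  rw [hP0] at h2
  have h3 := triOp_zero p P hP (R ⟨c, h, hc⟩) (by rw [← h2]; simp)
  have h4 := congrArg Subtype.val (congrFun h3 k)
  exact h4
end

section
def Rb (p : ℕ) (D : ℤ) : Prop :=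
  (p = 2 ∧ (D % 4 = 1 ∨ D % 4 = 2)) ∨ (p ≠ 2 ∧ (p : ℤ) ∣ D ∧ ¬ (p : ℤ) ^ 2 ∣ D)
def Ram (p : ℕ) (D : ℤ) : Prop := ∃ k : ℕ, ∃ D0 : ℤ, D = p ^ (2 * k) * D0 ∧ Rb p D0

lemma Ram.mul {p : ℕ} {D : ℤ} (h : Ram p D) (a : ℕ) : Ram p (p ^ (2 * a) * D) := by
  obtain ⟨k, D0, h1, h2⟩ := h
  exact ⟨a + k, D0, by rw [h1]; ring, h2⟩

lemma Ram.div {p : ℕ} (hp : p.Prime) {D : ℤ} (h : Ram p (p ^ 2 * D)) : Ram p D := by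
  obtain ⟨k, D0, h1, h2⟩ := h
  have hp0 : (p : ℤ) ^ 2 ≠ 0 := pow_ne_zero _ (by exact_mod_cast hp.ne_zero)
  rcases k with _ | k
  · exfalso
    simp at h1
    rcases h2 with ⟨rfl, h2⟩ | ⟨_, _, h2⟩
    · push_cast at h1; omega
    · exact h2 ⟨D, h1.symm⟩
  · refine ⟨k, D0, mul_left_cancel₀ hp0 ?_, h2⟩
    rw [h1]; ring

lemma Ram.div_pow {p : ℕ} (hp : p.Prime) {D : ℤ} (a : ℕ) (h : Ram p (p ^ (2 * a) * D)) : Ram p D := by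
  induction a with
  | zero => simpa using h
  | succ a ih => exact ih (Ram.div hp (by convert h using 1; ring))

lemma dec2 : ∀ l x : ZMod 2, x + 0 * l + 1 * l ^ 2 = 0 ↔ l = x := by decide

lemma ram_unique {p : ℕ} [Fact p.Prime] {m n r : ℤ} (hm : ¬ (p : ℤ) ∣ m) (h : Ram p (4 * n * m - r ^ 2)) :
    ∃ l0 : ZMod p, ∀ l : ZMod p, (p : ℤ) ∣ nl m n r l.val ↔ l = l0 := by
  have hc : ∀ l : ZMod p, (p : ℤ) ∣ nl m n r l.val ↔ (n + r * l + m * l ^ 2 : ZMod p) = 0 := by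
    intro l
    rw [← ZMod.intCast_zmod_eq_zero_iff_dvd, nl]
    push_cast
    rw [ZMod.natCast_zmod_val]
  simp only [hc]
  have hm0 : (m : ZMod p) ≠ 0 := by rwa [Ne, ZMod.intCast_zmod_eq_zero_iff_dvd]
  by_cases h2 : p = 2
  · subst h2
    have hm1 : m % 2 = 1 := by push_cast at hm; omega
    have hr : r % 2 = 0 := by
      obtain ⟨k, D0, h1, h3⟩ := h
      rcases k with _ | k
      · simp [Rb] at h3 h1
        exfalso
        have h4 : r ^ 2 % 4 = 0 ∨ r ^ 2 % 4 = 1 := by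
          rcases Int.even_or_odd' r with ⟨t, rfl | rfl⟩
          · left; ring_nf; omega
          · right; ring_nf; omega
        rw [mul_assoc] at h1
        omega
      · have : (2 : ℤ) ∣ r ^ 2 := by
          have e : r ^ 2 = 2 * (2 * n * m - 2 ^ (2 * k + 1) * D0) := by
            push_cast at h1
            have : (2 : ℤ) ^ (2 * (k + 1)) = 2 * 2 ^ (2 * k + 1) := by ring
            rw [this] at h1
            linarith
          exact ⟨_, e⟩
        have := Int.prime_two.dvd_of_dvd_pow this
        omega
    have er : (r : ZMod 2) = 0 := by
      rw [ZMod.intCast_zmod_eq_zero_iff_dvd]; push_cast; omega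
    have em : (m : ZMod 2) = 1 := by
      have : ((m - 1 : ℤ) : ZMod 2) = 0 := by
        rw [ZMod.intCast_zmod_eq_zero_iff_dvd]; push_cast; omega
      push_cast at this
      exact sub_eq_zero.mp this
    refine ⟨n, fun l => ?_⟩
    rw [er, em]
    clear hc hm0
    exact dec2 l n
  · have hD : ((4 * n * m - r ^ 2 : ℤ) : ZMod p) = 0 := by
      obtain ⟨k, D0, h1, h3⟩ := h
      rw [ZMod.intCast_zmod_eq_zero_iff_dvd, h1]
      rcases h3 with ⟨h3, _⟩ | ⟨_, h3, _⟩
      · exact absurd h3 h2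
      · exact Dvd.dvd.mul_left h3 _
    push_cast at hD
    have h20 : (2 : ZMod p) ≠ 0 := by
      intro h0
      have : ((2 : ℕ) : ZMod p) = 0 := by exact_mod_cast h0
      rw [ZMod.natCast_eq_zero_iff] at this
      exact h2 ((Nat.prime_dvd_prime_iff_eq Fact.out Nat.prime_two).mp this)
    refine ⟨-r / (2 * m), fun l => ?_⟩
    have e : (4 * m : ZMod p) * (n + r * l + m * l ^ 2) = (r + 2 * m * l) ^ 2 := by
      linear_combination hD
    have h4 : (4 * m : ZMod p) ≠ 0 := by
      rw [show (4 : ZMod p) = 2 * 2 by norm_num]; exact mul_ne_zero (mul_ne_zero h20 h20) hm0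
    rw [← mul_right_inj' h4, mul_zero, e, sq_eq_zero_iff, eq_div_iff (mul_ne_zero h20 hm0)]
    constructor
    · intro h; linear_combination h
    · intro h; linear_combination h

theorem thmA {p : ℕ} [Fact p.Prime] {m : ℤ} (hm0 : 0 < m) (hm : ¬ (p : ℤ) ∣ m) {c} (h : IsX m c) (n r : ℤ)
    (hR : Ram p (4 * n * m - r ^ 2)) (k : ℕ) : c (p ^ (2 * k) * n) (p ^ k * r) = 0 := by
  have hp : p.Prime := Fact.out
  have hp0 : (1 : ℤ) < p := by exact_mod_cast hp.one_lt
  have key : ∀ N : ℕ, ∀ n r : ℤ, 4 * n * m - r ^ 2 < N → Ram p (4 * n * m - r ^ 2) →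
      ∀ k : ℕ, c (p ^ (2 * k) * n) (p ^ k * r) = 0 := by
    intro N
    induction N with
    | zero =>
      intro n r hN _ k
      by_contra h0
      have h1 := h.supp _ _ h0
      have : (0 : ℤ) < p ^ (2 * k) := by positivity
      have e : (p : ℤ) ^ (2 * k) = (p ^ k) ^ 2 := by rw [← pow_mul]; ring_nf
      have : 0 < (p : ℤ) ^ (2 * k) * (4 * n * m - r ^ 2) := by
        rw [mul_sub]; nth_rewrite 2 [e]; nlinarith
      have := pos_of_mul_pos_right this (by positivity)
      push_cast at hN
      linarith
    | succ N ih =>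
      intro n r hN hR k
      obtain ⟨l0, hl0⟩ := ram_unique hm hR
      have hD : 4 * nl m n r l0.val * m - (rl m r l0.val) ^ 2 = 4 * n * m - r ^ 2 := by
        simp only [nl, rl]; ring
      by_cases hpar : (p : ℤ) ^ 2 ∣ nl m n r l0.val ∧ (p : ℤ) ∣ rl m r l0.val
      · obtain ⟨⟨n1, hn1⟩, ⟨r1, hr1⟩⟩ := hpar
        have e1 : c (p ^ (2 * k) * n) (p ^ k * r) = c (p ^ (2 * (k + 1)) * n1) (p ^ (k + 1) * r1) := by
          rw [← h.shiftN (p ^ k * l0.val)]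
          simp only [nl, rl] at hn1 hr1
          congr 1
          · rw [show (p : ℤ) ^ (2 * (k + 1)) * n1 = p ^ (2 * k) * (p ^ 2 * n1) by ring, ← hn1]; ring
          · rw [show (p : ℤ) ^ (k + 1) * r1 = p ^ k * (p * r1) by ring, ← hr1]; ring
        rw [hn1, hr1] at hD
        have hD1 : (p : ℤ) ^ 2 * (4 * n1 * m - r1 ^ 2) = 4 * n * m - r ^ 2 := by rw [← hD]; ring
        rw [e1]
        rcases lt_or_ge (4 * n1 * m - r1 ^ 2) (N : ℤ) with h5 | h5
        · refine ih n1 r1 h5 (Ram.div hp (by rw [hD1]; exact hR)) (k + 1)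
        · rcases eq_or_lt_of_le (show (0 : ℤ) ≤ 4 * n1 * m - r1 ^ 2 by omega) with h6 | h6
          · by_contra h0
            have h1 := h.supp _ _ h0
            have e : (p : ℤ) ^ (2 * (k + 1)) = (p ^ (k + 1)) ^ 2 := by rw [← pow_mul]; ring_nf
            rw [e] at h1
            nlinarith
          · exfalso
            push_cast at hN
            have h7 : 4 * (4 * n1 * m - r1 ^ 2) ≤ p ^ 2 * (4 * n1 * m - r1 ^ 2) :=
              mul_le_mul_of_nonneg_right (by nlinarith) h6.le
            linarith
      · refine X_ext h hm0 p n r (fun v hv k => ?_) k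
        rcases k with _ | k
        · rw [N_formula hv _ _ l0 (by simpa using hl0)]
          simp only [mul_zero, pow_zero, one_mul, if_true, zero_add, mul_one, pow_one]
          rw [if_neg hpar]
        · have hR2 : Ram p (4 * (p ^ (2 * (k + 1)) * n) * m - (p ^ (k + 1) * r) ^ 2) := by
            convert hR.mul (k + 1) using 1; ring
          obtain ⟨l1, hl1⟩ := ram_unique hm hR2
          have : l1 = 0 := ((hl1 0).mp (by
            simp only [nl, ZMod.val_zero, Nat.cast_zero]
            exact ⟨p ^ (2 * k + 1) * n, by ring⟩)).symm
          subst this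
          rw [N_formula hv _ _ 0 hl1]
          simp only [nl, rl, ZMod.val_zero, Nat.cast_zero, mul_zero, add_zero, zero_pow (two_ne_zero)]
          have hp2 : (p : ℤ) ^ 2 ≠ 0 := by positivity
          have hp1 : (p : ℤ) ≠ 0 := by positivity
          have e1 : (p : ℤ) ^ (2 * (k + 1)) * n = p ^ 2 * (p ^ (2 * k) * n) := by ring
          have e2 : (p : ℤ) ^ (k + 1) * r = p * (p ^ k * r) := by ring
          rw [if_pos ⟨⟨_, e1⟩, ⟨_, e2⟩⟩, if_neg (by omega)]
          have d1 : (p : ℤ) ^ (2 * (k + 1)) * n / p ^ 2 = p ^ (2 * k) * n := by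
            rw [e1, Int.mul_ediv_cancel_left _ hp2]
          have d2 : (p : ℤ) ^ (k + 1) * r / p = p ^ k * r := by
            rw [e2, Int.mul_ediv_cancel_left _ hp1]
          rw [d1, d2, Nat.add_sub_cancel,
            show (p : ℤ) ^ 2 * (p ^ (2 * (k + 1)) * n) = p ^ (2 * (k + 1 + 1)) * n by ring,
            show (p : ℤ) * (p ^ (k + 1) * r) = p ^ (k + 1 + 1) * r by ring]
  exact key (4 * n * m - r ^ 2 + 1).toNat n r (by have := Int.self_le_toNat (4 * n * m - r ^ 2 + 1); linarith) hR k

theorem content {p : ℕ} [Fact p.Prime] (a : ℕ) : ∀ {m' : ℤ} {c : ℤ → ℤ → ℂ} (B : ℤ) (hm0 : 0 < m') (hm : ¬ (p : ℤ) ∣ m')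
    (h : IsX (p ^ a * m') c)
    (hB : ∀ n r, Ram p (4 * n * (p ^ a * m') - r ^ 2) → 4 * n * (p ^ a * m') - r ^ 2 < B → c n r = 0)
    (n' r' : ℤ) (hB2 : p ^ (2 * a) * (4 * n' * m' - r' ^ 2) = B) (hR : Ram p (4 * n' * m' - r' ^ 2)),
    c (p ^ a * n') (p ^ a * r') = 0 := by
  have hp : p.Prime := Fact.out
  have hp0 : (1 : ℤ) < p := by exact_mod_cast hp.one_lt
  induction a with
  | zero =>
    intro m' c B hm0 hm h hB n' r' hB2 hR
    simpa using thmA hm0 hm (by simpa using h) n' r' hR 0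
  | succ a ih =>
    intro m' c B hm0 hm h hB n' r' hB2 hR
    have h1 : IsX (p * (p ^ a * m')) c := by convert h using 1; ring
    have hM : ((p : ℤ) ^ (a + 1) * m') = p * (p ^ a * m') := by ring
    rw [hM] at hB
    set M := (p : ℤ) ^ a * m' with hMdef
    -- the side terms
    have side : ∀ n r : ℤ, Ram p (4 * n * M - r ^ 2) → (p : ℤ) ^ 2 * (4 * n * M - r ^ 2) ≤ B →
        ∑ l : ZMod p, wterm p M c n r l.val = 0 := by
      intro n r hR hle
      refine Finset.sum_eq_zero fun l _ => ?_
      rw [wterm]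
      split_ifs with hd
      · obtain ⟨t, ht⟩ := hd
        rw [ht, Int.mul_ediv_cancel_left _ (by positivity)]
        have e : 4 * t * (p * M) - (rl M r l.val) ^ 2 = 4 * n * M - r ^ 2 := by
          calc _ = 4 * (p * t) * M - (rl M r l.val) ^ 2 := by ring
            _ = _ := by rw [← ht]; simp only [nl, rl]; ring
        rcases le_or_gt (4 * n * M - r ^ 2) 0 with h0 | h0
        · by_contra hne
          have := h1.supp _ _ hne
          linarith
        · refine hB _ _ (by rw [e]; exact hR) ?_
          rw [e]
          have h7 : 4 * (4 * n * M - r ^ 2) ≤ p ^ 2 * (4 * n * M - r ^ 2) :=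
            mul_le_mul_of_nonneg_right (by nlinarith) h0.le
          linarith
      · rfl
    set B' := (p : ℤ) ^ (2 * a) * (4 * n' * m' - r' ^ 2) with hB'
    have hBB : B = p ^ 2 * B' := by rw [← hB2, hB']; ring
    have hD' : 4 * (p ^ a * n') * M - (p ^ a * r') ^ 2 = B' := by rw [hB', hMdef]; ring
    have hW := ih B' hm0 hm h1.W (fun n r hRn hlt => by
      rw [Wop, side n r hRn (by rw [hBB]; nlinarith), add_zero]
      have : c (p * n) (p * r) = 0 := by
        have e : 4 * (p * n) * (p * M) - (p * r) ^ 2 = p ^ 2 * (4 * n * M - r ^ 2) := by ring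
        refine hB _ _ ?_ ?_
        · rw [e]; simpa using hRn.mul 1
        · rw [e, hBB]; nlinarith
      rw [this, mul_zero]) n' r' rfl hR
    rw [Wop, side _ _ (by rw [hD']; exact hR.mul a) (by rw [hD', hBB]), add_zero] at hW
    have hpc : (p : ℂ) ≠ 0 := by exact_mod_cast hp.ne_zero
    have := (mul_eq_zero.mp hW).resolve_left hpc
    rw [show (p : ℤ) ^ (a + 1) * n' = p * (p ^ a * n') by ring,
      show (p : ℤ) ^ (a + 1) * r' = p * (p ^ a * r') by ring]
    exact this
end

section
lemma exists_ram {D : ℤ} (hD : 0 < D) : ∃ p : ℕ, p.Prime ∧ Ram p D := by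
  lift D to ℕ using hD.le
  have hD0 : D ≠ 0 := by rintro rfl; simp at hD
  obtain ⟨a, b, hab, hsq⟩ := Nat.sq_mul_squarefree D
  have hb : b ≠ 0 := by rintro rfl; simp at hab; omega
  by_cases h : ∃ p : ℕ, p.Prime ∧ p ≠ 2 ∧ p ∣ a
  · obtain ⟨p, hp, hp2, hpa⟩ := h
    obtain ⟨k, b', hb', hbk⟩ := Nat.exists_eq_pow_mul_and_not_dvd hb p hp.ne_one
    refine ⟨p, hp, k, b' ^ 2 * a, by rw [← hab, hbk]; push_cast; ring, Or.inr ⟨hp2, ?_, ?_⟩⟩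
    · exact Dvd.dvd.mul_left (by exact_mod_cast hpa) _
    · intro hd
      have hd : p ^ 2 ∣ b' ^ 2 * a := by exact_mod_cast hd
      have hcop : Nat.Coprime (p ^ 2) (b' ^ 2) := Nat.Coprime.pow _ _ ((Nat.Prime.coprime_iff_not_dvd hp).mpr hb')
      have := hcop.dvd_of_dvd_mul_left hd
      rw [sq] at this
      have := hsq p this
      exact hp.one_lt.ne' (Nat.isUnit_iff.mp this)
  · push Not at h
    obtain ⟨k, b', hb', hbk⟩ := Nat.exists_eq_pow_mul_and_not_dvd hb 2 (by norm_num)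
    refine ⟨2, Nat.prime_two, k, b' ^ 2 * a, by rw [← hab, hbk]; push_cast; ring, Or.inl ⟨rfl, ?_⟩⟩
    have ha : a = 1 ∨ a = 2 := by
      by_cases h1 : a = 1
      · exact Or.inl h1
      · right
        obtain ⟨q, hq, hqa⟩ := Nat.exists_prime_and_dvd h1
        have hq2 : q = 2 := by by_contra h3; exact h q hq h3 hqa
        subst hq2
        obtain ⟨a', rfl⟩ := hqa
        by_cases h4 : a' = 1
        · simp [h4]
        · obtain ⟨q, hq, hqa⟩ := Nat.exists_prime_and_dvd h4
          have hq2 : q = 2 := by by_contra h3; exact h q hq h3 (Dvd.dvd.mul_left hqa _)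
          subst hq2
          have := Nat.isUnit_iff.mp (hsq 2 (Nat.mul_dvd_mul_left 2 hqa))
          omega
    have hodd : b' % 2 = 1 := by omega
    have h1 : ((b' : ℤ) ^ 2) % 4 = 1 := by
      have : ∃ t : ℤ, (b' : ℤ) = 2 * t + 1 := ⟨(b' : ℤ) / 2, by omega⟩
      obtain ⟨t, ht⟩ := this
      rw [ht]; ring_nf; omega
    rcases ha with rfl | rfl
    · left; push_cast; omega
    · right; push_cast; omega

lemma sym_top (j : ℕ) (V : Matrix (Fin 2) (Fin 2) ℂ) (w : Fin (j + 1) → ℂ) :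
    symAct j V w (Fin.last j) = ∑ l : Fin (j + 1), V 1 0 ^ (j - (l : ℕ)) * V 1 1 ^ (l : ℕ) * w l := by
  rw [symAct]
  refine Finset.sum_congr rfl fun l _ => ?_
  congr 1
  rw [symCoeff]
  have h : ∀ a b : ℂ, (Polynomial.C a + Polynomial.C b * Polynomial.X).natDegree ≤ 1 := by
    intro a b
    rw [add_comm]
    exact Polynomial.natDegree_linear_le
  have hc : ∀ a b : ℂ, (Polynomial.C a + Polynomial.C b * Polynomial.X).coeff 1 = b := by
    intro a b; simp
  have e : ((Fin.last j : Fin (j + 1)) : ℕ) = (j - (l : ℕ)) * 1 + (l : ℕ) * 1 := by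
    have := l.isLt
    simp; omega
  rw [e, Polynomial.coeff_mul_add_eq_of_natDegree_le (Polynomial.natDegree_pow_le_of_le _ (h _ _))
    (Polynomial.natDegree_pow_le_of_le _ (h _ _)), Polynomial.coeff_pow_of_natDegree_le (h _ _),
    Polynomial.coeff_pow_of_natDegree_le (h _ _), hc, hc]

lemma poly_inf {j : ℕ} (w : Fin (j + 1) → ℂ) {f : ℕ → ℂ} (hf : Function.Injective f)
    (h : ∀ k, ∑ l : Fin (j + 1), f k ^ (l : ℕ) * w l = 0) : w = 0 := by
  let P : Polynomial ℂ := ∑ l : Fin (j + 1), Polynomial.monomial (l : ℕ) (w l)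
  have hP : P = 0 := by
    apply Polynomial.eq_zero_of_infinite_isRoot
    refine Set.Infinite.mono ?_ (Set.infinite_range_of_injective hf)
    rintro _ ⟨k, rfl⟩
    simp only [Set.mem_setOf_eq, Polynomial.IsRoot.def, P, Polynomial.eval_finset_sum, Polynomial.eval_monomial]
    rw [← h k]
    exact Finset.sum_congr rfl fun l _ => mul_comm _ _
  funext i
  have := congrArg (fun Q => Polynomial.coeff Q (i : ℕ)) hP
  simp only [P, Polynomial.finset_sum_coeff, Polynomial.coeff_monomial, Polynomial.coeff_zero] at this
  rw [Finset.sum_eq_single i] at this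
  · simpa using this
  · intro b _ hb
    rw [if_neg]
    exact fun h => hb (Fin.ext h)
  · simp

lemma p_prim {p : ℕ} (hp : p.Prime) : ∀ N : ℕ, ∀ n r m : ℤ, 0 < n → n < N → ∃ (a : ℕ) (n' r' m' : ℤ),
    n = p ^ a * n' ∧ r = p ^ a * r' ∧ m = p ^ a * m' ∧ ¬ ((p : ℤ) ∣ n' ∧ (p : ℤ) ∣ r' ∧ (p : ℤ) ∣ m') := by
  have hp0 : (1 : ℤ) < p := by exact_mod_cast hp.one_lt
  intro N
  induction N with
  | zero => intro n r m h1 h2; push_cast at h2; omega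
  | succ N ih =>
    intro n r m h1 h2
    by_cases h : (p : ℤ) ∣ n ∧ (p : ℤ) ∣ r ∧ (p : ℤ) ∣ m
    · obtain ⟨⟨n1, rfl⟩, ⟨r1, rfl⟩, ⟨m1, rfl⟩⟩ := h
      have hn1 : 0 < n1 := pos_of_mul_pos_right h1 (by omega)
      obtain ⟨a, n', r', m', e1, e2, e3, h4⟩ := ih n1 r1 m1 hn1 (by push_cast at h2; nlinarith)
      exact ⟨a + 1, n', r', m', by rw [e1]; ring, by rw [e2]; ring, by rw [e3]; ring, h4⟩
    · exact ⟨0, n, r, m, by simp, by simp, by simp, h⟩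

/-- the abstract end game -/
theorem endgame {j : ℕ} (A : ℤ → ℤ → ℤ → (Fin (j + 1) → ℂ))
    (H1 : ∀ m, 0 < m → IsX m (fun n r => A n r m (Fin.last j)))
    (H2 : ∀ a b c d : ℤ, a * d - b * c = 1 → ∀ n r m,
      A (n * a ^ 2 + r * a * b + m * b ^ 2) (2 * n * a * c + r * (a * d + b * c) + 2 * m * b * d)
        (n * c ^ 2 + r * c * d + m * d ^ 2) = symAct j !![(a : ℂ), b; c, d] (A n r m))
    (H3 : ∀ n r m, A n r m ≠ 0 → 0 < n ∧ 0 < m ∧ r ^ 2 < 4 * n * m) (n r m : ℤ) : A n r m = 0 := by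
  have main : ∀ (p : ℕ) [Fact p.Prime] (N : ℕ) (n r m : ℤ), 4 * n * m - r ^ 2 < N → Ram p (4 * n * m - r ^ 2) →
      A n r m = 0 := by
    intro p hpF N
    have hp : p.Prime := Fact.out
    have hpi : Prime (p : ℤ) := Nat.prime_iff_prime_int.mp hp
    have hp0 : (1 : ℤ) < p := by exact_mod_cast hp.one_lt
    induction N with
    | zero =>
      intro n r m h _
      by_contra h0
      have := H3 _ _ _ h0
      push_cast at h; linarith [this.2.2]
    | succ N ih =>
      intro n r m hN hR
      by_contra hne
      obtain ⟨hn, hm, hD⟩ := H3 _ _ _ hne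
      obtain ⟨a, n', r', m', en, er, em, hprim⟩ := p_prim hp (n + 1).toNat n r m hn (by omega)
      have hDD : 4 * n * m - r ^ 2 = p ^ (2 * a) * (4 * n' * m' - r' ^ 2) := by rw [en, er, em]; ring
      have hR' : Ram p (4 * n' * m' - r' ^ 2) := Ram.div_pow hp a (by rw [← hDD]; exact hR)
      have hpa : (0 : ℤ) < p ^ a := by positivity
      have hn' : 0 < n' := pos_of_mul_pos_right (by rw [← en]; exact hn) hpa.le
      have hm' : 0 < m' := pos_of_mul_pos_right (by rw [← em]; exact hm) hpa.le
      have hD' : 0 < 4 * n' * m' - r' ^ 2 :=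
        pos_of_mul_pos_right (by rw [← hDD]; linarith : 0 < (p : ℤ) ^ (2 * a) * (4 * n' * m' - r' ^ 2)) (by positivity)
      have step : ∀ x y c d : ℤ, x * d - y * c = 1 → ¬ (p : ℤ) ∣ n' * c ^ 2 + r' * c * d + m' * d ^ 2 →
          ∑ l : Fin (j + 1), (c : ℂ) ^ (j - (l : ℕ)) * (d : ℂ) ^ (l : ℕ) * A n r m l = 0 := by
        intro x y c d hdet hnd
        have h2 := congrFun (H2 x y c d hdet n r m) (Fin.last j)
        rw [sym_top] at h2
        simp only [Matrix.cons_val', Matrix.cons_val_zero, Matrix.cons_val_one, Matrix.of_apply, Matrix.cons_val_fin_one] at h2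
        rw [← h2]
        set m2 := n' * c ^ 2 + r' * c * d + m' * d ^ 2 with hm2
        have hm2pos : 0 < m2 := by
          have e : 4 * n' * m2 = (2 * n' * c + r' * d) ^ 2 + (4 * n' * m' - r' ^ 2) * d ^ 2 := by rw [hm2]; ring
          rcases eq_or_ne d 0 with h0 | h0
          · have hc : c ≠ 0 := by rintro rfl; simp [h0] at hdet
            have := sq_pos_of_ne_zero hc
            rw [hm2, h0]; simp; positivity
          · have := sq_pos_of_ne_zero h0
            have h3 : 0 < 4 * n' * m2 := by rw [e]; positivity
            exact pos_of_mul_pos_right h3 (by positivity)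
        have em2 : n * c ^ 2 + r * c * d + m * d ^ 2 = p ^ a * m2 := by rw [hm2, en, er, em]; ring
        have en2 : n * x ^ 2 + r * x * y + m * y ^ 2 = p ^ a * (n' * x ^ 2 + r' * x * y + m' * y ^ 2) := by rw [en, er, em]; ring
        have er2 : 2 * n * x * c + r * (x * d + y * c) + 2 * m * y * d =
          p ^ a * (2 * n' * x * c + r' * (x * d + y * c) + 2 * m' * y * d) := by rw [en, er, em]; ring
        rw [em2, en2, er2]
        have edisc : 4 * (n' * x ^ 2 + r' * x * y + m' * y ^ 2) * m2 - (2 * n' * x * c + r' * (x * d + y * c) + 2 * m' * y * d) ^ 2 =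
          4 * n' * m' - r' ^ 2 := by
          rw [hm2]
          calc _ = (4 * n' * m' - r' ^ 2) * (x * d - y * c) ^ 2 := by ring
            _ = _ := by rw [hdet]; ring
        refine content a (4 * n * m - r ^ 2) hm2pos hnd (H1 _ (by positivity)) (fun n1 r1 hR1 hlt => ?_) _ _ ?_ ?_
        · rw [ih n1 r1 _ (by push_cast at hN; linarith) hR1]; rfl
        · rw [edisc, hDD]
        · rw [edisc]; exact hR'
      have hpc : (p : ℂ) ≠ 0 := by exact_mod_cast hp.ne_zero
      by_cases h1 : (p : ℤ) ∣ n'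
      · have hinj : ∀ e : ℂ, Function.Injective (fun k : ℕ => (p * k + e : ℂ)) := by
          intro e k k' h
          simpa [hpc] using h
        have hx : ∃ e : ℕ, ∀ k : ℕ, ¬ (p : ℤ) ∣ n' * (p * k + e) ^ 2 + r' * (p * k + e) * 1 + m' * 1 ^ 2 := by
          by_cases h2 : (p : ℤ) ∣ m'
          · refine ⟨1, fun k hd => hprim ⟨h1, ?_, h2⟩⟩
            obtain ⟨s, hs⟩ := h1
            obtain ⟨t, ht⟩ := h2
            obtain ⟨u, hu⟩ := hd
            refine ⟨u - s * (p * k + 1) ^ 2 - t - r' * k, ?_⟩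
            rw [hs, ht] at hu; push_cast at hu
            linear_combination hu
          · refine ⟨0, fun k hd => h2 ?_⟩
            obtain ⟨u, hu⟩ := hd
            refine ⟨u - n' * p * k ^ 2 - r' * k, ?_⟩
            push_cast at hu
            linear_combination hu
        obtain ⟨e, he⟩ := hx
        have hz := poly_inf (fun l => A n r m (Fin.rev l)) (hinj e) (fun k => by
          rw [← step 1 0 (p * k + e) 1 (by ring) (he k), ← Equiv.sum_comp Fin.revPerm]
          refine Finset.sum_congr rfl fun l _ => ?_
          simp only [Fin.revPerm_apply, Fin.rev_rev, Fin.val_rev]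
          push_cast
          rw [one_pow, mul_one])
        apply hne
        funext l
        have := congrFun hz (Fin.rev l)
        simpa using this
      · apply hne
        refine poly_inf _ (f := fun k : ℕ => (p * k : ℂ)) (fun k k' h => by simpa [hpc] using h) (fun k => ?_)
        rw [← step 0 (-1) 1 (p * k) (by ring) (fun hd => h1 ?_)]
        · refine Finset.sum_congr rfl fun l _ => ?_
          push_cast; rw [one_pow, one_mul]
        · obtain ⟨u, hu⟩ := hd
          exact ⟨u - r' * k - m' * p * k ^ 2, by linear_combination hu⟩
  by_contra hne
  obtain ⟨hn, hm, hD⟩ := H3 _ _ _ hne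
  obtain ⟨p, hp, hR⟩ := exists_ram (D := 4 * n * m - r ^ 2) (by linarith)
  haveI := Fact.mk hp
  exact hne (main p (4 * n * m - r ^ 2 + 1).toNat n r m (by omega) hR)
end

section
section tor
open MeasureTheory UnitAddTorus

local instance : MeasureSpace UnitAddCircle := ⟨AddCircle.haarAddCircle⟩
local instance : Measure.IsAddHaarMeasure (volume : Measure UnitAddCircle) :=
  inferInstanceAs (Measure.IsAddHaarMeasure AddCircle.haarAddCircle)
local instance : IsProbabilityMeasure (volume : Measure UnitAddCircle) :=
  inferInstanceAs (IsProbabilityMeasure AddCircle.haarAddCircle)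

abbrev T3 := UnitAddTorus (Fin 3)

def rp (θ : T3) : Fin 3 → ℝ := fun i => (AddCircle.equivIco (1:ℝ) 0 (θ i) : ℝ)
def pj (x : Fin 3 → ℝ) : T3 := fun i => (x i : UnitAddCircle)
def cpt (w : Fin 3 → ℂ) (x : Fin 3 → ℝ) : Fin 3 → ℂ := w + fun i => (x i : ℂ)

lemma pj_rp (θ : T3) : pj (rp θ) = θ := by
  funext i
  exact AddCircle.coe_equivIco

lemma pj_quot : IsOpenQuotientMap pj :=
  IsOpenQuotientMap.piMap (fun _ => QuotientAddGroup.isOpenQuotientMap_mk)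

def Per (g : (Fin 3 → ℂ) → ℂ) : Prop := ∀ (w : Fin 3 → ℂ) (k : Fin 3 → ℤ), g (w + fun i => (k i : ℂ)) = g w

lemma Per.lift {g} (hg : Per g) (w : Fin 3 → ℂ) (x : Fin 3 → ℝ) : g (cpt w (rp (pj x))) = g (cpt w x) := by
  have h : ∀ i, ∃ k : ℤ, (k : ℝ) = rp (pj x) i - x i := by
    intro i
    have := congrFun (pj_rp (pj x)) i
    have h2 : (((rp (pj x) i - x i : ℝ)) : UnitAddCircle) = 0 := by
      rw [AddCircle.coe_sub, sub_eq_zero]; exact this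
    obtain ⟨k, hk⟩ := AddCircle.coe_eq_zero_iff (1:ℝ) |>.mp h2
    exact ⟨k, by simpa using hk⟩
  choose k hk using h
  rw [← hg (cpt w x) k]
  congr 1
  funext i
  have : ((k i : ℝ) : ℂ) = ((rp (pj x) i - x i : ℝ) : ℂ) := by rw [hk i]
  simp only [cpt, Pi.add_apply]
  push_cast at this
  rw [this]; ring

lemma Per.cont {g} (hg : Per g) (w : Fin 3 → ℂ) (hc : Continuous fun x => g (cpt w x)) :
    Continuous fun θ => g (cpt w (rp θ)) := by
  rw [← pj_quot.continuous_comp_iff]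
  convert hc using 1
  funext x
  exact hg.lift w x

/-- one-variable contour shift -/
lemma shift1 (u : ℂ → ℂ) (t : ℝ) (hd : DifferentiableOn ℂ u {s | s.im ∈ Set.uIcc 0 t}) (hp : ∀ s, u (s + 1) = u s) :
    ∫ x in (0:ℝ)..1, u x = ∫ x in (0:ℝ)..1, u (x + t * I) := by
  have h := Complex.integral_boundary_rect_eq_zero_of_differentiableOn u 0 (1 + t * I) (hd.mono (by
    intro s hs
    have := hs.2
    simpa using this))
  simp only [Complex.zero_re, Complex.zero_im, Complex.ofReal_zero, zero_mul, add_zero] at h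
  simp only [Complex.add_re, Complex.one_re, Complex.mul_re, Complex.ofReal_re, Complex.I_re, mul_zero, Complex.ofReal_im, Complex.I_im, Complex.add_im, Complex.one_im, Complex.mul_im, sub_self, add_zero, mul_one, zero_add, Complex.ofReal_one, Complex.ofReal_zero] at h
  have e : ∀ y : ℝ, u (1 + y * I) = u (y * I) := fun y => by rw [add_comm, hp]
  simp only [e, add_sub_cancel_right] at h
  exact sub_eq_zero.mp h

lemma im_cpt (w : Fin 3 → ℂ) (x : Fin 3 → ℝ) (i) : (cpt w x i).im = (w i).im := by simp [cpt]

def GG (h : (Fin 3 → ℂ) → ℂ) (w : Fin 3 → ℂ) : ℂ := ∫ θ : T3, h (cpt w (rp θ))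

def Tube (C : Set (Fin 3 → ℝ)) : Set (Fin 3 → ℂ) := {w | (fun i => (w i).im) ∈ C}

lemma cont_slice {C : Set (Fin 3 → ℝ)} {h : (Fin 3 → ℂ) → ℂ} (hd : DifferentiableOn ℂ h (Tube C)) {w} (hw : w ∈ Tube C) :
    Continuous fun x => h (cpt w x) := by
  refine hd.continuousOn.comp_continuous (by unfold cpt; fun_prop) (fun x => ?_)
  simp only [Tube, Set.mem_ofPred_eq, im_cpt]
  exact hw

lemma GG_real {h} (hp : Per h) (w : Fin 3 → ℂ) (x : Fin 3 → ℝ) : GG h (cpt w x) = GG h w := by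
  unfold GG
  rw [← integral_add_right_eq_self (fun θ => h (cpt w (rp θ))) (pj x)]
  congr 1
  funext θ
  conv_rhs => rw [← pj_rp θ]
  have e : pj (rp θ) + pj x = pj (rp θ + x) := by funext i; simp [pj]
  rw [e, hp.lift]
  congr 1
  funext i; simp [cpt]; ring

lemma GG_avg {C : Set (Fin 3 → ℝ)} {h : (Fin 3 → ℂ) → ℂ} (hd : DifferentiableOn ℂ h (Tube C)) (hp : Per h) {w} (hw : w ∈ Tube C) (k : Fin 3) :
    GG h w = ∫ θ : T3, ∫ s in (0:ℝ)..1, h (cpt w (rp θ) + Pi.single k (s : ℂ)) := by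
  have hc := hp.cont w (cont_slice hd hw)
  have key : ∀ θ (s : ℝ), h (cpt w (rp θ) + Pi.single k (s : ℂ)) = h (cpt w (rp (θ + pj (Pi.single k s)))) := by
    intro θ s
    conv_rhs => rw [← pj_rp θ]
    have e : pj (rp θ) + pj (Pi.single k s) = pj (rp θ + Pi.single k s) := by funext i; simp [pj]
    rw [e, hp.lift]
    congr 1
    funext i
    by_cases hi : i = k
    · subst hi; simp [cpt]; ring
    · simp [cpt, hi]
  have e1 : GG h w = ∫ s in (0:ℝ)..1, ∫ θ : T3, h (cpt w (rp θ) + Pi.single k (s : ℂ)) := by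
    have : ∀ s : ℝ, ∫ θ : T3, h (cpt w (rp θ) + Pi.single k (s : ℂ)) = GG h w := by
      intro s
      simp only [key]
      exact integral_add_right_eq_self (fun θ => h (cpt w (rp θ))) _
    simp only [this]
    simp
  rw [e1]
  simp only [intervalIntegral.integral_of_le zero_le_one]
  apply integral_integral_swap
  have hcc : Continuous (fun p : ℝ × T3 => h (cpt w (rp p.2) + Pi.single k (p.1 : ℂ))) := by
    simp only [key]
    refine hc.comp (f := fun p : ℝ × T3 => p.2 + pj (Pi.single k p.1)) ?_
    refine continuous_snd.add (pj_quot.continuous.comp ?_)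
    exact (continuous_single k).comp continuous_fst
  have h1 : IntegrableOn (fun p : ℝ × T3 => h (cpt w (rp p.2) + Pi.single k (p.1 : ℂ))) (Set.Icc (0:ℝ) 1 ×ˢ Set.univ) (volume.prod volume) :=
    hcc.continuousOn.integrableOn_compact (isCompact_Icc.prod isCompact_univ)
  have h2 := h1.mono_set (Set.prod_mono Set.Ioc_subset_Icc_self (le_refl (Set.univ : Set T3)))
  rw [IntegrableOn, ← Measure.prod_restrict, Measure.restrict_univ] at h2
  exact h2

lemma GG_shift {C : Set (Fin 3 → ℝ)} {h : (Fin 3 → ℂ) → ℂ} (hd : DifferentiableOn ℂ h (Tube C)) (hp : Per h) {w : Fin 3 → ℂ} (k : Fin 3) (t : ℝ)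
    (hw : ∀ t' ∈ Set.uIcc 0 t, (fun i => (w i).im) + Pi.single k t' ∈ C) :
    GG h (w + Pi.single k (t * I)) = GG h w := by
  have hmem : ∀ s : ℂ, s.im ∈ Set.uIcc 0 t → ∀ x, cpt w x + Pi.single k s ∈ Tube C := by
    intro s hs x
    have := hw _ hs
    simp only [Tube, Set.mem_ofPred_eq]
    convert this using 1
    funext i
    by_cases hi : i = k
    · subst hi; simp [cpt]
    · simp [cpt, hi]
  have hw0 : w ∈ Tube C := by
    have := hmem 0 (by simp) 0
    have e : cpt w 0 + Pi.single k 0 = w := by funext i; simp [cpt]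
    rwa [e] at this
  have hw1 : w + Pi.single k (t * I) ∈ Tube C := by
    have := hmem (t * I) (by simp) 0
    have e : cpt w 0 = w := by funext i; simp [cpt]
    rwa [e] at this
  rw [GG_avg hd hp hw0 k, GG_avg hd hp hw1 k]
  congr 1
  funext θ
  have := shift1 (fun s => h (cpt w (rp θ) + Pi.single k s)) t ?_ ?_
  · rw [this]
    congr 1
    funext s
    congr 1
    funext i
    by_cases hi : i = k
    · subst hi; simp [cpt]; ring
    · simp [cpt, hi]
  · refine hd.comp ?_ (fun s hs => hmem s hs _)
    refine DifferentiableOn.const_add _ ?_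
    rw [differentiableOn_pi]
    intro i
    by_cases hi : i = k
    · subst hi; simp only [Pi.single_eq_same]; fun_prop
    · simp [hi]
  · intro s
    refine Eq.trans ?_ (hp (cpt w (rp θ) + (Pi.single k s : Fin 3 → ℂ)) (Pi.single k 1))
    congr 1
    funext i
    by_cases hi : i = k
    · subst hi; simp; ring
    · simp [hi]
end tor
end

section
section tor2
open MeasureTheory UnitAddTorus

local instance : MeasureSpace UnitAddCircle := ⟨AddCircle.haarAddCircle⟩
local instance : Measure.IsAddHaarMeasure (volume : Measure UnitAddCircle) :=
  inferInstanceAs (Measure.IsAddHaarMeasure AddCircle.haarAddCircle)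
local instance : IsProbabilityMeasure (volume : Measure UnitAddCircle) :=
  inferInstanceAs (IsProbabilityMeasure AddCircle.haarAddCircle)

def CC : Set (Fin 3 → ℝ) := {Y | 0 < Y 1 ∧ Y 2 ^ 2 < Y 0 * Y 1}

def dt (T : Fin 3 → ℤ) (w : Fin 3 → ℂ) : ℂ := T 0 * w 0 + T 1 * w 1 + T 2 * w 2

def hT (f : (Fin 3 → ℂ) → ℂ) (T : Fin 3 → ℤ) (w : Fin 3 → ℂ) : ℂ := f w * ee (-dt T w)

lemma CC_open : IsOpen CC := by
  have h1 : IsOpen {Y : Fin 3 → ℝ | 0 < Y 1} := isOpen_lt continuous_const (continuous_apply 1)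
  have h2 : IsOpen {Y : Fin 3 → ℝ | Y 2 ^ 2 < Y 0 * Y 1} := isOpen_lt (by fun_prop) (by fun_prop)
  exact h1.inter h2

lemma hT_diff {f} (hd : DifferentiableOn ℂ f (Tube CC)) (T) : DifferentiableOn ℂ (hT f T) (Tube CC) := by
  unfold hT dt ee
  refine hd.mul ?_
  fun_prop

lemma hT_per {f} (hp : Per f) (T) : Per (hT f T) := by
  intro w k
  have e : -dt T (w + fun i => (k i : ℂ)) = -dt T w + ((-(T 0 * k 0 + T 1 * k 1 + T 2 * k 2) : ℤ) : ℂ) := by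
    simp only [dt, Pi.add_apply]; push_cast; ring
  rw [hT, hp, e, ee_add, ee_int, mul_one, hT]

def baseW : Fin 3 → ℂ := ![I, I, 0]

def Acoef (f : (Fin 3 → ℂ) → ℂ) (T : Fin 3 → ℤ) : ℂ := GG (hT f T) baseW

lemma GG_const {h} (hd : DifferentiableOn ℂ h (Tube CC)) (hp : Per h) {w : Fin 3 → ℂ} (hw : w ∈ Tube CC) :
    GG h w = GG h baseW := by
  obtain ⟨h1, h2⟩ := hw
  simp only at h1 h2
  have h0 : 0 < (w 0).im := by
    by_contra hc
    nlinarith [sq_nonneg (w 2).im]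
  have e2 : GG h (w + Pi.single 2 ((-(w 2).im : ℝ) * I)) = GG h w := by
    refine GG_shift hd hp 2 _ (fun t ht => ⟨by simpa using h1, ?_⟩)
    simp only [Pi.add_apply, Pi.single_eq_same]
    have h3 : ((w 2).im + t) ^ 2 ≤ (w 2).im ^ 2 := by
      rw [sq_le_sq]
      rcases Set.mem_uIcc.mp ht with h | h
      · rw [abs_le]; constructor <;> [skip; skip] <;> rw [abs_of_nonpos (by linarith)] <;> linarith
      · rw [abs_le]; constructor <;> [skip; skip] <;> rw [abs_of_nonneg (by linarith)] <;> linarith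
    simp
    linarith
  set w1 := w + Pi.single 2 ((-(w 2).im : ℝ) * I) with hw1
  have e0 : GG h (w1 + Pi.single 0 ((1 - (w 0).im : ℝ) * I)) = GG h w1 := by
    refine GG_shift hd hp 0 _ (fun t ht => ⟨by simpa [hw1] using h1, ?_⟩)
    have : 0 < (w 0).im + t := by
      rcases Set.mem_uIcc.mp ht with h | h <;> linarith
    simp [hw1]
    positivity
  set w2 := w1 + Pi.single 0 ((1 - (w 0).im : ℝ) * I) with hw2
  have e1 : GG h (w2 + Pi.single 1 ((1 - (w 1).im : ℝ) * I)) = GG h w2 := by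
    refine GG_shift hd hp 1 _ (fun t ht => ?_)
    have : 0 < (w 1).im + t := by
      rcases Set.mem_uIcc.mp ht with h | h <;> linarith
    constructor
    · simpa [hw1, hw2] using this
    · simpa [hw1, hw2] using this
  rw [← e2, ← e0, ← e1]
  have e : w2 + Pi.single 1 ((1 - (w 1).im : ℝ) * I) = cpt baseW (fun i => (w i).re) := by
    funext i
    apply Complex.ext
    · fin_cases i <;> simp [hw1, hw2, cpt, baseW]
    · fin_cases i <;> simp [hw1, hw2, cpt, baseW]
  rw [e, GG_real hp]

lemma four_pj (T : Fin 3 → ℤ) (x : Fin 3 → ℝ) : mFourier T (pj x) = ee (dt T (fun i => (x i : ℂ))) := by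
  simp only [mFourier, ContinuousMap.coe_mk, pj, fourier_coe_apply, Fin.prod_univ_three, dt, ee]
  rw [← Complex.exp_add, ← Complex.exp_add]
  congr 1
  push_cast
  ring

lemma coef_eq {f} (hd : DifferentiableOn ℂ f (Tube CC)) (hp : Per f) {w : Fin 3 → ℂ} (hw : w ∈ Tube CC) (T) :
    mFourierCoeff (fun θ => f (cpt w (rp θ))) T = Acoef f T * ee (dt T w) := by
  rw [Acoef, ← GG_const (hT_diff hd T) (hT_per hp T) hw, mFourierCoeff, GG, ← integral_mul_const]
  congr 1
  funext θ
  conv_lhs => rw [← pj_rp θ]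
  rw [four_pj, pj_rp, hT, smul_eq_mul, mul_assoc, ← ee_add, mul_comm]
  congr 2
  simp only [dt, cpt, Pi.add_apply, Pi.neg_apply]
  push_cast
  ring

lemma ee_dt_norm (T : Fin 3 → ℤ) (w : Fin 3 → ℂ) : ‖ee (dt T w)‖ = Real.exp (-(2 * Real.pi * (T 0 * (w 0).im + T 1 * (w 1).im + T 2 * (w 2).im))) := by
  rw [ee_norm]; simp [dt]

lemma coef_bound {f} (hd : DifferentiableOn ℂ f (Tube CC)) (hp : Per f) {w : Fin 3 → ℂ} (hw : w ∈ Tube CC) :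
    ∃ M, 0 ≤ M ∧ ∀ T, ‖Acoef f T * ee (dt T w)‖ ≤ M := by
  let g : C(T3, ℂ) := ⟨fun θ => f (cpt w (rp θ)), hp.cont w (cont_slice hd hw)⟩
  refine ⟨‖g‖, norm_nonneg _, fun T => ?_⟩
  rw [← coef_eq hd hp hw, mFourierCoeff]
  have := norm_integral_le_of_norm_le_const (μ := (volume : Measure T3)) (f := fun t => mFourier (-T) t • f (cpt w (rp t))) (C := ‖g‖) (Eventually.of_forall fun θ => ?_)
  · simpa using this
  · rw [norm_smul]
    have h1 : ‖mFourier (-T) θ‖ ≤ 1 := by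
      exact ((mFourier (-T)).norm_coe_le_norm θ).trans_eq mFourier_norm
    have h2 : ‖f (cpt w (rp θ))‖ ≤ ‖g‖ := g.norm_coe_le_norm θ
    nlinarith [norm_nonneg (f (cpt w (rp θ)))]

def e3 : (ℤ × ℤ × ℤ) ≃ (Fin 3 → ℤ) where
  toFun p := ![p.1, p.2.1, p.2.2]
  invFun T := (T 0, T 1, T 2)
  left_inv p := rfl
  right_inv T := by funext i; fin_cases i <;> rfl

lemma e3_0 (p) : e3 p 0 = p.1 := rfl
lemma e3_1 (p) : e3 p 1 = p.2.1 := rfl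
lemma e3_2 (p) : e3 p 2 = p.2.2 := rfl

lemma summ_geo {ρ : ℝ} (h0 : 0 ≤ ρ) (h1 : ρ < 1) :
    Summable fun T : Fin 3 → ℤ => ρ ^ (T 0).natAbs * (ρ ^ (T 1).natAbs * ρ ^ (T 2).natAbs) := by
  have hs : Summable fun n : ℤ => ρ ^ n.natAbs := by
    rw [summable_int_iff_summable_nat_and_neg]
    simpa using summable_geometric_of_lt_one h0 h1
  rw [← e3.summable_iff]
  have hn : (0 : ℤ → ℝ) ≤ fun n : ℤ => ρ ^ n.natAbs := fun n => pow_nonneg h0 _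
  have h2 := hs.mul_of_nonneg hs hn hn
  have hn2 : (0 : ℤ × ℤ → ℝ) ≤ fun q : ℤ × ℤ => ρ ^ q.1.natAbs * ρ ^ q.2.natAbs :=
    fun q => mul_nonneg (pow_nonneg h0 _) (pow_nonneg h0 _)
  exact (hs.mul_of_nonneg h2 hn hn2).congr fun p => by simp only [Function.comp, e3_0, e3_1, e3_2]

lemma coef_summ {f} (hd : DifferentiableOn ℂ f (Tube CC)) (hp : Per f) {w : Fin 3 → ℂ} (hw : w ∈ Tube CC) :
    Summable fun T => Acoef f T * ee (dt T w) := by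
  obtain ⟨ε, hε, hball⟩ := Metric.isOpen_iff.mp CC_open (fun i => (w i).im) hw
  set δ := ε / 2
  have hδ : 0 < δ := by positivity
  let sg : Bool → ℝ := fun b => if b then 1 else -1
  let W : (Fin 3 → Bool) → Fin 3 → ℂ := fun σ i => w i + (δ * sg (σ i) : ℝ) * I
  have hW : ∀ σ, W σ ∈ Tube CC := by
    intro σ
    show (fun i => (W σ i).im) ∈ CC
    apply hball
    rw [Metric.mem_ball]
    refine lt_of_le_of_lt (b := δ) ?_ (half_lt_self hε)
    rw [dist_pi_le_iff hδ.le]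
    intro i
    simp only [W, Real.dist_eq, sg]
    cases σ i <;> simp [abs_of_pos hδ]
  choose M hM0 hM using fun σ => coef_bound hd hp (hW σ)
  refine Summable.of_norm_bounded (g := fun T => (∑ σ, M σ) * (Real.exp (-(2 * Real.pi * δ)) ^ (T 0).natAbs * (Real.exp (-(2 * Real.pi * δ)) ^ (T 1).natAbs * Real.exp (-(2 * Real.pi * δ)) ^ (T 2).natAbs))) ((summ_geo (Real.exp_nonneg _) (by rw [Real.exp_lt_one_iff]; have := Real.pi_pos; simp; positivity)).mul_left _) (fun T => ?_)
  let σ : Fin 3 → Bool := fun i => decide (T i < 0)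
  have key : ∀ i, (T i : ℝ) * (δ * sg (σ i)) = -(δ * (T i).natAbs) := by
    intro i
    rw [Nat.cast_natAbs, Int.cast_abs]
    by_cases h : T i < 0
    · have : (T i : ℝ) < 0 := by exact_mod_cast h
      simp only [sg, σ, h, decide_true, if_true]; rw [abs_of_neg this]; ring
    · have : 0 ≤ (T i : ℝ) := by exact_mod_cast (not_lt.mp h)
      simp [sg, σ, h]; rw [abs_of_nonneg this]; ring
  have h1 : ‖Acoef f T * ee (dt T (W σ))‖ ≤ ∑ σ, M σ :=
    (hM σ T).trans (Finset.single_le_sum (fun σ _ => hM0 σ) (Finset.mem_univ σ))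
  have h2 : ‖ee (dt T w)‖ = ‖ee (dt T (W σ))‖ * (Real.exp (-(2 * Real.pi * δ)) ^ (T 0).natAbs * (Real.exp (-(2 * Real.pi * δ)) ^ (T 1).natAbs * Real.exp (-(2 * Real.pi * δ)) ^ (T 2).natAbs)) := by
    rw [ee_dt_norm, ee_dt_norm]
    simp only [← Real.exp_nat_mul, ← Real.exp_add]
    congr 1
    have hi : ∀ i, (W σ i).im = (w i).im + δ * sg (σ i) := by intro i; simp [W]
    rw [hi, hi, hi]
    linear_combination (2 * Real.pi) * (key 0 + key 1 + key 2)
  rw [norm_mul, h2, ← mul_assoc, ← norm_mul]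
  gcongr

lemma coef_hasSum {f} (hd : DifferentiableOn ℂ f (Tube CC)) (hp : Per f) {w : Fin 3 → ℂ} (hw : w ∈ Tube CC) :
    HasSum (fun T => Acoef f T * ee (dt T w)) (f w) := by
  let g : C(T3, ℂ) := ⟨fun θ => f (cpt w (rp θ)), hp.cont w (cont_slice hd hw)⟩
  have h : mFourierCoeff g = fun T => Acoef f T * ee (dt T w) := funext fun T => coef_eq hd hp hw T
  have := hasSum_mFourier_series_apply_of_summable (f := g) (by rw [h]; exact coef_summ hd hp hw) (pj 0)
  rw [h] at this
  have hg : g (pj 0) = f w := by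
    refine (hp.lift w 0).trans ?_
    congr 1
    funext i; simp [cpt]
  rw [hg] at this
  simpa [four_pj, dt, ee_zero] using this
end tor2

theorem fourier3 {f : (Fin 3 → ℂ) → ℂ} (hd : DifferentiableOn ℂ f (Tube CC)) (hp : Per f) :
    ∃ A : ℤ → ℤ → ℤ → ℂ, ∀ τ₁ z τ₂ : ℂ, 0 < τ₁.im → z.im ^ 2 < τ₂.im * τ₁.im →
      HasSum (fun p : ℤ × ℤ × ℤ => A p.2.1 p.2.2 p.1 * ee (p.2.1 * τ₁ + p.2.2 * z) * ee (p.1 * τ₂)) (f ![τ₂, τ₁, z]) := by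
  refine ⟨fun n r m => Acoef f ![m, n, r], fun τ₁ z τ₂ h1 h2 => ?_⟩
  have := coef_hasSum hd hp (w := ![τ₂, τ₁, z]) ⟨h1, h2⟩
  rw [← e3.hasSum_iff] at this
  convert this using 1
  funext p
  simp only [Function.comp, dt, e3_0, e3_1, e3_2]
  rw [mul_assoc, ← ee_add]
  congr 2
  simp only [Matrix.cons_val_zero, Matrix.cons_val_one, Matrix.cons_val]
  ring

/-- one-variable uniqueness -/
lemma uniq1 {c : ℤ → ℂ} (h : ∀ x : ℝ, HasSum (fun n => c n * ee (n * x)) 0) : c = 0 := by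
  have hs : Summable fun n => ‖c n‖ := by
    have := (h 0).summable.norm
    simpa [ee_zero] using this
  funext k
  have hF := intervalIntegral.hasSum_intervalIntegral_of_summable_norm (a := 0) (b := 1)
    (f := fun n : ℤ => (⟨fun x : ℝ => c n * ee ((n - k : ℤ) * x), by unfold ee; fun_prop⟩ : C(ℝ, ℂ))) ?_
  · have h0 : ∀ x : ℝ, ∑' n : ℤ, c n * ee ((n - k : ℤ) * x) = 0 := by
      intro x
      have := ((h x).mul_right (ee (-k * x))).tsum_eq
      rw [zero_mul] at this
      rw [← this]
      congr 1; funext n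
      rw [mul_assoc, ← ee_add]
      congr 2; push_cast; ring
    have h1 : ∀ n : ℤ, ∫ x in (0:ℝ)..1, c n * ee ((n - k : ℤ) * x) = if n = k then c k else 0 := by
      intro n
      split_ifs with hn
      · subst hn; simp [ee_zero]
      · have hne : (2 * Real.pi * I * ((n - k : ℤ) : ℂ)) ≠ 0 := by
          refine mul_ne_zero Complex.two_pi_I_ne_zero ?_
          exact_mod_cast sub_ne_zero.mpr hn
        rw [intervalIntegral.integral_const_mul]
        have := integral_exp_mul_complex (a := 0) (b := 1) hne
        simp only [ee, ← mul_assoc]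
        rw [this]
        have h2 := ee_int (n - k)
        simp only [ee] at h2
        rw [Complex.ofReal_one, mul_one, h2]
        simp
    simp only [ContinuousMap.coe_mk, h1, h0] at hF
    have h3 := hasSum_ite_eq k (c k)
    have := hF.unique h3
    simpa using this.symm
  · refine hs.of_nonneg_of_le (fun _ => norm_nonneg _) (fun n => ?_)
    rw [ContinuousMap.norm_le _ (norm_nonneg _)]
    intro x
    simp [ee_norm]

lemma uniqP {β : Type*} {d : ℤ → β → ℂ} (h : ∀ x : ℝ, HasSum (fun p : ℤ × β => d p.1 p.2 * ee (p.1 * x)) 0)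
    (m : ℤ) : HasSum (d m) 0 := by
  have hs : Summable fun p : ℤ × β => d p.1 p.2 := by
    simpa [ee_zero] using (h 0).summable
  have hs1 : ∀ m, Summable (d m) := fun m => hs.prod_factor m
  have h1 : (fun m => ∑' q, d m q) = 0 := uniq1 (fun x =>
    (h x).prod_fiberwise (g := fun m : ℤ => (∑' q, d m q) * ee (m * x)) (fun m => (hs1 m).hasSum.mul_right _))
  have h2 : ∑' q, d m q = 0 := congrFun h1 m
  rw [← h2]
  exact (hs1 m).hasSum

lemma uniq3 {c : ℤ → ℤ → ℤ → ℂ} (h : ∀ x y z : ℝ, HasSum (fun p : ℤ × ℤ × ℤ => c p.2.1 p.2.2 p.1 * ee (p.2.1 * x + p.2.2 * y) * ee (p.1 * z)) 0) (n r m) : c n r m = 0 := by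
  have s1 : ∀ x y : ℝ, HasSum (fun q : ℤ × ℤ => c q.1 q.2 m * ee (q.1 * x + q.2 * y)) 0 := fun x y =>
    uniqP (d := fun (m : ℤ) (q : ℤ × ℤ) => c q.1 q.2 m * ee (q.1 * x + q.2 * y)) (fun z => h x y z) m
  have s2 : ∀ y : ℝ, HasSum (fun r : ℤ => c n r m * ee (r * y)) 0 := fun y =>
    uniqP (d := fun (n : ℤ) (r : ℤ) => c n r m * ee (r * y)) (fun x => by
      convert s1 x y using 1
      funext q
      rw [mul_assoc, ← ee_add, add_comm]) n
  exact congrFun (uniq1 s2) r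
end

section
def M2 (a z b : ℂ) : Fin 2 → Fin 2 → ℂ := ![![a, z], ![z, b]]

lemma mem_H2 (a z b : ℂ) : M2 a z b ∈ H2 ↔ 0 < a.im ∧ z.im ^ 2 < b.im * a.im := by
  have hq : ∀ x : Fin 2 → ℝ, star x ⬝ᵥ ((Matrix.of fun i j => (M2 a z b i j).im) *ᵥ x)
      = a.im * x 0 ^ 2 + 2 * z.im * x 0 * x 1 + b.im * x 1 ^ 2 := by
    intro x
    simp [M2, dotProduct, mulVec, Fin.sum_univ_two]; ring
  constructor
  · rintro ⟨-, h⟩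
    have h1 := h.dotProduct_mulVec_pos (x := ![1, 0]) (by simp)
    rw [hq] at h1
    simp at h1
    refine ⟨h1, ?_⟩
    have h2 := h.dotProduct_mulVec_pos (x := ![-z.im, a.im]) (by
      intro h0; have := congrFun h0 1; simp at this; linarith)
    rw [hq] at h2
    simp at h2
    nlinarith
  · rintro ⟨h1, h2⟩
    refine ⟨?_, Matrix.PosDef.of_dotProduct_mulVec_pos ?_ (fun x hx => ?_)⟩
    · ext i j; fin_cases i <;> fin_cases j <;> rfl
    · ext i j; fin_cases i <;> fin_cases j <;> rfl
    · rw [hq]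
      have e : a.im * (a.im * x 0 ^ 2 + 2 * z.im * x 0 * x 1 + b.im * x 1 ^ 2) = (a.im * x 0 + z.im * x 1) ^ 2 + (b.im * a.im - z.im ^ 2) * x 1 ^ 2 := by ring
      have hp : 0 < a.im * (a.im * x 0 ^ 2 + 2 * z.im * x 0 * x 1 + b.im * x 1 ^ 2) := by
        rw [e]
        by_cases hx1 : x 1 = 0
        · have hx0 : x 0 ≠ 0 := by
            intro h0; apply hx; funext i; fin_cases i <;> simp [h0, hx1]
          rw [hx1]; simp; positivity
        · have : 0 < b.im * a.im - z.im ^ 2 := by linarith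
          positivity
      exact pos_of_mul_pos_right hp h1.le

lemma H2_eq {τ} (h : τ ∈ H2) : τ = M2 (τ 0 0) (τ 0 1) (τ 1 1) := by
  have : τ 1 0 = τ 0 1 := by
    have := congrFun (congrFun h.1 0) 1
    simpa using this
  funext i j
  fin_cases i <;> fin_cases j <;> simp [M2, this]

lemma symAct_one (j : ℕ) (v : Fin (j + 1) → ℂ) : symAct j 1 v = v := by
  funext i
  simp only [symAct, symCoeff]
  simp [Polynomial.coeff_X_pow, Fin.val_inj]

def gT (a b c : ℤ) : Matrix (Fin 4) (Fin 4) ℤ := !![1,0,a,b; 0,1,b,c; 0,0,1,0; 0,0,0,1]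
lemma gT_mem (a b c) : gT a b c ∈ Sp4Z := by
  show _ = _
  ext i j
  fin_cases i <;> fin_cases j <;> simp [gT, J4, Matrix.mul_apply, Fin.sum_univ_four]

lemma den_gT (a b c τ) : den (gT a b c) τ = 1 := by
  ext i j
  fin_cases i <;> fin_cases j <;> simp [den, blk, gT, Matrix.mul_apply, Fin.sum_univ_two]

lemma moeb_gT (a b c : ℤ) (x y z : ℂ) : moeb (gT a b c) (M2 x y z) = M2 (x + a) (y + b) (z + c) := by
  funext i j
  simp only [moeb, den_gT, inv_one, mul_one]
  fin_cases i <;> fin_cases j <;> simp [blk, gT, M2, Matrix.mul_apply, Fin.sum_univ_two]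

def gU (a b c d : ℤ) : Matrix (Fin 4) (Fin 4) ℤ := !![d,-c,0,0; -b,a,0,0; 0,0,a,b; 0,0,c,d]
lemma gU_mem {a b c d : ℤ} (h : a * d - b * c = 1) : gU a b c d ∈ Sp4Z := by
  show _ = _
  ext i j
  fin_cases i <;> fin_cases j <;> simp [gU, J4, Matrix.mul_apply, Fin.sum_univ_four] <;> linarith

lemma den_gU (a b c d : ℤ) (τ) : den (gU a b c d) τ = !![(a:ℂ), b; c, d] := by
  ext i j
  fin_cases i <;> fin_cases j <;> simp [den, blk, gU, Matrix.mul_apply, Fin.sum_univ_two]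

lemma moeb_gU {a b c d : ℤ} (h : a * d - b * c = 1) (x y z : ℂ) : moeb (gU a b c d) (M2 x y z) =
    M2 (d ^ 2 * x - 2 * c * d * y + c ^ 2 * z) (-(b * d) * x + (a * d + b * c) * y - a * c * z) (b ^ 2 * x - 2 * a * b * y + a ^ 2 * z) := by
  have hc : (a : ℂ) * d - b * c = 1 := by exact_mod_cast h
  have hi : (!![(a:ℂ), b; c, d])⁻¹ = !![(d:ℂ), -b; -c, a] := by
    rw [Matrix.inv_def, Matrix.det_fin_two_of, hc, Matrix.adjugate_fin_two_of]; simp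
  funext i j
  simp only [moeb, den_gU, hi]
  fin_cases i <;> fin_cases j <;> simp [blk, gU, M2, Matrix.mul_apply, Fin.sum_univ_two] <;> ring

def gS : Matrix (Fin 4) (Fin 4) ℤ := !![0,0,-1,0; 0,1,0,0; 1,0,0,0; 0,0,0,1]
lemma gS_mem : gS ∈ Sp4Z := by
  show _ = _
  decide

lemma den_gS (x y z) : den gS (M2 x y z) = !![x, y; 0, 1] := by
  ext i j
  fin_cases i <;> fin_cases j <;> simp [den, blk, gS, M2, Matrix.mul_apply, Fin.sum_univ_two]

lemma moeb_gS {x : ℂ} (hx : x ≠ 0) (y z : ℂ) : moeb gS (M2 x y z) = M2 (-1 / x) (y / x) (z - y ^ 2 / x) := by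
  have hi : (!![x, y; 0, 1])⁻¹ = !![1 / x, -y / x; 0, 1] := by
    rw [Matrix.inv_def, Matrix.det_fin_two_of, Matrix.adjugate_fin_two_of]
    ext i j; fin_cases i <;> fin_cases j <;> simp <;> field_simp
  funext i j
  simp only [moeb, den_gS, hi]
  fin_cases i <;> fin_cases j <;> simp [blk, gS, M2, Matrix.mul_apply, Fin.sum_univ_two] <;> field_simp <;> ring

section fix
variable {j : ℕ} {F : (Fin 2 → Fin 2 → ℂ) → (Fin (j + 1) → ℂ)} 

lemma tr_T (hF : IsSiegelCuspForm j 1 Sp4Z (fun _ => 1) F) (a b c : ℤ) (x y z : ℂ) : F (M2 (x + a) (y + b) (z + c)) = F (M2 x y z) := by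
  by_cases h : M2 x y z ∈ H2
  · rw [← moeb_gT, hF.2.1 _ (gT_mem a b c) _ h, den_gT, wt]
    simp [symAct_one]
  · rw [hF.2.2.2 _ h, hF.2.2.2]
    rw [mem_H2] at h ⊢
    simpa using h

lemma tr_U (hF : IsSiegelCuspForm j 1 Sp4Z (fun _ => 1) F) {a b c d : ℤ} (h : a * d - b * c = 1) {x y z : ℂ} (hm : M2 x y z ∈ H2) :
    F (M2 (d ^ 2 * x - 2 * c * d * y + c ^ 2 * z) (-(b * d) * x + (a * d + b * c) * y - a * c * z) (b ^ 2 * x - 2 * a * b * y + a ^ 2 * z))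
     = symAct j !![(a:ℂ), b; c, d] (F (M2 x y z)) := by
  have hc : (a : ℂ) * d - b * c = 1 := by exact_mod_cast h
  rw [← moeb_gU h, hF.2.1 _ (gU_mem h) _ hm, den_gU, wt, Matrix.det_fin_two_of, hc]
  simp

lemma last_unip (j : ℕ) (V : Matrix (Fin 2) (Fin 2) ℂ) (h0 : V 1 0 = 0) (h1 : V 1 1 = 1) (w : Fin (j + 1) → ℂ) :
    symAct j V w (Fin.last j) = w (Fin.last j) := by
  rw [sym_top, h0, h1, Finset.sum_eq_single (Fin.last j)]
  · simp
  · intro l _ hl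
    have : j - (l : ℕ) ≠ 0 := by
      have := l.isLt
      have : (l : ℕ) ≠ j := fun h => hl (Fin.ext h)
      omega
    simp [this]
  · simp

lemma tr_S (hF : IsSiegelCuspForm j 1 Sp4Z (fun _ => 1) F) {x y z : ℂ} (hm : M2 x y z ∈ H2) :
    F (M2 (-1 / x) (y / x) (z - y ^ 2 / x)) (Fin.last j) = x * F (M2 x y z) (Fin.last j) := by
  have hx : x ≠ 0 := by
    rintro rfl; rw [mem_H2] at hm; simp at hm
  rw [← moeb_gS hx, hF.2.1 _ gS_mem _ hm, den_gS, wt, Matrix.det_fin_two_of]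
  simp only [one_smul, Pi.smul_apply, smul_eq_mul]
  rw [last_unip _ _ (by simp) (by simp)]
  simp

lemma expand (hF : IsSiegelCuspForm j 1 Sp4Z (fun _ => 1) F) :
    ∃ A : ℤ → ℤ → ℤ → (Fin (j + 1) → ℂ), ∀ x y z : ℂ, M2 x y z ∈ H2 → ∀ i,
      HasSum (fun p : ℤ × ℤ × ℤ => A p.2.1 p.2.2 p.1 i * ee (p.2.1 * x + p.2.2 * y) * ee (p.1 * z)) (F (M2 x y z) i) := by
  have hd : ∀ i, DifferentiableOn ℂ (fun w : Fin 3 → ℂ => F (M2 (w 1) (w 2) (w 0)) i) (Tube CC) := by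
    intro i
    have h1 : DifferentiableOn ℂ (fun w : Fin 3 → ℂ => F (M2 (w 1) (w 2) (w 0))) (Tube CC) := by
      refine hF.1.comp (f := fun w : Fin 3 → ℂ => M2 (w 1) (w 2) (w 0)) ?_ (fun w hw => (mem_H2 _ _ _).mpr hw)
      rw [differentiableOn_pi]; intro a
      rw [differentiableOn_pi]; intro b
      fin_cases a <;> fin_cases b <;> simp [M2] <;> fun_prop
    exact (differentiableOn_pi.mp h1) i
  have hp : ∀ i, Per (fun w : Fin 3 → ℂ => F (M2 (w 1) (w 2) (w 0)) i) := by
    intro i w k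
    exact congrFun (tr_T hF (k 1) (k 2) (k 0) _ _ _) i
  choose A hA using fun i => fourier3 (hd i) (hp i)
  refine ⟨fun n r m i => A i n r m, fun x y z h i => ?_⟩
  rw [mem_H2] at h
  exact hA i x y z h.1 h.2
end fix
end

section
def ph (a b c d : ℤ) (p : ℤ × ℤ × ℤ) : ℤ × ℤ × ℤ :=
  (p.2.1 * c ^ 2 + p.2.2 * c * d + p.1 * d ^ 2, p.2.1 * a ^ 2 + p.2.2 * a * b + p.1 * b ^ 2,
    2 * p.2.1 * a * c + p.2.2 * (a * d + b * c) + 2 * p.1 * b * d)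

lemma ph_inv {a b c d : ℤ} (h : a * d - b * c = 1) (p) : ph d (-b) (-c) a (ph a b c d p) = p := by
  obtain ⟨m, n, r⟩ := p
  simp only [ph, Prod.mk.injEq]
  refine ⟨?_, ?_, ?_⟩
  · linear_combination (m * (a * d - b * c + 1)) * h
  · linear_combination (n * (a * d - b * c + 1)) * h
  · linear_combination (r * (a * d - b * c + 1)) * h

def phE {a b c d : ℤ} (h : a * d - b * c = 1) : (ℤ × ℤ × ℤ) ≃ (ℤ × ℤ × ℤ) where
  toFun := ph a b c d
  invFun := ph d (-b) (-c) a
  left_inv := ph_inv h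
  right_inv p := by
    have := ph_inv (a := d) (b := -b) (c := -c) (d := a) (by linarith) p
    simpa only [neg_neg] using this

lemma hsc {β : Type*} {f g : β → ℂ} {a : ℂ} (h : ∀ p, f p = g p) (hg : HasSum g a) : HasSum f a := by
  rw [funext h]; exact hg

section fin
variable {j : ℕ} {F : (Fin 2 → Fin 2 → ℂ) → (Fin (j + 1) → ℂ)} {A : ℤ → ℤ → ℤ → (Fin (j + 1) → ℂ)}

def Exp3 (F : (Fin 2 → Fin 2 → ℂ) → (Fin (j + 1) → ℂ)) (A : ℤ → ℤ → ℤ → (Fin (j + 1) → ℂ)) : Prop :=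
  ∀ x y z : ℂ, M2 x y z ∈ H2 → ∀ i,
      HasSum (fun p : ℤ × ℤ × ℤ => A p.2.1 p.2.2 p.1 i * ee (p.2.1 * x + p.2.2 * y) * ee (p.1 * z)) (F (M2 x y z) i)

def Eqv (A : ℤ → ℤ → ℤ → (Fin (j + 1) → ℂ)) : Prop := ∀ a b c d : ℤ, a * d - b * c = 1 → ∀ n r m,
      A (n * a ^ 2 + r * a * b + m * b ^ 2) (2 * n * a * c + r * (a * d + b * c) + 2 * m * b * d)
        (n * c ^ 2 + r * c * d + m * d ^ 2) = symAct j !![(a : ℂ), b; c, d] (A n r m)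

lemma eqv_of (hF : IsSiegelCuspForm j 1 Sp4Z (fun _ => 1) F) (hA : Exp3 F A) : Eqv A := by
  intro a b c d h n r m
  have hc : (a : ℂ) * d - b * c = 1 := by exact_mod_cast h
  funext i
  have key := uniq3 (c := fun n r m => (A (n * a ^ 2 + r * a * b + m * b ^ 2) (2 * n * a * c + r * (a * d + b * c) + 2 * m * b * d)
        (n * c ^ 2 + r * c * d + m * d ^ 2) i - symAct j !![(a : ℂ), b; c, d] (A n r m) i) * ee (n * I) * ee (m * I)) ?_ n r m
  · have := (mul_eq_zero.mp ((mul_eq_zero.mp key).resolve_right (ee_ne _))).resolve_right (ee_ne _)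
    exact sub_eq_zero.mp this
  · intro x y z
    have hm : M2 (x + I) y (z + I) ∈ H2 := by rw [mem_H2]; simp
    have hm' : M2 (d ^ 2 * (x + I) - 2 * c * d * y + c ^ 2 * (z + I)) (-(b * d) * (x + I) + (a * d + b * c) * y - a * c * (z + I)) (b ^ 2 * (x + I) - 2 * a * b * y + a ^ 2 * (z + I)) ∈ H2 := by
      have hr : (a : ℝ) * d - b * c = 1 := by exact_mod_cast h
      have e1 : (d ^ 2 * (x + I) - 2 * c * d * y + c ^ 2 * (z + I) : ℂ) = ((d ^ 2 * x - 2 * c * d * y + c ^ 2 * z : ℝ) : ℂ) + (d ^ 2 + c ^ 2 : ℝ) * I := by push_cast; ring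
      have e2 : (-(b * d) * (x + I) + (a * d + b * c) * y - a * c * (z + I) : ℂ) = ((-(b * d) * x + (a * d + b * c) * y - a * c * z : ℝ) : ℂ) + (-(b * d) - a * c : ℝ) * I := by push_cast; ring
      have e3 : (b ^ 2 * (x + I) - 2 * a * b * y + a ^ 2 * (z + I) : ℂ) = ((b ^ 2 * x - 2 * a * b * y + a ^ 2 * z : ℝ) : ℂ) + (b ^ 2 + a ^ 2 : ℝ) * I := by push_cast; ring
      rw [e1, e2, e3, mem_H2]
      have him : ∀ u v : ℝ, ((u : ℂ) + (v : ℂ) * I).im = v := by intro u v; simp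
      rw [him, him, him]
      have hdet : (a * d - b * c : ℝ) ^ 2 = 1 := by rw [hr]; norm_num
      constructor
      · by_contra h0
        have h1 : (d : ℝ) = 0 := by nlinarith [sq_nonneg (d : ℝ), sq_nonneg (c : ℝ)]
        have h2 : (c : ℝ) = 0 := by nlinarith [sq_nonneg (d : ℝ), sq_nonneg (c : ℝ)]
        rw [h1, h2] at hr; simp at hr
      · nlinarith
    have s1 := (phE h).hasSum_iff.mpr (hA _ _ _ hm' i)
    rw [tr_U hF h hm] at s1
    have s2 : HasSum (fun p : ℤ × ℤ × ℤ => symAct j !![(a : ℂ), b; c, d] (A p.2.1 p.2.2 p.1) i * ee (p.2.1 * (x + I) + p.2.2 * y) * ee (p.1 * (z + I))) (symAct j !![(a : ℂ), b; c, d] (F (M2 (x + I) y (z + I))) i) := by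
      have := hasSum_sum (s := Finset.univ) (fun l _ => (hA _ _ _ hm l).mul_left (symCoeff j !![(a : ℂ), b; c, d] l i))
      refine hsc (fun p => ?_) this
      simp only [symAct, Finset.sum_mul]
      refine Finset.sum_congr rfl fun l _ => by ring
    have s3 := s1.sub s2
    rw [sub_self] at s3
    refine hsc (fun p => ?_) s3
    obtain ⟨m, n, r⟩ := p
    simp only [phE, Equiv.coe_fn_mk, Function.comp, ph]
    have h2 : ∀ X Y : ℂ, ee X * ee Y = ee (X + Y) := fun X Y => (ee_add X Y).symm
    simp only [mul_assoc, h2, sub_mul]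
    congr 3
    · push_cast
      linear_combination (-(n * (x + I) + r * y + m * (z + I)) * ((a : ℂ) * d - b * c + 1)) * hc
    · ring

lemma zinv (hE : Eqv A) {a b c d : ℤ} (h : a * d - b * c = 1) {n r m : ℤ}
    (h0 : A (n * a ^ 2 + r * a * b + m * b ^ 2) (2 * n * a * c + r * (a * d + b * c) + 2 * m * b * d)
        (n * c ^ 2 + r * c * d + m * d ^ 2) = 0) : A n r m = 0 := by
  have h1 := hE d (-b) (-c) a (by linarith) (n * a ^ 2 + r * a * b + m * b ^ 2) (2 * n * a * c + r * (a * d + b * c) + 2 * m * b * d) (n * c ^ 2 + r * c * d + m * d ^ 2)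
  rw [h0, symAct_zero] at h1
  have h2 := ph_inv h (m, n, r)
  simp only [ph, Prod.mk.injEq] at h2
  rw [h2.1, h2.2.1, h2.2.2] at h1
  exact h1

lemma neg_move {n r m : ℤ} (h : m < 0 ∨ (m = 0 ∧ r ≠ 0)) : ∃ s : ℤ, s ≠ 0 ∧ ∀ t : ℕ, n + r * (s * t) + m * (s * t) ^ 2 ≤ n - t := by
  have ht2 : ∀ t : ℕ, (t : ℤ) ≤ t ^ 2 := fun t => by exact_mod_cast Nat.le_self_pow (by norm_num) t
  rcases h with h | ⟨rfl, h⟩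
  · by_cases hr : 0 ≤ r
    · refine ⟨-1, by norm_num, fun t => ?_⟩
      have := ht2 t; have : (0:ℤ) ≤ t := Int.natCast_nonneg t
      nlinarith [mul_nonneg hr this, sq_nonneg (t : ℤ)]
    · refine ⟨1, by norm_num, fun t => ?_⟩
      have := ht2 t; have : (0:ℤ) ≤ t := Int.natCast_nonneg t
      nlinarith [mul_nonneg (by linarith : 0 ≤ -r) this, sq_nonneg (t : ℤ)]
  · rcases lt_or_gt_of_ne h with hr | hr
    · refine ⟨1, by norm_num, fun t => ?_⟩
      have : (0:ℤ) ≤ t := Int.natCast_nonneg t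
      nlinarith
    · refine ⟨-1, by norm_num, fun t => ?_⟩
      have : (0:ℤ) ≤ t := Int.natCast_nonneg t
      nlinarith

lemma koe1 (hA : Exp3 F A) (hE : Eqv A) {n r m : ℤ} (h : m < 0 ∨ (m = 0 ∧ r ≠ 0)) : A n r m (Fin.last j) = 0 := by
  obtain ⟨s, -, hs⟩ := neg_move (n := n) h
  have hm : M2 I 0 I ∈ H2 := by rw [mem_H2]; simp
  have hS := (hA _ _ _ hm (Fin.last j)).summable.norm
  set S := ∑' p : ℤ × ℤ × ℤ, ‖A p.2.1 p.2.2 p.1 (Fin.last j) * ee (p.2.1 * I + p.2.2 * 0) * ee (p.1 * I)‖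
  have hb : ∀ t : ℕ, ‖A n r m (Fin.last j)‖ * Real.exp (2 * Real.pi * (t - n - m)) ≤ S := by
    intro t
    have h1 := hS.le_tsum (m, n + r * (s * t) + m * (s * t) ^ 2, r + 2 * m * (s * t)) (by intro q _; exact norm_nonneg (_ : ℂ))
    refine le_trans ?_ h1
    have h2 := congrFun (hE 1 (s * t) 0 1 (by ring) n r m) (Fin.last j)
    rw [last_unip _ _ (by simp) (by simp)] at h2
    have e1 : n * 1 ^ 2 + r * 1 * (s * t) + m * (s * t) ^ 2 = n + r * (s * t) + m * (s * t) ^ 2 := by ring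
    have e2 : 2 * n * 1 * 0 + r * (1 * 1 + s * t * 0) + 2 * m * (s * t) * 1 = r + 2 * m * (s * t) := by ring
    have e3 : n * 0 ^ 2 + r * 0 * 1 + m * 1 ^ 2 = m := by ring
    rw [e1, e2, e3] at h2
    rw [norm_mul, norm_mul, h2, mul_assoc ‖_‖ ‖_‖ ‖_‖]
    refine mul_le_mul_of_nonneg_left ?_ (norm_nonneg (A n r m (Fin.last j)))
    rw [ee_norm, ee_norm, ← Real.exp_add, Real.exp_le_exp]
    have h3 : ((n + r * (s * t) + m * (s * t) ^ 2 : ℤ) : ℝ) ≤ n - t := by exact_mod_cast hs t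
    simp only [mul_zero, add_zero, Complex.mul_im, Complex.intCast_re, Complex.intCast_im, Complex.I_im, Complex.I_re, mul_one]
    nlinarith [Real.pi_pos]
  by_contra h0
  have hpos : 0 < ‖A n r m (Fin.last j)‖ := norm_pos_iff.mpr h0
  obtain ⟨t, ht⟩ := exists_nat_gt (S / ‖A n r m (Fin.last j)‖ + |(n : ℝ)| + |(m : ℝ)|)
  have h1 := hb t
  have h2 : S / ‖A n r m (Fin.last j)‖ < t - n - m := by
    have := le_abs_self (n : ℝ); have := le_abs_self (m : ℝ); linarith
  rw [div_lt_iff₀ hpos] at h2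
  have hS0 : 0 ≤ S := tsum_nonneg fun _ => norm_nonneg _
  have h4 : (0:ℝ) < t - n - m := by
    by_contra hc
    nlinarith
  have h3 : (t - n - m : ℝ) ≤ Real.exp (2 * Real.pi * (t - n - m)) := by
    have := Real.add_one_le_exp (2 * Real.pi * (t - n - m))
    nlinarith [Real.pi_gt_three]
  nlinarith

lemma koe2 (hA : Exp3 F A) (hE : Eqv A) {n r m : ℤ} (h : m < 0 ∨ (m = 0 ∧ r ≠ 0)) : A n r m = 0 := by
  obtain ⟨s, hs0, hs⟩ := neg_move (n := n) h
  have hsc : (s : ℂ) ≠ 0 := by exact_mod_cast hs0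
  refine poly_inf _ (f := fun k : ℕ => (s * (k + n.natAbs + 1 : ℕ) : ℂ)) (fun k k' hk => ?_) (fun k => ?_)
  · have := mul_left_cancel₀ hsc hk
    have : k + n.natAbs + 1 = k' + n.natAbs + 1 := by exact_mod_cast this
    omega
  · set t := k + n.natAbs + 1 with ht
    have h1 := congrFun (hE 0 (-1) 1 (s * t) (by ring) n r m) (Fin.last j)
    rw [koe1 hA hE (Or.inl ?_), sym_top] at h1
    · rw [h1]
      refine Finset.sum_congr rfl fun l _ => ?_
      simp
    · have := hs t
      have e : n * 1 ^ 2 + r * 1 * (s * t) + m * (s * t) ^ 2 = n + r * (s * t) + m * (s * t) ^ 2 := by ring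
      rw [e]
      omega

lemma koe_move (hE : Eqv A) {n r m : ℤ} (hm : 0 < m) (hD : 4 * n * m - r ^ 2 ≤ 0)
    (H : ∀ n' r' m' : ℤ, (m' < 0 ∨ (m' = 0 ∧ r' = 0)) → A n' r' m' = 0) : A n r m = 0 := by
  obtain ⟨g, hg⟩ : ∃ g : ℤ, g = Int.gcd (2 * m) (-r) := ⟨_, rfl⟩
  have hg0 : 0 < g := by rw [hg]; exact_mod_cast Int.gcd_pos_of_ne_zero_left _ (by omega)
  obtain ⟨c, hc⟩ : g ∣ 2 * m := hg ▸ Int.gcd_dvd_left ..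
  obtain ⟨d, hd⟩ : g ∣ -r := hg ▸ Int.gcd_dvd_right ..
  have hbz := Int.gcd_eq_gcd_ab (2 * m) (-r)
  rw [← hg] at hbz
  set u := Int.gcdA (2 * m) (-r)
  set v := Int.gcdB (2 * m) (-r)
  have h1 : v * d - (-u) * c = 1 := by
    have : g * (v * d - (-u) * c) = g * 1 := by
      rw [hc, hd] at hbz; linear_combination -hbz
    exact mul_left_cancel₀ hg0.ne' this
  have hM : g ^ 2 * (n * c ^ 2 + r * c * d + m * d ^ 2) = m * (4 * n * m - r ^ 2) := by
    have : g ^ 2 * (n * c ^ 2 + r * c * d + m * d ^ 2) = n * (g * c) ^ 2 + r * (g * c) * (g * d) + m * (g * d) ^ 2 := by ring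
    rw [this, ← hc, ← hd]; ring
  refine zinv hE h1 (H _ _ _ ?_)
  have hg2 : 0 < g ^ 2 := by positivity
  rcases lt_or_eq_of_le hD with h | h
  · left
    by_contra hcon
    push Not at hcon
    nlinarith [mul_nonneg hg2.le hcon]
  · right
    have h0 : n * c ^ 2 + r * c * d + m * d ^ 2 = 0 := by
      rw [h, mul_zero] at hM
      exact (mul_eq_zero.mp hM).resolve_left hg2.ne'
    refine ⟨h0, ?_⟩
    set R := 2 * n * v * c + r * (v * d + -u * c) + 2 * m * -u * d with hR
    have : R ^ 2 = 0 := by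
      have e : 4 * (n * v ^ 2 + r * v * (-u) + m * (-u) ^ 2) * (n * c ^ 2 + r * c * d + m * d ^ 2) - R ^ 2 = (4 * n * m - r ^ 2) * (v * d - (-u) * c) ^ 2 := by
        rw [hR]; ring
      rw [h0, h] at e
      linarith
    exact pow_eq_zero_iff (by norm_num) |>.mp this
end fin
end

section
section fin5
variable {j : ℕ} {F : (Fin 2 → Fin 2 → ℂ) → (Fin (j + 1) → ℂ)} {A : ℤ → ℤ → ℤ → (Fin (j + 1) → ℂ)}

lemma cusp_lim (hF : IsSiegelCuspForm j 1 Sp4Z (fun _ => 1) F) (τ : ℂ) (hτ : 0 < τ.im) (i) :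
    Tendsto (fun t : ℝ => F (M2 τ 0 (t * I)) i) atTop (𝓝 0) := by
  have h := hF.2.2.1 (gT 0 0 0) (gT_mem 0 0 0) τ hτ
  have e : ∀ t : ℝ, slashS j 1 (gT 0 0 0) F (diagH τ (t * I)) = F (M2 τ 0 (t * I)) := by
    intro t
    have e0 : diagH τ (t * I) = M2 τ 0 (t * I) := by
      funext a b; fin_cases a <;> fin_cases b <;> simp [diagH, M2]
    rw [e0, slashS, den_gT, moeb_gT]
    simp [symAct_one]
  simp only [e] at h
  exact (tendsto_pi_nhds.mp h) i

lemma koe_cusp (hF : IsSiegelCuspForm j 1 Sp4Z (fun _ => 1) F) (hA : Exp3 F A) (hE : Eqv A) (n : ℤ) :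
    A n 0 0 = 0 := by
  funext i
  have hx : ∀ x : ℝ, HasSum (fun n : ℤ => (A n 0 0 i * ee (n * I)) * ee (n * x)) 0 := by
    intro x
    obtain ⟨τ, hτ⟩ : ∃ τ : ℂ, τ = x + I := ⟨_, rfl⟩
    have hti : τ.im = 1 := by rw [hτ]; simp
    have hlim := cusp_lim hF τ (by rw [hti]; norm_num) i
    have hmem : ∀ t : ℝ, 1 ≤ t → M2 τ 0 (t * I) ∈ H2 := by
      intro t ht; rw [mem_H2, hti]; simp; linarith
    obtain ⟨f, hf⟩ : ∃ f : ℝ → ℤ × ℤ × ℤ → ℂ, f = fun (t : ℝ) (p : ℤ × ℤ × ℤ) => A p.2.1 p.2.2 p.1 i * ee (p.2.1 * τ + p.2.2 * 0) * ee (p.1 * (t * I)) := ⟨_, rfl⟩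
    have hfs : ∀ t : ℝ, 1 ≤ t → HasSum (f t) (F (M2 τ 0 (t * I)) i) := by
      intro t ht; rw [hf]; exact hA _ _ _ (hmem t ht) i
    obtain ⟨g, hg⟩ : ∃ g : ℤ × ℤ × ℤ → ℂ, g = fun p => if p.1 = 0 then f 1 p else 0 := ⟨_, rfl⟩
    have hee : ∀ (m : ℤ) (t : ℝ), ‖ee (m * (t * I))‖ = Real.exp (-(2 * Real.pi * (m * t))) := by
      intro m t; rw [ee_norm]; simp
    have hneg : ∀ p : ℤ × ℤ × ℤ, p.1 < 0 → ∀ t, f t p = 0 := by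
      intro p hp t
      simp [hf, koe2 hA hE (n := p.2.1) (r := p.2.2) (Or.inl hp)]
    have hpt : ∀ p, Tendsto (fun t => f t p) atTop (𝓝 (g p)) := by
      intro p
      rcases lt_trichotomy p.1 0 with h | h | h
      · simp only [hneg p h, hg, if_neg h.ne]; exact tendsto_const_nhds
      · have : ∀ t, f t p = f 1 p := by intro t; simp [hf, h]
        simp only [hg, if_pos h]
        exact tendsto_const_nhds.congr fun t => (this t).symm
      · simp only [hg, if_neg h.ne']
        have h1 : Tendsto (fun t : ℝ => ee (p.1 * (t * I))) atTop (𝓝 0) := by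
          rw [tendsto_zero_iff_norm_tendsto_zero]
          simp only [hee]
          refine Real.tendsto_exp_neg_atTop_nhds_zero.comp ?_
          have hp : (0:ℝ) < p.1 := by exact_mod_cast h
          exact (tendsto_id.const_mul_atTop hp).const_mul_atTop (by positivity)
        have := h1.const_mul (A p.2.1 p.2.2 p.1 i * ee (p.2.1 * τ + p.2.2 * 0))
        rw [mul_zero (A p.2.1 p.2.2 p.1 i * ee (p.2.1 * τ + p.2.2 * 0))] at this
        rw [hf]; exact this
    have hbd : ∀ t : ℝ, 1 ≤ t → ∀ p, ‖f t p‖ ≤ ‖f 1 p‖ := by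
      intro t ht p
      rcases lt_or_ge p.1 0 with h | h
      · rw [hneg p h, hneg p h]
      · have hp : (0:ℝ) ≤ p.1 := by exact_mod_cast h
        simp only [hf]
        rw [norm_mul _ (ee (p.1 * ((t : ℝ) * I))), norm_mul _ (ee (p.1 * ((1 : ℝ) * I))), hee, hee]
        refine mul_le_mul_of_nonneg_left ?_ (norm_nonneg (_ : ℂ))
        rw [Real.exp_le_exp]
        have : (p.1 : ℝ) * 1 ≤ p.1 * t := mul_le_mul_of_nonneg_left ht hp
        nlinarith [Real.pi_pos]
    have hs1 : Summable (fun p => ‖f 1 p‖) := (hfs 1 le_rfl).summable.norm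
    have hd := tendsto_tsum_of_dominated_convergence (𝓕 := atTop) (f := f) (g := g) hs1 hpt
      (by filter_upwards [eventually_ge_atTop (1:ℝ)] with t ht p using hbd t ht p)
    have hd2 : Tendsto (fun t : ℝ => ∑' p, f t p) atTop (𝓝 0) := by
      refine hlim.congr' ?_
      filter_upwards [eventually_ge_atTop (1:ℝ)] with t ht using (hfs t ht).tsum_eq.symm
    have hg0 : ∑' p, g p = 0 := tendsto_nhds_unique hd hd2
    have hgs : Summable g := by
      refine Summable.of_norm_bounded hs1 fun p => ?_
      rw [hg]; dsimp only; split_ifs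
      · exact le_rfl
      · simp
    have hgh : HasSum g 0 := hg0 ▸ hgs.hasSum
    have hinj : Function.Injective (fun n : ℤ => ((0, n, 0) : ℤ × ℤ × ℤ)) := by
      intro a b h; simpa using h
    have h3 := (hinj.hasSum_iff (f := g) (a := 0) ?_).mpr hgh
    · refine hsc (fun n => ?_) h3
      simp only [hg, hf, Function.comp, hτ]
      simp only [if_true, Int.cast_zero, zero_mul, ee_zero, mul_one, mul_zero, add_zero]
      rw [mul_add, add_comm, ee_add, mul_assoc]
    · rintro ⟨m, n, r⟩ hp
      rw [hg]; dsimp only; split_ifs with h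
      · have hr : r ≠ 0 := by
          rintro rfl; exact hp ⟨n, by simp [h]⟩
        simp [hf, koe2 hA hE (n := n) (r := r) (Or.inr ⟨h, hr⟩)]
      · rfl
  have := congrFun (uniq1 hx) n
  exact (mul_eq_zero.mp this).resolve_right (ee_ne _)

lemma hH3 (hF : IsSiegelCuspForm j 1 Sp4Z (fun _ => 1) F) (hA : Exp3 F A) (hE : Eqv A) (n r m : ℤ) (h0 : A n r m ≠ 0) :
    0 < n ∧ 0 < m ∧ r ^ 2 < 4 * n * m := by
  have H : ∀ n' r' m' : ℤ, (m' < 0 ∨ (m' = 0 ∧ r' = 0)) → A n' r' m' = 0 := by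
    rintro n' r' m' (h | ⟨rfl, rfl⟩)
    · exact koe2 hA hE (Or.inl h)
    · exact koe_cusp hF hA hE n'
  have hm : 0 < m := by
    by_contra h
    rcases lt_or_eq_of_le (not_lt.mp h) with h | h
    · exact h0 (H _ _ _ (Or.inl h))
    · by_cases hr : r = 0
      · exact h0 (H _ _ _ (Or.inr ⟨h, hr⟩))
      · exact h0 (koe2 hA hE (Or.inr ⟨h, hr⟩))
  have hD : r ^ 2 < 4 * n * m := by
    by_contra h
    exact h0 (koe_move hE hm (by linarith) H)
  refine ⟨?_, hm, hD⟩
  by_contra h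
  nlinarith [sq_nonneg r]

lemma hsumm (hA : Exp3 F A) (m : ℤ) (τ z : ℂ) (hτ : 0 < τ.im) :
    Summable (tm (fun n r => A n r m (Fin.last j)) τ z) := by
  obtain ⟨y, hy⟩ := exists_gt (z.im ^ 2 / τ.im)
  have hm : M2 τ z (y * I) ∈ H2 := by
    rw [mem_H2]; refine ⟨hτ, ?_⟩
    rw [div_lt_iff₀ hτ] at hy; simpa using hy
  have h1 := ((hA _ _ _ hm (Fin.last j)).summable.prod_factor m).mul_right (ee (m * (y * I)))⁻¹
  refine h1.congr fun q => ?_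
  simp only [tm]
  rw [mul_inv_cancel_right₀ (ee_ne _)]

lemma hH1 (hF : IsSiegelCuspForm j 1 Sp4Z (fun _ => 1) F) (hA : Exp3 F A) (hE : Eqv A) (m : ℤ) (hm0 : 0 < m) :
    IsX m (fun n r => A n r m (Fin.last j)) where
  supp n r h := (hH3 hF hA hE n r m (fun h' => h (by simp [h']))).2.2
  summ τ z hτ := hsumm hA m τ z hτ
  shift n r := by
    have h2 := congrFun (hE 1 1 0 1 (by ring) n r m) (Fin.last j)
    rw [last_unip _ _ (by simp) (by simp)] at h2
    rw [← h2]
    ring_nf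
  inv τ z hτ := by
    have hτ0 : τ ≠ 0 := by rintro rfl; simp at hτ
    have hτ' : 0 < (-1 / τ).im := by
      rw [neg_div, one_div, Complex.neg_im, Complex.inv_im, neg_div, neg_neg]
      exact div_pos hτ (Complex.normSq_pos.mpr hτ0)
    obtain ⟨y, hy⟩ := exists_gt (max (z.im ^ 2 / τ.im) ((z / τ).im ^ 2 / (-1 / τ).im + (z ^ 2 / τ).im))
    have hy1 := lt_of_le_of_lt (le_max_left _ _) hy
    have hy2 := lt_of_le_of_lt (le_max_right _ _) hy
    rw [div_lt_iff₀ hτ] at hy1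
    rw [← lt_sub_iff_add_lt, div_lt_iff₀ hτ'] at hy2
    have hm1 : ∀ x : ℝ, M2 τ z (x + y * I) ∈ H2 := by
      intro x; rw [mem_H2]; refine ⟨hτ, ?_⟩; simpa using hy1
    have hm2 : ∀ x : ℝ, M2 (-1 / τ) (z / τ) (x + y * I - z ^ 2 / τ) ∈ H2 := by
      intro x; rw [mem_H2]; refine ⟨hτ', ?_⟩
      have e : ((x : ℂ) + y * I - z ^ 2 / τ).im = y - (z ^ 2 / τ).im := by simp
      rw [e]; exact hy2
    obtain ⟨d, hd⟩ : ∃ d : ℤ → ℤ × ℤ → ℂ, d = fun m q =>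
      A q.1 q.2 m (Fin.last j) * ee (q.1 * (-1 / τ) + q.2 * (z / τ)) * ee (m * (y * I - z ^ 2 / τ))
        - τ * (A q.1 q.2 m (Fin.last j) * ee (q.1 * τ + q.2 * z) * ee (m * (y * I))) := ⟨_, rfl⟩
    have hsum : ∀ x : ℝ, HasSum (fun p : ℤ × (ℤ × ℤ) => d p.1 p.2 * ee (p.1 * x)) 0 := by
      intro x
      have s1 := hA _ _ _ (hm2 x) (Fin.last j)
      rw [tr_S hF (hm1 x)] at s1
      have s2 := (hA _ _ _ (hm1 x) (Fin.last j)).mul_left τ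
      have s3 := s1.sub s2
      rw [sub_self] at s3
      refine hsc (fun p => ?_) s3
      have e1 : (p.1 * (x + y * I - z ^ 2 / τ) : ℂ) = p.1 * (y * I - z ^ 2 / τ) + p.1 * x := by ring
      have e2 : (p.1 * (x + y * I) : ℂ) = p.1 * (y * I) + p.1 * x := by ring
      rw [hd]; dsimp only
      rw [e1, e2, ee_add _ (p.1 * (x : ℂ)), ee_add _ (p.1 * (x : ℂ))]
      ring
    have h1 := uniqP hsum m
    have t1 := (hsumm hA m (-1 / τ) (z / τ) hτ').hasSum.mul_right (ee (m * (y * I - z ^ 2 / τ)))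
    have t2 := ((hsumm hA m τ z hτ).hasSum.mul_right (ee (m * (y * I)))).mul_left τ
    have h2 := h1.unique (hsc (fun q => ?_) (t1.sub t2))
    · change _ = phi _ (-1 / τ) (z / τ) * _ - τ * (phi _ τ z * _) at h2
      have e3 : ee (m * (y * I)) = ee (m * z ^ 2 / τ) * ee (m * (y * I - z ^ 2 / τ)) := by
        rw [← ee_add]; congr 1; ring
      rw [e3] at h2
      refine mul_right_cancel₀ (ee_ne (m * (y * I - z ^ 2 / τ))) ?_
      linear_combination -h2
    · rw [hd]; simp only [tm]

theorem all_zero (hF : IsSiegelCuspForm j 1 Sp4Z (fun _ => 1) F) : F = 0 := by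
  obtain ⟨A, hA⟩ := expand hF
  have hA' : Exp3 F A := hA
  have hE := eqv_of hF hA'
  have h0 := endgame A (hH1 hF hA' hE) hE (hH3 hF hA' hE)
  funext τ
  by_cases hτ : τ ∈ H2
  · funext i
    have e := H2_eq hτ
    rw [e] at hτ ⊢
    have h1 := hA' _ _ _ hτ i
    simp only [h0, Pi.zero_apply, zero_mul] at h1
    exact h1.unique hasSum_zero
  · exact hF.2.2.2 τ hτ

end fin5
end

/-- For every integer `j ≥ 0`, the space `S_{j,1}(Γ₂)` of Siegel cusp forms of degree 2 and
weight `(j,1)` on `Γ₂ = Sp(4,ℤ)` is zero. -/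
theorem vanishing_Sj1_level_one (j : ℕ) :
    SiegelCusp j 1 Sp4Z (fun _ => 1) = ⊥ := by
  rw [Submodule.eq_bot_iff]
  intro F hF
  exact all_zero hF
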